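/- arXiv:1902.07201 — 2 statements merged into one kernel-verified Lean document; each statement's English description precedes it below -/
import Mathlib

section
/- For every pair of natural numbers k and r there exists a natural number f = f(k, r) with the following property: for all n and d ≥ 1, if P_1, …, P_d, Q_1, …, Q_k ∈ ℂ[x_0, …, x_n] are homogeneous polynomials, each of degree at most r, and the product P_1 · P_2 ⋯ P_d lies in the ideal ⟨Q_1, …, Q_k⟩, then there exists a non-empty subset {i_1, …, i_m} ⊆ {1, …, d} with m ≤ f(k, r) such that the product P_{i_1} ⋯ P_{i_m} lies in ⟨Q_1, …, Q_k⟩. The bound f(k, r) depends only on k and r, not on n or d. -/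
/-- `P` acts on each subquotient of the chain as zero or injectively. -/
def GoodFor {R : Type*} [CommRing R] (J : ℕ → Ideal R) (c : ℕ → R) (l : ℕ) (P : R) : Prop :=
  ∀ i < l, P * c i ∈ J i ∨ ∀ x, P * (c i * x) ∈ J i → c i * x ∈ J i

/-- chain of ideals with cyclic steps ending at the unit ideal. -/
def IsChainL {R : Type*} [CommRing R] (J : ℕ → Ideal R) (c : ℕ → R) (l : ℕ) : Prop :=
  (∀ i < l, J i ≤ J (i+1) ∧ J (i + 1) ≤ J i ⊔ Ideal.span {c i}) ∧ J l = ⊤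

lemma same_type_cancel {R : Type*} [CommRing R] (l : ℕ) :
    ∀ (J : ℕ → Ideal R) (c : ℕ → R), IsChainL J c l → ∀ (P : R) (L : Multiset R),
    L.card = l → GoodFor J c l P → (∀ Q ∈ L, GoodFor J c l Q) →
    (∀ Q ∈ L, ∀ i < l, (Q * c i ∈ J i ↔ P * c i ∈ J i)) →
    ∀ x, P * (L.prod * x) ∈ J 0 → L.prod * x ∈ J 0 := by
  induction l with
  | zero =>
    intro J c h P L hL _ _ _ x _
    rw [h.2]; trivial
  | succ l ih =>
    intro J c h P L hL hP hQ ht x hx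
    obtain ⟨R0, Rs, rfl⟩ : ∃ a s, L = a ::ₘ s := by
      have : L ≠ 0 := by rintro rfl; simp at hL
      obtain ⟨a, ha⟩ := Multiset.exists_mem_of_ne_zero this
      exact ⟨a, Multiset.exists_cons_of_mem ha⟩
    have hc : Multiset.card Rs = l := by simpa using hL
    have ch : IsChainL (fun i => J (i+1)) (fun i => c (i+1)) l :=
      ⟨fun i hi => h.1 (i+1) (by omega), h.2⟩
    have sh : ∀ {Q}, GoodFor J c (l+1) Q →
        GoodFor (fun i => J (i+1)) (fun i => c (i+1)) l Q :=
      fun hq i hi => hq (i+1) (by omega)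
    have h01 := (h.1 0 (by omega)).1
    have h10 := (h.1 0 (by omega)).2
    have key : ∀ P', P' ∈ ({P, R0} : Set R) → ∀ y, P' * (Rs.prod * y) ∈ J 1 →
        Rs.prod * y ∈ J 1 := by
      intro P' hP' y hy
      refine ih _ _ ch P' Rs hc ?_ (fun Q hq => sh (hQ Q (Multiset.mem_cons_of_mem hq))) ?_ y hy
      · rcases hP' with rfl | rfl
        · exact sh hP
        · exact sh (hQ _ (Multiset.mem_cons_self _ _))
      · intro Q hq i hi
        have := ht Q (Multiset.mem_cons_of_mem hq) (i+1) (by omega)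
        rcases hP' with rfl | rfl
        · exact this
        · exact this.trans (ht _ (Multiset.mem_cons_self _ _) (i+1) (by omega)).symm
    rw [Multiset.prod_cons] at hx ⊢
    by_cases hz : P * c 0 ∈ J 0
    · have hz' : R0 * c 0 ∈ J 0 := (ht R0 (Multiset.mem_cons_self _ _) 0 (by omega)).2 hz
      have a1 := key R0 (by simp) (P * x) (h01 (by convert hx using 1; ring))
      have a2 := key P (by simp) x (by convert a1 using 1; ring)
      obtain ⟨a, ha, b, hb, hab⟩ := Submodule.mem_sup.1 (h10 a2)
      obtain ⟨u, rfl⟩ := Ideal.mem_span_singleton'.1 hb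
      rw [mul_assoc, ← hab, mul_add]
      refine add_mem (Ideal.mul_mem_left _ _ ha) ?_
      convert Ideal.mul_mem_left _ u hz' using 1; ring
    · have hinj := (hP 0 (by omega)).resolve_left hz
      have a1 := key P (by simp) (R0 * x) (h01 (by convert hx using 1; ring))
      obtain ⟨a, ha, b, hb, hab⟩ := Submodule.mem_sup.1 (h10 a1)
      obtain ⟨u, rfl⟩ := Ideal.mem_span_singleton'.1 hb
      have e : R0 * Rs.prod * x = a + c 0 * u := by
        rw [mul_comm (c 0), hab]; ring
      rw [e] at hx ⊢
      refine add_mem ha (hinj u ?_)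
      rw [mul_add] at hx
      exact (Ideal.add_mem_iff_right _ (Ideal.mul_mem_left _ _ ha)).1 hx

lemma exists_small_subset {R ι : Type*} [CommRing R] [Fintype ι] [Nonempty ι] (l : ℕ)
    (J : ℕ → Ideal R) (c : ℕ → R) (h : IsChainL J c l) (P : ι → R)
    (hP : ∀ i, GoodFor J c l (P i)) (hprod : ∏ i, P i ∈ J 0) :
    ∃ s : Finset ι, s.Nonempty ∧ s.card ≤ 2 ^ l * l + 1 ∧ ∏ i ∈ s, P i ∈ J 0 := by
  classical
  let t : ι → Finset (Fin l) := fun j => Finset.univ.filter (fun i => P j * c i ∈ J i)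
  have hex : ∀ τ : Finset (Fin l), ∃ s ⊆ Finset.univ.filter (fun j => t j = τ),
      s.card = min l (Finset.univ.filter (fun j => t j = τ)).card := fun τ =>
    Finset.exists_subset_card_eq (min_le_right _ _)
  choose T hT hTc using hex
  let S := Finset.univ.biUnion T
  have hS : S.card ≤ 2 ^ l * l := by
    refine Finset.card_biUnion_le.trans ?_
    calc _ ≤ ∑ _τ : Finset (Fin l), l := Finset.sum_le_sum fun τ _ => by rw [hTc]; omega
      _ = _ := by simp
  have main : ∀ W : Finset ι, Disjoint S W → ∏ i ∈ S ∪ W, P i ∈ J 0 → ∏ i ∈ S, P i ∈ J 0 := by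
    intro W
    induction W using Finset.induction_on with
    | empty => simp
    | insert j W hj ih =>
      intro hd hm
      rw [Finset.disjoint_insert_right] at hd
      refine ih hd.2 ?_
      have hTS : T (t j) ⊆ S := Finset.subset_biUnion_of_mem T (Finset.mem_univ _)
      have hcard : (T (t j)).card = l := by
        by_contra hne
        have : T (t j) = Finset.univ.filter (fun i => t i = t j) := by
          apply Finset.eq_of_subset_of_card_le (hT _)
          have := hTc (t j); omega
        exact hd.1 (hTS (by rw [this]; simp))
      have hsub : T (t j) ⊆ S ∪ W := hTS.trans Finset.subset_union_left
      have e1 : ∏ i ∈ S ∪ W, P i = ((T (t j)).val.map P).prod * ∏ i ∈ (S ∪ W) \ T (t j), P i := by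
        rw [← Finset.prod_sdiff hsub, mul_comm]; rfl
      have hjn : j ∉ S ∪ W := by simp [hd.1, hj]
      rw [Finset.union_insert, Finset.prod_insert hjn] at hm
      rw [e1] at hm ⊢
      refine same_type_cancel l J c h (P j) _ (by simpa using hcard) (hP j) ?_ ?_ _ hm
      · intro Q hQ
        obtain ⟨i, _, rfl⟩ := Multiset.mem_map.1 hQ
        exact hP i
      · intro Q hQ i hi
        obtain ⟨j', hj', rfl⟩ := Multiset.mem_map.1 hQ
        have : t j' = t j := by simpa using hT _ hj'
        have := congrArg (fun s => (⟨i, hi⟩ : Fin l) ∈ s) this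
        simpa [t] using this
  have hSJ : ∏ i ∈ S, P i ∈ J 0 := by
    refine main (Finset.univ \ S) Finset.disjoint_sdiff ?_
    rwa [Finset.union_sdiff_of_subset (Finset.subset_univ S)]
  by_cases hne : S.Nonempty
  · exact ⟨S, hne, by omega, hSJ⟩
  · rw [Finset.not_nonempty_iff_eq_empty] at hne
    rw [hne] at hSJ
    obtain ⟨i⟩ := ‹Nonempty ι›
    refine ⟨{i}, by simp, by simp, ?_⟩
    simpa using Ideal.mul_mem_left _ (P i) hSJ

open MvPolynomial in
/-- A "graded" algebra with enough derivations of degree `-1`. -/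
structure EnoughDer {K S : Type*} [Field K] [CommRing S] [Algebra K S]
    (H : ℕ → Submodule K S) (DD : Set (Derivation K S S)) : Prop where
  one_mem : (1 : S) ∈ H 0
  mul_mem : ∀ {i j a b}, a ∈ H i → b ∈ H j → a * b ∈ H (i + j)
  zero_mem : ∀ a ∈ H 0, ∃ k : K, a = algebraMap K S k
  proj : ∃ p : ℕ → S →ₗ[K] S, (∀ e, ∀ f ∈ H e, p e f = f) ∧
    ∀ e e', e ≠ e' → ∀ f ∈ H e', p e f = 0
  der : ∀ D ∈ DD, ∀ e, ∀ f ∈ H (e+1), D f ∈ H e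
  enough : ∀ e, ∀ f ∈ H (e+1), (∀ D ∈ DD, D f = 0) → f = 0

section ESS
open MvPolynomial
variable {K S : Type*} [Field K] [CommRing S] [Algebra K S]
    {H : ℕ → Submodule K S} {DD : Set (Derivation K S S)}

lemma EnoughDer.pow_mem (h : EnoughDer H DD) {i a} (ha : a ∈ H i) (n : ℕ) : a ^ n ∈ H (n * i) := by
  induction n with
  | zero => simpa using h.one_mem
  | succ n ih =>
    rw [pow_succ, Nat.succ_mul]; exact h.mul_mem ih ha

lemma EnoughDer.prod_mem (h : EnoughDer H DD) {ι : Type*} (s : Finset ι) (w : ι → ℕ) (y : ι → S)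
    (hy : ∀ i ∈ s, y i ∈ H (w i)) : ∏ i ∈ s, y i ∈ H (∑ i ∈ s, w i) := by
  classical
  induction s using Finset.induction_on with
  | empty => simpa using h.one_mem
  | insert a s ha ih =>
    rw [Finset.prod_insert ha, Finset.sum_insert ha]
    exact h.mul_mem (hy _ (by simp)) (ih fun i hi => hy i (by simp [hi]))

lemma EnoughDer.aeval_monomial_mem (h : EnoughDer H DD) {E : Type*} {w : E → ℕ} {y : E → S}
    (hy : ∀ i, y i ∈ H (w i)) (d : E →₀ ℕ) (c : K) :
    aeval y (monomial d c) ∈ H (Finsupp.weight w d) := by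
  rw [aeval_monomial, ← Algebra.smul_def, Finsupp.weight_apply]
  refine Submodule.smul_mem _ _ ?_
  exact h.prod_mem _ (fun i => d i • w i) _ (fun i _ => by
    simpa using h.pow_mem (hy i) (d i))

lemma EnoughDer.aeval_mem (h : EnoughDer H DD) {E : Type*} {w : E → ℕ} {y : E → S}
    (hy : ∀ i, y i ∈ H (w i)) {F : MvPolynomial E K} {n : ℕ} (hF : IsWeightedHomogeneous w F n) :
    aeval y F ∈ H n := by
  rw [F.as_sum, map_sum]
  refine Submodule.sum_mem _ fun d hd => ?_
  have := hF (mem_support_iff.1 hd)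
  rw [← this]
  exact h.aeval_monomial_mem hy d _

lemma der_aeval {E : Type*} (D : Derivation K S S) (y : E → S) (G : E → MvPolynomial E K)
    (hG : ∀ i, aeval y (G i) = D (y i)) (F : MvPolynomial E K) :
    D (aeval y F) = aeval y (mkDerivation K G F) := by
  induction F using MvPolynomial.induction_on with
  | C a => simp
  | add p q hp hq => simp [hp, hq]
  | mul_X p i hp => simp [hp, hG, Derivation.leibniz]

lemma mkDer_wh {E : Type*} {w : E → ℕ} (hw : ∀ i, 0 < w i) (G : E → MvPolynomial E K)
    (hG : ∀ i, IsWeightedHomogeneous w (G i) (w i - 1)) {F : MvPolynomial E K} {n : ℕ}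
    (hF : IsWeightedHomogeneous w F (n+1)) : IsWeightedHomogeneous w (mkDerivation K G F) n := by
  classical
  rw [F.as_sum, map_sum]
  refine IsWeightedHomogeneous.sum _ _ _ fun d hd => ?_
  have hd' := hF (mem_support_iff.1 hd)
  rw [mkDerivation_monomial, smul_eq_C_mul]
  refine IsWeightedHomogeneous.C_mul ?_ _
  refine IsWeightedHomogeneous.sum _ _ _ fun i hi => ?_
  simp only [smul_eq_mul]
  have hi' : d i ≠ 0 := Finsupp.mem_support_iff.1 hi
  have e : Finsupp.weight w (d - Finsupp.single i 1) + w i = n + 1 := by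
    rw [← hd']
    conv_rhs => rw [← tsub_add_cancel_of_le (show Finsupp.single i 1 ≤ d from by
      rw [Finsupp.single_le_iff]; omega)]
    rw [map_add, Finsupp.weight_single]; simp
  have := (isWeightedHomogeneous_monomial w (d - Finsupp.single i 1) ((d i : ℕ) : K)
    (m := Finsupp.weight w (d - Finsupp.single i 1)) rfl).mul (hG i)
  convert this using 1
  have := hw i
  omega

lemma wh_vars_le {E : Type*} {w : E → ℕ} {F : MvPolynomial E K} {n : ℕ}
    (hF : IsWeightedHomogeneous w F n) {j : E} (hj : j ∈ F.vars) : w j ≤ n := by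
  obtain ⟨d, hd, hjd⟩ := (mem_vars_iff_mem_support _).1 hj
  rw [← hF (mem_support_iff.1 hd)]
  exact Finsupp.le_weight_of_ne_zero' w (Finsupp.mem_support_iff.1 hjd)

lemma pderiv_ne_zero_of_mem_vars {E : Type*} [CharZero K] {F : MvPolynomial E K} {j : E}
    (hj : j ∈ F.vars) : pderiv j F ≠ 0 := by
  classical
  obtain ⟨d, hd, hjd⟩ := (mem_vars_iff_mem_support _).1 hj
  intro h0
  have h1 := coeff_pderiv (i := j) F (d - Finsupp.single j 1)
  rw [h0, tsub_add_cancel_of_le (show Finsupp.single j 1 ≤ d from by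
      rw [Finsupp.single_le_iff]; have := Finsupp.mem_support_iff.1 hjd; omega)] at h1
  simp only [coeff_zero] at h1
  have h2 := mem_support_iff.1 hd
  exact mul_ne_zero h2 (Nat.cast_add_one_ne_zero _) h1.symm

lemma wh_zero {E : Type*} {w : E → ℕ} (hw : ∀ i, 0 < w i) {F : MvPolynomial E K}
    (hF : IsWeightedHomogeneous w F 0) : F = C (coeff 0 F) := by
  refine vars_eq_empty_iff_eq_C.1 ?_
  rw [Finset.eq_empty_iff_forall_notMem]
  intro j hj
  have := wh_vars_le hF hj
  have := hw j
  omega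

theorem EnoughDer.rel_eq_zero [Nontrivial S] [CharZero K] (h : EnoughDer H DD)
    {E : Type*} {w : E → ℕ} (hw : ∀ i, 0 < w i) {y : E → S} (hy : ∀ i, y i ∈ H (w i))
    (gen : ∀ e, ∀ f ∈ H e, ∃ F : MvPolynomial E K, IsWeightedHomogeneous w F e ∧ aeval y F = f)
    (nolin : ∀ (F : MvPolynomial E K) n, IsWeightedHomogeneous w F n → aeval y F = 0 →
      ∀ i, w i = n → coeff (Finsupp.single i 1) F = 0) (n : ℕ) :
    ∀ F : MvPolynomial E K, IsWeightedHomogeneous w F n → aeval y F = 0 → F = 0 := by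
  classical
  induction n using Nat.strong_induction_on with
  | _ n ih =>
  intro F hF h0
  obtain rfl | hn := Nat.eq_zero_or_pos n
  · rw [wh_zero hw hF] at h0 ⊢
    rw [aeval_C] at h0
    rw [(map_eq_zero_iff _ (FaithfulSMul.algebraMap_injective K S)).1 h0, map_zero]
  obtain ⟨n, rfl⟩ : ∃ m, n = m + 1 := ⟨n - 1, by omega⟩
  by_contra hF0
  have hvne : F.vars.Nonempty := by
    rw [Finset.nonempty_iff_ne_empty]
    intro hv
    rw [vars_eq_empty_iff_eq_C] at hv
    rw [hF.coeff_eq_zero 0 (by simp), map_zero] at hv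
    exact hF0 hv
  obtain ⟨i, hi, hmax⟩ := F.vars.exists_max_image w hvne
  have hin := wh_vars_le hF hi
  have hwi := hw i
  have hp0 := pderiv_ne_zero_of_mem_vars hi
  have hpw : IsWeightedHomogeneous w (pderiv i F) (n + 1 - w i) :=
    IsWeightedHomogeneous.pderiv hF (by omega)
  have hD : ∀ D ∈ DD, D (aeval y (pderiv i F)) = 0 := by
    intro D hDD
    have : ∀ j, ∃ G : MvPolynomial E K, IsWeightedHomogeneous w G (w j - 1) ∧ aeval y G = D (y j) :=
      fun j => gen _ _ (h.der D hDD _ _ (by rw [Nat.sub_add_cancel (hw j)]; exact hy j))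
    choose G hG1 hG2 using this
    have z1 : mkDerivation K G F = 0 := by
      refine ih n (by omega) _ (mkDer_wh hw G hG1 hF) ?_
      rw [← der_aeval D y G hG2, h0, map_zero]
    have z2 : ⁅pderiv (R := K) i, mkDerivation K G⁆ F = 0 := by
      refine derivation_eq_zero_of_forall_mem_vars fun j hj => ?_
      rw [Derivation.commutator_apply, mkDerivation_X, pderiv_X]
      have : pderiv i (G j) = 0 := by
        refine pderiv_eq_zero_of_notMem_vars fun hij => ?_
        have := wh_vars_le (hG1 j) hij
        have := hmax j hj
        have := hw j
        omega
      rw [this, Pi.single_apply]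
      split_ifs <;> simp
    rw [Derivation.commutator_apply, z1, map_zero, zero_sub, neg_eq_zero] at z2
    rw [der_aeval D y G hG2, z2, map_zero]
  obtain hlt | heq := lt_or_eq_of_le hin
  · refine hp0 (ih _ (by omega) _ hpw ?_)
    refine h.enough (n - w i) _ ?_ hD
    have := h.aeval_mem hy hpw
    convert this using 2
    omega
  · rw [heq, Nat.sub_self] at hpw
    have e := wh_zero hw hpw
    rw [coeff_pderiv, zero_add, nolin F (n+1) hF h0 i heq] at e
    simp at e
    exact hp0 e

theorem EnoughDer.algInd [Nontrivial S] [CharZero K] (h : EnoughDer H DD)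
    {E : Type*} {w : E → ℕ} (hw : ∀ i, 0 < w i) {y : E → S} (hy : ∀ i, y i ∈ H (w i))
    (gen : ∀ e, ∀ f ∈ H e, ∃ F : MvPolynomial E K, IsWeightedHomogeneous w F e ∧ aeval y F = f)
    (nolin : ∀ (F : MvPolynomial E K) n, IsWeightedHomogeneous w F n → aeval y F = 0 →
      ∀ i, w i = n → coeff (Finsupp.single i 1) F = 0) :
    AlgebraicIndependent K y := by
  classical
  rw [algebraicIndependent_iff]
  intro F hF
  obtain ⟨p, hp1, hp2⟩ := h.proj
  have key : ∀ n, aeval y (weightedHomogeneousComponent w n F) = p n (aeval y F) := by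
    intro n
    clear hF
    have : ∀ G : MvPolynomial E K, aeval y (weightedHomogeneousComponent w n G) = p n (aeval y G) := by
      intro G
      induction G using MvPolynomial.induction_on' with
      | monomial d c =>
        have hm := h.aeval_monomial_mem hy d c
        have hwm := isWeightedHomogeneous_monomial w d c rfl
        by_cases hn : Finsupp.weight w d = n
        · subst hn
          rw [hp1 _ _ hm, hwm.weightedHomogeneousComponent_same]
        · rw [hp2 _ _ (Ne.symm hn) _ hm, hwm.weightedHomogeneousComponent_ne _ (Ne.symm hn), map_zero]
      | add p q hp hq => simp [hp, hq]
    exact this F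
  rw [← finsum_weightedHomogeneousComponent w F]
  have : ∀ n, weightedHomogeneousComponent w n F = 0 := fun n =>
    h.rel_eq_zero hw hy gen nolin n _ (weightedHomogeneousComponent_isWeightedHomogeneous n F)
      (by rw [key, hF, map_zero])
  simp [this]
end ESS

section Gen
open MvPolynomial
variable {K S : Type} [Field K] [CommRing S] [Algebra K S]

/-- Decomposable elements. -/
def Dec (H : ℕ → Submodule K S) (e : ℕ) : Submodule K S :=
  Submodule.span K {x | ∃ i j a b, 1 ≤ i ∧ 1 ≤ j ∧ i + j = e ∧ a ∈ H i ∧ b ∈ H j ∧ x = a * b}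

/-- Independence modulo decomposables. -/
def IndF (H : ℕ → Submodule K S) {ι : Type} (y : ι → S) (w : ι → ℕ) : Prop :=
  ∀ e, LinearIndepOn K (fun i => (Dec H e).mkQ (y i)) {i | w i = e}

variable {H : ℕ → Submodule K S} {DD : Set (Derivation K S S)}

lemma Dec_mem {e i j : ℕ} {a b : S} (hi : 1 ≤ i) (hj : 1 ≤ j) (hij : i + j = e) (ha : a ∈ H i)
    (hb : b ∈ H j) : a * b ∈ Dec H e :=
  Submodule.subset_span ⟨i, j, a, b, hi, hj, hij, ha, hb, rfl⟩

lemma EnoughDer.aeval_mem_Dec (h : EnoughDer H DD) {E : Type} {w : E → ℕ} (hw : ∀ i, 0 < w i)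
    {y : E → S} (hy : ∀ i, y i ∈ H (w i)) {n : ℕ} (hn : 1 ≤ n) {G : MvPolynomial E K}
    (hG : IsWeightedHomogeneous w G n) (h1 : ∀ j, coeff (Finsupp.single j 1) G = 0) :
    aeval y G ∈ Dec H n := by
  classical
  rw [G.as_sum, map_sum]
  refine Submodule.sum_mem _ fun d hd => ?_
  have hd' := mem_support_iff.1 hd
  have hdn := hG hd'
  have hd0 : d ≠ 0 := by rintro rfl; simp at hdn; omega
  obtain ⟨j, hj⟩ := Finsupp.support_nonempty_iff.2 hd0
  have hle : Finsupp.single j 1 ≤ d := by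
    rw [Finsupp.single_le_iff]; have := Finsupp.mem_support_iff.1 hj; omega
  have hsplit : d = Finsupp.single j 1 + (d - Finsupp.single j 1) := by
    rw [add_tsub_cancel_of_le hle]
  generalize d - Finsupp.single j 1 = d' at hsplit
  have hd'0 : d' ≠ 0 := by
    rintro rfl
    rw [hsplit, add_zero] at hd'
    exact hd' (h1 j)
  obtain ⟨j', hj'⟩ := Finsupp.support_nonempty_iff.2 hd'0
  have hw' : 1 ≤ Finsupp.weight w d' :=
    le_trans (hw j') (Finsupp.le_weight_of_ne_zero' w (Finsupp.mem_support_iff.1 hj'))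
  have e1 : monomial d (coeff d G) = X j * monomial d' (coeff d G) := by
    conv_lhs => rw [hsplit]
    rw [X, monomial_mul, one_mul, ← hsplit]
  rw [e1, map_mul, aeval_X]
  refine Dec_mem (hw j) hw' ?_ (hy j) (h.aeval_monomial_mem hy d' _)
  rw [← hdn, hsplit, map_add, Finsupp.weight_single]; simp

lemma IndF.nolin (h : EnoughDer H DD) {E : Type} {w : E → ℕ} (hw : ∀ i, 0 < w i) {y : E → S}
    (hy : ∀ i, y i ∈ H (w i)) (hI : IndF H y w) (F : MvPolynomial E K) (n : ℕ)
    (hF : IsWeightedHomogeneous w F n) (h0 : aeval y F = 0) (i : E) (hi : w i = n) :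
      coeff (Finsupp.single i 1) F = 0 := by
  classical
  have hn : 1 ≤ n := hi ▸ hw i
  let c : E →₀ K := Finsupp.onFinset F.vars (fun j => coeff (Finsupp.single j 1) F) (by
    intro j hj
    exact (mem_vars_iff_mem_support _).2 ⟨_, mem_support_iff.2 hj, by simp⟩)
  let L : MvPolynomial E K := ∑ j ∈ c.support, monomial (Finsupp.single j 1) (c j)
  have hc : ∀ j ∈ c.support, w j = n := by
    intro j hj
    have := hF (d := Finsupp.single j 1) (show c j ≠ 0 from Finsupp.mem_support_iff.1 hj)
    simpa [Finsupp.weight_single] using this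
  have hL : IsWeightedHomogeneous w L n := by
    refine IsWeightedHomogeneous.sum _ _ _ fun j hj => ?_
    exact isWeightedHomogeneous_monomial _ _ _ (by simp [Finsupp.weight_single, hc j hj])
  have hcL : ∀ j, coeff (Finsupp.single j 1) L = c j := by
    intro j
    simp only [L, coeff_sum, coeff_monomial]
    rw [Finset.sum_eq_single j]
    · simp
    · intro b _ hb
      rw [if_neg]
      intro hh
      exact hb (Finsupp.single_left_injective one_ne_zero hh)
    · intro hj
      simpa using hj
  have hG := h.aeval_mem_Dec hw hy hn (G := F - L) (hF.sub hL) (fun j => by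
    rw [coeff_sub, hcL]; exact sub_self _)
  rw [map_sub, h0, zero_sub, neg_mem_iff] at hG
  have := linearIndepOn_iff.1 (hI n) c (by
    rw [Finsupp.mem_supported]; intro j hj; exact hc j hj) (by
    rw [Finsupp.linearCombination_apply, Finsupp.sum, ← (Submodule.Quotient.mk_eq_zero _).2 hG,
      map_sum]
    change _ = (Dec H n).mkQ _
    rw [map_sum]
    refine Finset.sum_congr rfl fun j _ => ?_
    rw [aeval_monomial, ← Algebra.smul_def, map_smul]
    simp)
  have := DFunLike.congr_fun this i
  exact this

/-- Generation. -/
lemma EnoughDer.gen_of_span (h : EnoughDer H DD) {E : Type} {w : E → ℕ}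
    {y : E → S}
    (hs : ∀ e, 1 ≤ e → ∀ f ∈ H e, (Dec H e).mkQ f ∈
      Submodule.span K ((fun i => (Dec H e).mkQ (y i)) '' {i | w i = e})) (e : ℕ) :
    ∀ f ∈ H e, ∃ F : MvPolynomial E K, IsWeightedHomogeneous w F e ∧ aeval y F = f := by
  induction e using Nat.strong_induction_on with
  | _ e ih =>
  intro f hf
  obtain rfl | he := Nat.eq_zero_or_pos e
  · obtain ⟨k, rfl⟩ := h.zero_mem f hf
    exact ⟨C k, isWeightedHomogeneous_C _ _, by simp⟩
  have hdec : ∀ g ∈ Dec H e, ∃ F : MvPolynomial E K, IsWeightedHomogeneous w F e ∧ aeval y F = g := by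
    intro g hg
    induction hg using Submodule.span_induction with
    | mem x hx =>
      obtain ⟨i, j, a, b, hi, hj, hij, ha, hb, rfl⟩ := hx
      obtain ⟨A, hA, rfl⟩ := ih i (by omega) a ha
      obtain ⟨B, hB, rfl⟩ := ih j (by omega) b hb
      exact ⟨A * B, hij ▸ hA.mul hB, by simp⟩
    | zero => exact ⟨0, isWeightedHomogeneous_zero _ _ _, by simp⟩
    | add x y _ _ hx hy =>
      obtain ⟨A, hA, rfl⟩ := hx
      obtain ⟨B, hB, rfl⟩ := hy
      exact ⟨A + B, hA.add hB, by simp⟩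
    | smul k x _ hx =>
      obtain ⟨A, hA, rfl⟩ := hx
      exact ⟨C k * A, hA.C_mul _, by simp [Algebra.smul_def]⟩
  obtain ⟨c, hc, hcf⟩ := (Finsupp.mem_span_image_iff_linearCombination K).1 (hs e he f hf)
  let L : MvPolynomial E K := ∑ j ∈ c.support, monomial (Finsupp.single j 1) (c j)
  have hL : IsWeightedHomogeneous w L e := by
    refine IsWeightedHomogeneous.sum _ _ _ fun j hj => ?_
    have : w j = e := hc hj
    exact isWeightedHomogeneous_monomial _ _ _ (by simp [Finsupp.weight_single, this])
  have : f - aeval y L ∈ Dec H e := by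
    rw [← Submodule.Quotient.mk_eq_zero, ← Submodule.mkQ_apply, map_sub, ← hcf, sub_eq_zero,
      Finsupp.linearCombination_apply, Finsupp.sum, map_sum, map_sum]
    refine Finset.sum_congr rfl fun j _ => ?_
    rw [aeval_monomial, ← Algebra.smul_def, map_smul]
    simp
  obtain ⟨F, hF, hFe⟩ := hdec _ this
  exact ⟨F + L, hF.add hL, by simp [hFe]⟩

theorem EnoughDer.extend (h : EnoughDer H DD) {ι : Type} {w : ι → ℕ}
    (hw : ∀ i, 0 < w i) {y : ι → S} (hy : ∀ i, y i ∈ H (w i)) (hI : IndF H y w) :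
    ∃ (E : Type) (φ : ι → E) (w' : E → ℕ) (y' : E → S), Function.Injective φ ∧ w' ∘ φ = w ∧
      y' ∘ φ = y ∧ (∀ i, 0 < w' i) ∧ (∀ i, y' i ∈ H (w' i)) ∧ IndF H y' w' ∧
      ∀ e, ∀ f ∈ H e, ∃ F : MvPolynomial E K, IsWeightedHomogeneous w' F e ∧ aeval y' F = f := by
  classical
  have A : ∀ e, LinearIndepOn K id ((fun i => (Dec H e).mkQ (y i)) '' {i | w i = e}) :=
    fun e => (hI e).id_image
  have B : ∀ e, ((fun i => (Dec H e).mkQ (y i)) '' {i | w i = e}) ⊆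
      ((H e).map (Dec H e).mkQ : Set _) := by
    rintro e _ ⟨i, hi, rfl⟩
    refine ⟨y i, ?_, rfl⟩
    have := hy i
    rwa [show w i = e from hi] at this
  let b := fun e => (A e).extend (B e)
  let C := fun e => {v : S ⧸ Dec H e // v ∈ b e ∧ v ∉ (fun i => (Dec H e).mkQ (y i)) '' {i | w i = e}}
  have lift : ∀ e (v : C e), ∃ x ∈ H e, (Dec H e).mkQ x = v.1 := by
    intro e v
    obtain ⟨x, hx, hxv⟩ := (A e).extend_subset (B e) v.2.1
    exact ⟨x, hx, hxv⟩
  choose x hx hxv using lift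
  let E := ι ⊕ (Σ e : ℕ, C (e+1))
  let w' : E → ℕ := Sum.elim w (fun p => p.1 + 1)
  let y' : E → S := Sum.elim y (fun p => x _ p.2)
  have hw' : ∀ i, 0 < w' i := by
    rintro (i | i)
    · exact hw i
    · exact Nat.succ_pos _
  have img : ∀ e, 1 ≤ e → (fun i => (Dec H e).mkQ (y' i)) '' {i | w' i = e} = b e := by
    intro e he
    apply Set.Subset.antisymm
    · rintro _ ⟨i | ⟨e', v⟩, hi, rfl⟩
      · exact (A e).subset_extend (B e) ⟨i, hi, rfl⟩
      · have : e' + 1 = e := hi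
        subst this
        change (Dec H _).mkQ (x _ v) ∈ _
        rw [hxv]
        exact v.2.1
    · intro v hv
      by_cases hv' : v ∈ (fun i => (Dec H e).mkQ (y i)) '' {i | w i = e}
      · obtain ⟨i, hi, rfl⟩ := hv'
        exact ⟨Sum.inl i, hi, rfl⟩
      · obtain ⟨e, rfl⟩ : ∃ m, e = m + 1 := ⟨e - 1, by omega⟩
        exact ⟨Sum.inr ⟨e, ⟨v, hv, hv'⟩⟩, rfl, hxv _ _⟩
  refine ⟨E, Sum.inl, w', y', Sum.inl_injective, rfl, rfl, hw', ?_, ?_, ?_⟩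
  · rintro (i | i)
    · exact hy i
    · exact hx _ _
  · intro e
    obtain rfl | he := Nat.eq_zero_or_pos e
    · have : {i | w' i = 0} = ∅ := by
        ext i; have := hw' i; simp; omega
      rw [this]; exact linearIndepOn_empty _ _
    rw [linearIndepOn_iff_image, img e he]
    · exact (A e).linearIndepOn_extend (B e)
    · rintro (i | ⟨e', v⟩) hi (j | ⟨e'', v'⟩) hj hij
      · exact congrArg Sum.inl ((hI e).injOn hi hj hij)
      · have : e'' + 1 = e := hj
        subst this
        change (Dec H _).mkQ (y i) = (Dec H _).mkQ (x _ v') at hij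
        rw [hxv] at hij
        exact absurd ⟨i, hi, hij⟩ v'.2.2
      · have : e' + 1 = e := hi
        subst this
        change (Dec H _).mkQ (x _ v) = (Dec H _).mkQ (y j) at hij
        rw [hxv] at hij
        exact absurd ⟨j, hj, hij.symm⟩ v.2.2
      · have h1 : e' + 1 = e := hi
        subst h1
        have h2 : e'' = e' := by have : e'' + 1 = e' + 1 := hj; omega
        subst h2
        change (Dec H _).mkQ (x _ v) = (Dec H _).mkQ (x _ v') at hij
        rw [hxv, hxv] at hij
        rw [Subtype.ext hij]
  · refine h.gen_of_span fun e he f hf => ?_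
    rw [img e he]
    exact (A e).subset_span_extend (B e) ⟨f, hf, rfl⟩

theorem EnoughDer.algInd_of_indF [Nontrivial S] [CharZero K] (h : EnoughDer H DD)
    {ι : Type} {w : ι → ℕ} (hw : ∀ i, 0 < w i) {y : ι → S} (hy : ∀ i, y i ∈ H (w i))
    (hI : IndF H y w) : AlgebraicIndependent K y := by
  obtain ⟨E, φ, w', y', hφ, rfl, rfl, hw', hy', hI', gen⟩ := h.extend hw hy hI
  exact (h.algInd hw' hy' gen (hI'.nolin h hw' hy')).comp φ hφ

theorem EnoughDer.exists_gen (h : EnoughDer H DD) :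
    ∃ (E : Type) (w : E → ℕ) (y : E → S), (∀ i, 0 < w i) ∧ (∀ i, y i ∈ H (w i)) ∧ IndF H y w ∧
      ∀ e, ∀ f ∈ H e, ∃ F : MvPolynomial E K, IsWeightedHomogeneous w F e ∧ aeval y F = f := by
  obtain ⟨E, φ, w', y', hφ, _, _, hw', hy', hI', gen⟩ := h.extend (ι := Empty) (w := fun _ => 1)
    (by simp) (y := fun _ => 0) (by simp) (fun e => by
      have : {i : Empty | 1 = e} = ∅ := Set.eq_empty_of_isEmpty _
      rw [this]; exact linearIndepOn_empty _ _)
  exact ⟨E, w', y', hw', hy', hI', gen⟩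
end Gen

noncomputable section Germs
open MvPolynomial

/-- The ultrafilter. -/
abbrev UF : Filter ℕ := (Filter.hyperfilter ℕ : Filter ℕ)

/-- Ultrapower. -/
def GG (A : Type) : Type := Filter.Germ UF A

instance (A : Type) [CommRing A] : CommRing (GG A) := inferInstanceAs (CommRing (Filter.Germ UF A))

/-- quotient map -/
def mkG {A : Type} [CommRing A] : (ℕ → A) →+* GG A where
  toFun a := Filter.Germ.ofFun a
  map_one' := rfl
  map_mul' _ _ := rfl
  map_zero' := rfl
  map_add' _ _ := rfl

lemma mkG_surj {A : Type} [CommRing A] (x : GG A) : ∃ a, mkG a = x :=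
  Quotient.exists_rep x

lemma mkG_eq {A : Type} [CommRing A] {a b : ℕ → A} : mkG a = mkG b ↔ ∀ᶠ n in UF, a n = b n :=
  Filter.Germ.coe_eq

lemma mkG_eq_zero {A : Type} [CommRing A] {a : ℕ → A} : mkG a = 0 ↔ ∀ᶠ n in UF, a n = 0 := by
  rw [← map_zero mkG, mkG_eq]; rfl

/-- representative -/
def rep {A : Type} [CommRing A] (x : GG A) : ℕ → A := (mkG_surj x).choose
@[simp] lemma mkG_rep {A : Type} [CommRing A] (x : GG A) : mkG (rep x) = x := (mkG_surj x).choose_spec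

/-- additive maps on germs -/
def gadd {A B : Type} [CommRing A] [CommRing B] (f : ℕ → A →+ B) : GG A →+ GG B where
  toFun := Quotient.map' (fun a n => f n (a n)) (fun a b h => by
    have h : ∀ᶠ n in UF, a n = b n := h
    change ∀ᶠ n in UF, _
    filter_upwards [h] with n hn
    rw [hn])
  map_zero' := by
    change Quotient.mk'' _ = Quotient.mk'' _
    congr 1
    ext n
    exact map_zero (f n)
  map_add' x y := by
    obtain ⟨a, rfl⟩ := mkG_surj x
    obtain ⟨b, rfl⟩ := mkG_surj y
    rw [← map_add]
    change Quotient.mk'' _ = Quotient.mk'' _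
    congr 1
    ext n
    exact map_add (f n) _ _

@[simp] lemma gadd_mkG {A B : Type} [CommRing A] [CommRing B] (f : ℕ → A →+ B) (a : ℕ → A) :
    gadd f (mkG a) = mkG (fun n => f n (a n)) := rfl

/-- ring homs on germs -/
def gmap {A B : Type} [CommRing A] [CommRing B] (f : ℕ → A →+* B) : GG A →+* GG B :=
  { gadd (fun n => (f n).toAddMonoidHom) with
    map_one' := by
      change gadd (fun n => (f n).toAddMonoidHom) 1 = 1
      rw [← map_one mkG, gadd_mkG, ← map_one mkG]
      congr 1
      ext n
      exact map_one (f n)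
    map_mul' := by
      intro x y
      obtain ⟨a, rfl⟩ := mkG_surj x
      obtain ⟨b, rfl⟩ := mkG_surj y
      change gadd (fun n => (f n).toAddMonoidHom) _ = gadd (fun n => (f n).toAddMonoidHom) _ * gadd (fun n => (f n).toAddMonoidHom) _
      rw [← map_mul, gadd_mkG, gadd_mkG, gadd_mkG, ← map_mul]
      congr 1
      ext n
      exact map_mul (f n) _ _ }

@[simp] lemma gmap_mkG {A B : Type} [CommRing A] [CommRing B] (f : ℕ → A →+* B) (a : ℕ → A) :
    gmap f (mkG a) = mkG (fun n => f n (a n)) := rfl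

instance (A : Type) [CommRing A] [Nontrivial A] : Nontrivial (GG A) :=
  inferInstanceAs (Nontrivial (Filter.Germ UF A))

lemma isFieldGG : IsField (GG ℂ) where
  exists_pair_ne := exists_pair_ne _
  mul_comm := mul_comm
  mul_inv_cancel := by
    intro a ha
    obtain ⟨a, rfl⟩ := mkG_surj a
    refine ⟨mkG (fun n => (a n)⁻¹), ?_⟩
    rw [← map_mul, ← map_one mkG, mkG_eq]
    have : ∀ᶠ n in UF, a n ≠ 0 := Ultrafilter.eventually_not.2 (mt mkG_eq_zero.2 ha)
    filter_upwards [this] with n hn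
    exact mul_inv_cancel₀ hn

/-- The field. -/
abbrev KK : Type := GG ℂ

instance : Field KK := isFieldGG.toField

instance : CharZero KK := by
  refine charZero_of_inj_zero fun n hn => ?_
  rw [← map_natCast mkG, mkG_eq_zero] at hn
  obtain ⟨m, hm⟩ := hn.exists
  simpa using hm

instance : Infinite KK := inferInstance

instance (σ A : Type) [CommRing A] [Algebra ℂ A] : Algebra KK (GG (MvPolynomial σ A)) :=
  (gmap (fun _ => algebraMap ℂ (MvPolynomial σ A))).toAlgebra

lemma smulG {σ A : Type} [CommRing A] [Algebra ℂ A] (c : ℕ → ℂ) (x : ℕ → MvPolynomial σ A) :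
    (mkG c : KK) • mkG x = mkG (fun n => c n • x n) := by
  rw [Algebra.smul_def]
  change gmap _ _ * _ = _
  rw [gmap_mkG, ← map_mul]
  congr 1
  ext1 n
  simp [Algebra.smul_def]

lemma algebraMapG {σ A : Type} [CommRing A] [Algebra ℂ A] (c : ℕ → ℂ) :
    algebraMap KK (GG (MvPolynomial σ A)) (mkG c) = mkG (fun n => algebraMap ℂ _ (c n)) := rfl

/-- homogeneous germs -/
def HG (σ : Type) (e : ℕ) : Submodule KK (GG (MvPolynomial σ ℂ)) where
  carrier := {f | ∃ a : ℕ → MvPolynomial σ ℂ, (∀ n, (a n).IsHomogeneous e) ∧ f = mkG a}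
  zero_mem' := ⟨0, fun n => isHomogeneous_zero _ _ _, by simp⟩
  add_mem' := by
    rintro _ _ ⟨a, ha, rfl⟩ ⟨b, hb, rfl⟩
    exact ⟨a + b, fun n => (ha n).add (hb n), by simp⟩
  smul_mem' := by
    rintro c _ ⟨a, ha, rfl⟩
    obtain ⟨c, rfl⟩ := mkG_surj c
    refine ⟨_, fun n => ?_, smulG c a⟩
    rw [smul_eq_C_mul]
    exact (ha n).C_mul _

lemma mem_HG {σ : Type} {e : ℕ} {f} : f ∈ HG σ e ↔
    ∃ a : ℕ → MvPolynomial σ ℂ, (∀ n, (a n).IsHomogeneous e) ∧ f = mkG a := Iff.rfl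

lemma mkG_mem_HG {σ : Type} {e : ℕ} {a : ℕ → MvPolynomial σ ℂ} :
    mkG a ∈ HG σ e ↔ ∀ᶠ n in UF, (a n).IsHomogeneous e := by
  classical
  constructor
  · rintro ⟨b, hb, h⟩
    filter_upwards [mkG_eq.1 h] with n hn
    rw [hn]; exact hb n
  · intro h
    refine ⟨fun n => if (a n).IsHomogeneous e then a n else 0, fun n => ?_, ?_⟩
    · dsimp only
      split_ifs with h
      · exact h
      · exact isHomogeneous_zero _ _ _
    · rw [mkG_eq]
      filter_upwards [h] with n hn
      rw [if_pos hn]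

/-- linear maps on germs -/
def glin {σ τ : Type} (f : ℕ → MvPolynomial σ ℂ →ₗ[ℂ] MvPolynomial τ ℂ) :
    GG (MvPolynomial σ ℂ) →ₗ[KK] GG (MvPolynomial τ ℂ) :=
  { gadd (fun n => (f n).toAddMonoidHom) with
    map_smul' := by
      intro c x
      obtain ⟨c, rfl⟩ := mkG_surj c
      obtain ⟨a, rfl⟩ := mkG_surj x
      change gadd (fun n => (f n).toAddMonoidHom) _ = mkG c • gadd (fun n => (f n).toAddMonoidHom) _
      rw [smulG, gadd_mkG, gadd_mkG, smulG]
      congr 1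
      ext1 n
      exact map_smul (f n) _ _ }

@[simp] lemma glin_mkG {σ τ : Type} (f : ℕ → MvPolynomial σ ℂ →ₗ[ℂ] MvPolynomial τ ℂ) (a) :
    glin f (mkG a) = mkG (fun n => f n (a n)) := rfl

/-- derivations -/
def gder {σ : Type} (j : ℕ → σ) :
    Derivation KK (GG (MvPolynomial σ ℂ)) (GG (MvPolynomial σ ℂ)) :=
  Derivation.mk' (glin (fun n => (pderiv (j n)).toLinearMap)) (by
    intro x y
    obtain ⟨a, rfl⟩ := mkG_surj x
    obtain ⟨b, rfl⟩ := mkG_surj y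
    rw [← map_mul, glin_mkG, glin_mkG, glin_mkG, smul_eq_mul, smul_eq_mul, ← map_mul, ← map_mul,
      ← map_add]
    congr 1
    ext1 n
    simp)

@[simp] lemma gder_mkG {σ : Type} (j : ℕ → σ) (a) :
    gder j (mkG a) = mkG (fun n => pderiv (j n) (a n)) := rfl

theorem enoughG (σ : Type) [Nonempty σ] : EnoughDer (HG σ) (Set.range gder) where
  one_mem := ⟨1, fun n => isHomogeneous_one _ _, by simp⟩
  mul_mem := by
    rintro i j _ _ ⟨a, ha, rfl⟩ ⟨b, hb, rfl⟩
    exact ⟨a * b, fun n => (ha n).mul (hb n), by simp⟩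
  zero_mem := by
    rintro _ ⟨a, ha, rfl⟩
    refine ⟨mkG fun n => coeff 0 (a n), ?_⟩
    rw [algebraMapG]
    congr 1
    ext1 n
    exact (totalDegree_eq_zero_iff_eq_C.1 (Nat.le_zero.1 (ha n).totalDegree_le))
  proj := by
    refine ⟨fun e => glin (fun _ => homogeneousComponent e), ?_, ?_⟩
    · rintro e _ ⟨a, ha, rfl⟩
      rw [glin_mkG]
      congr 1
      ext1 n
      rw [homogeneousComponent_of_mem ((mem_homogeneousSubmodule _ _).2 (ha n)), if_pos rfl]
    · rintro e e' hee _ ⟨a, ha, rfl⟩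
      rw [glin_mkG, ← map_zero mkG]
      congr 1
      ext1 n
      rw [homogeneousComponent_of_mem ((mem_homogeneousSubmodule _ _).2 (ha n)), if_neg hee]
      rfl
  der := by
    rintro _ ⟨j, rfl⟩ e _ ⟨a, ha, rfl⟩
    exact ⟨_, fun n => (ha n).pderiv, gder_mkG _ _⟩
  enough := by
    classical
    rintro e _ ⟨a, ha, rfl⟩ h
    have : ∀ n, ∃ j : σ, a n ≠ 0 → pderiv j (a n) ≠ 0 := by
      intro n
      by_cases h0 : (a n).vars = ∅
      · refine ⟨Classical.arbitrary σ, fun h1 => (h1 ?_).elim⟩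
        rw [vars_eq_empty_iff_eq_C] at h0
        rw [h0, (ha n).coeff_eq_zero (by simp), map_zero]
      · obtain ⟨j, hj⟩ := Finset.nonempty_iff_ne_empty.2 h0
        exact ⟨j, fun _ => pderiv_ne_zero_of_mem_vars hj⟩
    choose j hj using this
    have := h _ ⟨j, rfl⟩
    rw [gder_mkG, mkG_eq_zero] at this
    rw [mkG_eq_zero]
    filter_upwards [this] with n hn
    by_contra h0
    exact hj n h0 hn

end Germs

noncomputable section Coeffs
open MvPolynomial

lemma aeval_graded {σ B : Type} [CommRing B] [Algebra ℂ B] (M : ℕ → Submodule ℂ B)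
    (h1 : (1 : B) ∈ M 0) (hmul : ∀ i j a b, a ∈ M i → b ∈ M j → a * b ∈ M (i + j))
    (g : σ → B) (hg : ∀ k, g k ∈ M 1) {f : MvPolynomial σ ℂ} {e : ℕ} (hf : f.IsHomogeneous e) :
    aeval g f ∈ M e := by
  classical
  have hpow : ∀ k n, g k ^ n ∈ M n := by
    intro k n
    induction n with
    | zero => simpa using h1
    | succ n ih => rw [pow_succ]; exact hmul _ _ _ _ ih (hg k)
  have hprod : ∀ (s : Finset σ) (d : σ → ℕ), ∏ i ∈ s, g i ^ d i ∈ M (∑ i ∈ s, d i) := by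
    intro s d
    induction s using Finset.induction_on with
    | empty => simpa using h1
    | insert a s ha ih =>
      rw [Finset.prod_insert ha, Finset.sum_insert ha]
      exact hmul _ _ _ _ (hpow _ _) ih
  rw [f.as_sum, map_sum]
  refine Submodule.sum_mem _ fun d hd => ?_
  rw [aeval_monomial, ← Algebra.smul_def]
  refine Submodule.smul_mem _ _ ?_
  have : d.degree = e := by
    by_contra h
    exact mem_support_iff.1 hd (hf.coeff_eq_zero h)
  rw [← this]
  exact hprod _ _

lemma aeval_scale {σ B : Type} [CommRing B] [Algebra ℂ B] (g : σ → B) (L : B)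
    {f : MvPolynomial σ ℂ} {e : ℕ} (hf : f.IsHomogeneous e) :
    aeval (fun k => g k * L) f = aeval g f * L ^ e := by
  conv_lhs => rw [f.as_sum]
  conv_rhs => rw [f.as_sum]
  rw [map_sum, map_sum, Finset.sum_mul]
  refine Finset.sum_congr rfl fun d hd => ?_
  have : d.degree = e := by
    by_contra h
    exact mem_support_iff.1 hd (hf.coeff_eq_zero h)
  rw [aeval_monomial, aeval_monomial, mul_assoc]
  congr 1
  simp only [mul_pow, Finsupp.prod, Finset.prod_mul_distrib]
  rw [Finset.prod_pow_eq_pow_sum, ← this]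
  rfl

/-- index of the coefficients -/
abbrev IX (N : ℕ) (w : Fin N → ℕ) := Σ i : Fin N, {α : Fin N →₀ ℕ // α.degree = w i}

/-- generic substitution -/
def psi (N : ℕ) : MvPolynomial ℕ ℂ →ₐ[ℂ] MvPolynomial (Fin N) (MvPolynomial (ℕ × ℕ) ℂ) :=
  aeval (fun k => ∑ j : Fin N, C (X (j.val, k)) * X j)

lemma psi_coeff_hom (N : ℕ) {f : MvPolynomial ℕ ℂ} {e : ℕ} (hf : f.IsHomogeneous e)
    (α : Fin N →₀ ℕ) : (coeff α (psi N f)).IsHomogeneous e := by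
  classical
  let M : ℕ → Submodule ℂ (MvPolynomial (Fin N) (MvPolynomial (ℕ × ℕ) ℂ)) := fun e =>
    { carrier := {q | ∀ α, (coeff α q).IsHomogeneous e}
      zero_mem' := fun α => by simpa using isHomogeneous_zero _ _ _
      add_mem' := fun {a b} ha hb α => by rw [coeff_add]; exact (ha α).add (hb α)
      smul_mem' := fun c a ha α => by
        rw [coeff_smul, smul_eq_C_mul]; exact (ha α).C_mul _ }
  refine aeval_graded M ?_ ?_ _ ?_ hf α
  · intro α
    rw [coeff_one]
    split_ifs
    · exact isHomogeneous_one _ _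
    · exact isHomogeneous_zero _ _ _
  · intro i j a b ha hb α
    rw [coeff_mul]
    exact IsHomogeneous.sum _ _ _ fun p _ => (ha _).mul (hb _)
  · intro k α
    rw [coeff_sum]
    refine IsHomogeneous.sum _ _ _ fun j _ => ?_
    rw [coeff_C_mul, coeff_X]
    split_ifs
    · rw [mul_one]; exact isHomogeneous_X _ _
    · rw [mul_zero]; exact isHomogeneous_zero _ _ _

/-- specialization -/
def thet (N : ℕ) (s : Fin N → ℂ) : MvPolynomial (ℕ × ℕ) ℂ →ₐ[ℂ] MvPolynomial ℕ ℂ :=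
  aeval (fun p => C (if h : p.1 < N then s ⟨p.1, h⟩ else 0) * X p.2)

lemma thet_hom {N : ℕ} (s : Fin N → ℂ) {f : MvPolynomial (ℕ × ℕ) ℂ} {e : ℕ}
    (hf : f.IsHomogeneous e) : (thet N s f).IsHomogeneous e := by
  have := aeval_graded (homogeneousSubmodule ℕ ℂ) ((mem_homogeneousSubmodule _ _).2
    (isHomogeneous_one _ _)) (fun i j a b ha hb => by
      rw [mem_homogeneousSubmodule] at *; exact ha.mul hb)
      (fun p : ℕ × ℕ => C (if h : p.1 < N then s ⟨p.1, h⟩ else 0) * X p.2)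
      (fun k => by rw [mem_homogeneousSubmodule]; exact (isHomogeneous_X _ _).C_mul _) hf
  rwa [mem_homogeneousSubmodule] at this

lemma thet_psi {N : ℕ} (s : Fin N → ℂ) {f : MvPolynomial ℕ ℂ} {e : ℕ} (hf : f.IsHomogeneous e)
    {α : Fin N →₀ ℕ} (hα : α.degree = e) : thet N s (coeff α (psi N f)) =
      ((α.multinomial : ℂ) * α.prod (fun r m => s r ^ m)) • f := by
  have h1 : (mapAlgHom (thet N s)).comp (psi N) = aeval (fun k => C (X k) *
      ∑ j : Fin N, (C (s j) : MvPolynomial ℕ ℂ) • (X j : MvPolynomial (Fin N) (MvPolynomial ℕ ℂ))) := by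
    ext1 k
    simp only [psi, AlgHom.comp_apply, aeval_X, map_sum, map_mul, mapAlgHom_apply, map_X, map_C]
    rw [Finset.mul_sum]
    refine Finset.sum_congr rfl fun j _ => ?_
    simp [thet, smul_eq_C_mul]
    ring
  have h2 := coeff_map (thet N s).toRingHom (psi N f) α
  have h3 : map (thet N s).toRingHom (psi N f) = C f * (∑ j : Fin N, (C (s j) : MvPolynomial ℕ ℂ) • (X j : MvPolynomial (Fin N) (MvPolynomial ℕ ℂ))) ^ e := by
    have := DFunLike.congr_fun h1 f
    rw [aeval_scale _ _ hf] at this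
    have h4 : aeval (fun k => (C (X k) : MvPolynomial (Fin N) (MvPolynomial ℕ ℂ))) f = C f := by
      have : aeval (fun k => (C (X k) : MvPolynomial (Fin N) (MvPolynomial ℕ ℂ))) =
        (IsScalarTower.toAlgHom ℂ (MvPolynomial ℕ ℂ) (MvPolynomial (Fin N) (MvPolynomial ℕ ℂ))) := by
        ext1 k; simp [algebraMap_eq]
      rw [this]; simp [algebraMap_eq]
    rw [h4] at this
    exact this
  rw [h3, coeff_C_mul, coeff_linearCombination_X_pow_of_fintype, if_pos (show (α.sum fun _ m => m) = e from hα)] at h2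
  change _ = thet N s _ at h2
  rw [← h2, mul_comm, smul_eq_C_mul, C_mul]
  simp [Finsupp.prod]

lemma indF_coeffs {N : ℕ} {w : Fin N → ℕ} (a : Fin N → ℕ → MvPolynomial ℕ ℂ)
    (ha : ∀ i n, (a i n).IsHomogeneous (w i)) (hI : IndF (HG ℕ) (fun i => mkG (a i)) w) :
    IndF (HG (ℕ × ℕ)) (fun p : IX N w => mkG (fun n => coeff p.2.1 (psi N (a p.1 n))))
      (fun p => w p.1) := by
  classical
  intro e
  rw [linearIndepOn_iff]
  intro c hc h0
  have hc' : ∀ p ∈ c.support, w p.1 = e := fun p hp => hc hp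
  rw [Finsupp.linearCombination_apply, Finsupp.sum] at h0
  have h0' : ∑ p ∈ c.support, c p • mkG (fun n => coeff p.2.1 (psi N (a p.1 n))) ∈
      Dec (HG (ℕ × ℕ)) e := by
    rw [← Submodule.Quotient.mk_eq_zero, ← Submodule.mkQ_apply, map_sum, ← h0]
    exact Finset.sum_congr rfl fun _ _ => map_smul _ _ _
  let q : Fin N → MvPolynomial (Fin N) KK := fun i => ∑ p ∈ c.support with p.1 = i,
    monomial p.2.1 (c p * p.2.1.multinomial)
  have hq : ∀ i, q i = 0 := by
    intro i
    apply MvPolynomial.funext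
    intro S
    rw [map_zero]
    let s : ℕ → Fin N → ℂ := fun n j => rep (S j) n
    let Θ := glin (fun n => (thet N (s n)).toLinearMap)
    have hΘ : ∀ e, ∀ x ∈ HG (ℕ × ℕ) e, Θ x ∈ HG ℕ e := by
      rintro e _ ⟨b, hb, rfl⟩
      exact ⟨_, fun n => thet_hom (s n) (hb n), rfl⟩
    have hΘm : ∀ x y, Θ (x * y) = Θ x * Θ y := by
      intro x y
      obtain ⟨x, rfl⟩ := mkG_surj x
      obtain ⟨y, rfl⟩ := mkG_surj y
      simp only [Θ]
      rw [← map_mul, glin_mkG, glin_mkG, glin_mkG, ← map_mul]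
      congr 1
      ext1 n
      exact map_mul (thet N (s n)) _ _
    have hΘD : ∀ x ∈ Dec (HG (ℕ × ℕ)) e, Θ x ∈ Dec (HG ℕ) e := by
      intro x hx
      induction hx using Submodule.span_induction with
      | mem x hx =>
        obtain ⟨i, j, a, b, hi, hj, hij, ha, hb, rfl⟩ := hx
        rw [hΘm]
        exact Dec_mem hi hj hij (hΘ _ _ ha) (hΘ _ _ hb)
      | zero => rw [map_zero]; exact zero_mem _
      | add x y _ _ hx hy => rw [map_add]; exact add_mem hx hy
      | smul k x _ hx => rw [map_smul]; exact Submodule.smul_mem _ _ hx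
    have h1 := hΘD _ h0'
    have hval : ∀ p : IX N w, Θ (mkG (fun n => coeff p.2.1 (psi N (a p.1 n)))) =
        ((p.2.1.multinomial : KK) * p.2.1.prod (fun r m => S r ^ m)) • mkG (a p.1) := by
      intro p
      have : ((p.2.1.multinomial : KK) * p.2.1.prod (fun r m => S r ^ m)) =
          mkG (fun n => (p.2.1.multinomial : ℂ) * p.2.1.prod (fun r m => s n r ^ m)) := by
        have e1 : (fun n => (p.2.1.multinomial : ℂ) * p.2.1.prod (fun r m => s n r ^ m)) =
          ((p.2.1.multinomial : ℕ) : ℕ → ℂ) * p.2.1.prod (fun r m => (rep (S r)) ^ m) := by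
          ext1 n
          simp [Finsupp.prod, s]
        rw [e1, map_mul, map_natCast]
        simp only [Finsupp.prod, map_prod, map_pow, mkG_rep]
      rw [this, smulG]
      simp only [Θ, glin_mkG]
      congr 1
      ext1 n
      exact thet_psi (s n) (ha _ _) p.2.2
    rw [map_sum] at h1
    have h2 : ∑ p ∈ c.support, Θ (c p • mkG (fun n => coeff p.2.1 (psi N (a p.1 n)))) =
        ∑ i, (eval S (q i)) • mkG (a i) := by
      rw [← Finset.sum_fiberwise c.support (fun p => p.1)]
      refine Finset.sum_congr rfl fun i _ => ?_
      simp only [q, map_sum, Finset.sum_smul]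
      refine Finset.sum_congr rfl fun p hp => ?_
      rw [map_smul, hval, smul_smul, eval_monomial, mul_assoc]
      have := (Finset.mem_filter.1 hp).2
      congr 3
    rw [h2] at h1
    have h3 := linearIndepOn_iff.1 (hI e) (Finsupp.equivFunOnFinite.symm (fun i => eval S (q i)))
      (by
        rw [Finsupp.mem_supported]
        intro i hi
        by_contra hne
        have : q i = 0 := by
          refine Finset.sum_eq_zero fun p hp => ?_
          obtain ⟨h1, h2⟩ := Finset.mem_filter.1 hp
          exact (hne (h2 ▸ hc' p h1)).elim
        simp [this] at hi)
      (by
        rw [Finsupp.linearCombination_apply, Finsupp.sum_fintype _ _ (by simp),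
          ← (Submodule.Quotient.mk_eq_zero _).2 h1, ← Submodule.mkQ_apply, map_sum]
        refine Finset.sum_congr rfl fun i _ => ?_
        rw [map_smul]
        simp)
    exact DFunLike.congr_fun h3 i
  ext p
  rw [Finsupp.coe_zero, Pi.zero_apply]
  have h4 := congrArg (coeff p.2.1) (hq p.1)
  simp only [q, coeff_sum, coeff_monomial, coeff_zero] at h4
  by_contra hcp
  rw [Finset.sum_eq_single p] at h4
  · rw [if_pos rfl] at h4
    refine mul_ne_zero hcp ?_ h4
    rw [Nat.cast_ne_zero, Finsupp.multinomial_eq]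
    exact (Nat.multinomial_pos _ _).ne'
  · rintro ⟨i, α⟩ hb hne
    rw [if_neg]
    intro hh
    apply hne
    obtain ⟨_, h2⟩ := Finset.mem_filter.1 hb
    obtain ⟨i', α'⟩ := p
    dsimp at h2 hh
    subst h2
    rw [Subtype.ext hh]
  · intro hh
    exact (hh (Finset.mem_filter.2 ⟨Finsupp.mem_support_iff.2 hcp, rfl⟩)).elim

/-- substitution by a complex matrix -/
def subv {N : ℕ} (v : Fin N → ℕ → ℂ) : MvPolynomial ℕ ℂ →ₐ[ℂ] MvPolynomial (Fin N) ℂ :=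
  aeval (fun k => ∑ j : Fin N, C (v j k) * X j)

theorem exists_generic {N : ℕ} {w : Fin N → ℕ} (hw : ∀ i, 0 < w i)
    (a : Fin N → ℕ → MvPolynomial ℕ ℂ)
    (ha : ∀ i n, (a i n).IsHomogeneous (w i)) (hI : IndF (HG ℕ) (fun i => mkG (a i)) w)
    (Δ : MvPolynomial (IX N w) ℂ) (hΔ : Δ ≠ 0) :
    ∀ᶠ n in UF, ∃ v : Fin N → ℕ → ℂ,
      eval (fun p : IX N w => coeff p.2.1 (subv v (a p.1 n))) Δ ≠ 0 := by
  have hA := (enoughG (ℕ × ℕ)).algInd_of_indF (w := fun p : IX N w => w p.1) (fun p => hw _)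
    (fun p => ⟨_, fun n => psi_coeff_hom N (ha p.1 n) p.2.1, rfl⟩) (indF_coeffs a ha hI)
  let κ : ℂ →+* KK := mkG.comp (Pi.constRingHom ℕ ℂ)
  have h1 : map κ Δ ≠ 0 := by
    rw [Ne, map_eq_zero_iff _ (map_injective κ κ.injective)]; exact hΔ
  have h2 : aeval (fun p : IX N w => mkG (fun n => coeff p.2.1 (psi N (a p.1 n)))) (map κ Δ) ≠ 0 :=
    fun h => h1 ((algebraicIndependent_iff.1 hA) _ h)
  have h3 : aeval (fun p : IX N w => mkG (fun n => coeff p.2.1 (psi N (a p.1 n)))) (map κ Δ) =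
      mkG (fun n => aeval (fun p : IX N w => coeff p.2.1 (psi N (a p.1 n))) Δ) := by
    clear hΔ h1 h2
    induction Δ using MvPolynomial.induction_on with
    | C c => simp [κ]; rw [algebraMapG]; rfl
    | add p q hp hq =>
      rw [map_add, map_add, hp, hq, ← map_add]; congr 1; ext1 n; exact (map_add _ _ _).symm
    | mul_X p i hp =>
      rw [map_mul, map_mul, hp, map_X, aeval_X, ← map_mul]; congr 1; ext1 n
      simp
  rw [h3, Ne, mkG_eq_zero] at h2
  have h2 : ∀ᶠ n in UF, aeval (fun p : IX N w => coeff p.2.1 (psi N (a p.1 n))) Δ ≠ 0 :=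
    Ultrafilter.eventually_not.2 h2
  filter_upwards [h2] with n hn
  by_contra! hcon
  apply hn
  apply MvPolynomial.funext
  intro v
  rw [map_zero, ← hcon (fun j k => v (j.val, k))]
  have h5 : ∀ f, subv (fun (j : Fin N) k => v (j.val, k)) f = map (eval v) (psi N f) := by
    have : subv (fun (j : Fin N) k => v (j.val, k)) = (mapAlgHom (aeval v)).comp (psi N) := by
      ext1 k
      simp [subv, psi]
    intro f
    rw [this]
    rfl
  simp only [h5, coeff_map]
  rw [aeval_def, eval₂_eq_eval_map]
  clear * -
  induction Δ using MvPolynomial.induction_on with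
  | C c => simp
  | add p q hp hq => simp_all
  | mul_X p i hp => simp_all
end Coeffs

noncomputable section Filt
open MvPolynomial

variable {A : Type} [CommRing A] {N : ℕ}

/-- polynomials of degree `< d` -/
def FF (A : Type) [CommRing A] (N d : ℕ) : Submodule A (MvPolynomial (Fin N) A) where
  carrier := {p | ∀ α : Fin N →₀ ℕ, d ≤ α.degree → coeff α p = 0}
  zero_mem' := fun α _ => coeff_zero _
  add_mem' := fun {a b} ha hb α h => by rw [coeff_add, ha α h, hb α h, add_zero]
  smul_mem' := fun c a ha α h => by rw [coeff_smul, ha α h, smul_zero]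

lemma mem_FF {d : ℕ} {p : MvPolynomial (Fin N) A} :
    p ∈ FF A N d ↔ ∀ α : Fin N →₀ ℕ, d ≤ α.degree → coeff α p = 0 := Iff.rfl

lemma FF_mono {d e : ℕ} (h : d ≤ e) : FF A N d ≤ FF A N e := fun _ hp α hα => hp α (h.trans hα)

lemma FF_mul {d e : ℕ} {p q : MvPolynomial (Fin N) A} (hp : p ∈ FF A N d) (hq : q ∈ FF A N (e+1)) :
    p * q ∈ FF A N (d + e) := by
  classical
  intro α hα
  rw [coeff_mul]
  refine Finset.sum_eq_zero fun x hx => ?_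
  have hx := Finset.HasAntidiagonal.mem_antidiagonal.1 hx
  have : x.1.degree + x.2.degree = α.degree := by rw [← hx, map_add]
  by_cases h1 : d ≤ x.1.degree
  · rw [hp _ h1, zero_mul]
  · rw [hq _ (by omega), mul_zero]

lemma FF_monomial {d : ℕ} {α : Fin N →₀ ℕ} (h : α.degree < d) (c : A) : monomial α c ∈ FF A N d := by
  classical
  intro β hβ
  rw [coeff_monomial, if_neg]
  rintro rfl
  omega

lemma FF_zero : FF A N 0 = ⊥ := by
  rw [eq_bot_iff]
  intro p hp
  rw [Submodule.mem_bot]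
  ext α
  exact hp α (Nat.zero_le _)

lemma FF_le {d : ℕ} {M : Submodule A (MvPolynomial (Fin N) A)}
    (h : ∀ α : Fin N →₀ ℕ, α.degree < d → monomial α 1 ∈ M) : FF A N d ≤ M := by
  intro p hp
  rw [p.as_sum]
  refine Submodule.sum_mem _ fun α hα => ?_
  have : α.degree < d := by
    by_contra hh
    exact mem_support_iff.1 hα (hp α (by omega))
  rw [← mul_one (coeff α p), ← smul_eq_mul, ← smul_monomial]
  exact Submodule.smul_mem _ _ (h α this)

lemma finite_deg (N d : ℕ) : {α : Fin N →₀ ℕ | α.degree < d}.Finite := by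
  refine ((Set.finite_Iic (Finsupp.equivFunOnFinite.symm (fun _ : Fin N => d)))).subset ?_
  intro α hα i
  have : α.degree < d := hα
  have h2 := Finsupp.le_degree i α
  simp; omega

instance (N d : ℕ) : Finite {α : Fin N →₀ ℕ // α.degree < d} := finite_deg N d
instance (N d : ℕ) : Fintype {α : Fin N →₀ ℕ // α.degree < d} := Fintype.ofFinite _
instance (N d : ℕ) : Finite {α : Fin N →₀ ℕ // α.degree = d} :=
  (finite_deg N (d+1)).subset (fun α (hα : α.degree = d) => by
    change α.degree < d + 1; omega)
instance (N d : ℕ) : Fintype {α : Fin N →₀ ℕ // α.degree = d} := Fintype.ofFinite _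

instance (d : ℕ) : Module.Finite A (FF A N d) := by
  rw [Module.Finite.iff_fg]
  have : FF A N d = Submodule.span A ((fun α => monomial α 1) '' {α : Fin N →₀ ℕ | α.degree < d}) := by
    apply le_antisymm
    · exact FF_le fun α hα => Submodule.subset_span ⟨α, hα, rfl⟩
    · rw [Submodule.span_le]
      rintro _ ⟨α, hα, rfl⟩
      exact FF_monomial hα 1
  rw [this]
  exact Submodule.fg_span ((finite_deg N d).image _)

/-- remainder -/
def modw (w : Fin N → ℕ) (α : Fin N →₀ ℕ) : Fin N →₀ ℕ :=
  Finsupp.equivFunOnFinite.symm (fun i => α i % w i)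

@[simp] lemma modw_apply (w : Fin N → ℕ) (α : Fin N →₀ ℕ) (i) : modw w α i = α i % w i := rfl

/-- modified monomial -/
def pm (w : Fin N → ℕ) (G : Fin N → MvPolynomial (Fin N) A) (α : Fin N →₀ ℕ) :
    MvPolynomial (Fin N) A := monomial (modw w α) 1 * ∏ i, G i ^ (α i / w i)

lemma deg_split (w : Fin N → ℕ) (α : Fin N →₀ ℕ) :
    α.degree = (modw w α).degree + ∑ i, (α i / w i) * w i := by
  rw [Finsupp.degree_eq_sum, Finsupp.degree_eq_sum, ← Finset.sum_add_distrib]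
  refine Finset.sum_congr rfl fun i _ => ?_
  rw [modw_apply, mul_comm, Nat.mod_add_div]

/-- pairs with the same leading term -/
def Lead (d : ℕ) (p q : MvPolynomial (Fin N) A) : Prop :=
  p ∈ FF A N (d+1) ∧ q ∈ FF A N (d+1) ∧ p - q ∈ FF A N d

lemma Lead.mul {d e : ℕ} {p q p' q' : MvPolynomial (Fin N) A} (h : Lead d p q) (h' : Lead e p' q') :
    Lead (d+e) (p * p') (q * q') := by
  refine ⟨?_, ?_, ?_⟩
  · have := FF_mul h.1 h'.1
    convert this using 2; omega
  · have := FF_mul h.2.1 h'.2.1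
    convert this using 2; omega
  · have e1 : p * p' - q * q' = (p - q) * p' + (p' - q') * q := by ring
    rw [e1]
    refine add_mem (FF_mul h.2.2 h'.1) ?_
    rw [add_comm d e]
    exact FF_mul h'.2.2 h.2.1

lemma Lead.one : Lead 0 (1 : MvPolynomial (Fin N) A) 1 := by
  have : (1 : MvPolynomial (Fin N) A) ∈ FF A N 1 := FF_monomial (α := 0) (by simp) 1
  exact ⟨this, this, by simp⟩

lemma Lead.pow {d : ℕ} {p q : MvPolynomial (Fin N) A} (h : Lead d p q) (n : ℕ) :
    Lead (n * d) (p ^ n) (q ^ n) := by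
  induction n with
  | zero => simpa using Lead.one
  | succ n ih => rw [pow_succ, pow_succ, Nat.succ_mul]; exact ih.mul h

lemma Lead.prod {ι : Type} (s : Finset ι) (d : ι → ℕ) (p q : ι → MvPolynomial (Fin N) A)
    (h : ∀ i ∈ s, Lead (d i) (p i) (q i)) :
    Lead (∑ i ∈ s, d i) (∏ i ∈ s, p i) (∏ i ∈ s, q i) := by
  classical
  induction s using Finset.induction_on with
  | empty => simpa using Lead.one
  | insert a s ha ih =>
    rw [Finset.prod_insert ha, Finset.sum_insert ha, Finset.prod_insert ha]
    exact (h _ (by simp)).mul (ih fun i hi => h i (by simp [hi]))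

lemma Lead.pm {w : Fin N → ℕ} {G g : Fin N → MvPolynomial (Fin N) A}
    (h : ∀ i, Lead (w i) (G i) (g i)) (α : Fin N →₀ ℕ) : Lead α.degree (pm w G α) (pm w g α) := by
  rw [deg_split w α]
  refine Lead.mul ?_ (Lead.prod _ _ _ _ fun i _ => (h i).pow _)
  have : monomial (modw w α) (1:A) ∈ FF A N ((modw w α).degree + 1) := FF_monomial (by omega) 1
  exact ⟨this, this, by simp⟩

/-- The linear map -/
def Phi (w : Fin N → ℕ) (G : Fin N → MvPolynomial (Fin N) A) :
    MvPolynomial (Fin N) A →ₗ[A] MvPolynomial (Fin N) A :=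
  (basisMonomials (Fin N) A).constr A (pm w G)

@[simp] lemma Phi_monomial (w : Fin N → ℕ) (G : Fin N → MvPolynomial (Fin N) A) (α) :
    Phi w G (monomial α 1) = pm w G α := by
  have := (basisMonomials (Fin N) A).constr_basis A (pm w G) α
  rwa [coe_basisMonomials] at this

lemma Phi_mul (w : Fin N → ℕ) (hw : ∀ i, 0 < w i) (G : Fin N → MvPolynomial (Fin N) A) (i) (p) :
    Phi w G (X i ^ w i * p) = G i * Phi w G p := by
  induction p using MvPolynomial.induction_on' with
  | add p q hp hq => rw [mul_add, map_add, map_add, mul_add, hp, hq]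
  | monomial α c =>
    rw [show monomial α c = c • monomial α (1:A) by rw [smul_monomial, smul_eq_mul, mul_one], mul_smul_comm, map_smul, map_smul,
      mul_smul_comm, X_pow_eq_monomial, monomial_mul, one_mul, Phi_monomial, Phi_monomial]
    congr 1
    have h1 : modw w (Finsupp.single i (w i) + α) = modw w α := by
      ext j
      by_cases h : j = i
      · subst h; simp
      · simp [Finsupp.single_apply, Ne.symm h]
    rw [pm, pm, h1, mul_left_comm]
    congr 1
    have h2 : ∀ j, (Finsupp.single i (w i) + α) j / w j = (if j = i then 1 else 0) + α j / w j := by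
      intro j
      by_cases h : j = i
      · subst h; simp [Nat.add_div_left _ (hw j)]; omega
      · simp [Finsupp.single_apply, Ne.symm h, h]
    simp_rw [h2, pow_add, Finset.prod_mul_distrib]
    congr 1
    simp

lemma Phi_FF {w : Fin N → ℕ} {G : Fin N → MvPolynomial (Fin N) A}
    (h : ∀ i, G i ∈ FF A N (w i + 1)) (d : ℕ) : FF A N d ≤ (FF A N d).comap (Phi w G) := by
  refine FF_le fun α hα => ?_
  rw [Submodule.mem_comap, Phi_monomial]
  exact FF_mono hα ((Lead.pm (fun i => ⟨h i, h i, by simp⟩) α).1)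

/-- spanning in degree `< d` -/
def Spans (w : Fin N → ℕ) (G : Fin N → MvPolynomial (Fin N) A) (d : ℕ) : Prop :=
  FF A N d ≤ (FF A N d).map (Phi w G)

lemma Spans.lead {w : Fin N → ℕ} {G g : Fin N → MvPolynomial (Fin N) A}
    (h : ∀ i, Lead (w i) (G i) (g i)) (D : ℕ) (hs : ∀ d ≤ D, Spans w g d) :
    ∀ d ≤ D, Spans w G d := by
  intro d
  induction d with
  | zero => intro _; rw [Spans, FF_zero]; exact bot_le
  | succ d ih =>
    intro hd
    have ih := ih (by omega)
    have key : ∀ x ∈ FF A N (d+1), Phi w G x - Phi w g x ∈ FF A N d := by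
      intro x hx
      have : FF A N (d+1) ≤ (FF A N d).comap (Phi w G - Phi w g) := FF_le fun α hα => by
        rw [Submodule.mem_comap, LinearMap.sub_apply, Phi_monomial, Phi_monomial]
        exact FF_mono (by omega) (Lead.pm h α).2.2
      exact this hx
    intro p hp
    obtain ⟨x, hx, rfl⟩ := hs (d+1) hd hp
    obtain ⟨x', hx', he⟩ := ih (key x hx)
    refine ⟨x - x', sub_mem hx (FF_mono (by omega) hx'), ?_⟩
    rw [map_sub, he]; ring

lemma Spans.all {w : Fin N → ℕ} (hw : ∀ i, 0 < w i) {G : Fin N → MvPolynomial (Fin N) A}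
    (h : ∀ i, G i ∈ FF A N (w i + 1)) (hs : ∀ d ≤ (∑ i, w i) + 2, Spans w G d) :
    ∀ d, Spans w G d := by
  classical
  set D0 := ∑ i, w i with hD0
  -- the ideal part
  let J : ℕ → Submodule A (MvPolynomial (Fin N) A) := fun d =>
    Submodule.span A {x | ∃ i e, w i + e ≤ d ∧ ∃ q ∈ FF A N e, x = G i * q} ⊔ FF A N (d-1)
  have hJ1 : FF A N (D0 + 2) ≤ J (D0 + 2) := by
    refine (hs (D0+2) le_rfl).trans ?_
    rw [Submodule.map_le_iff_le_comap]
    refine FF_le fun α hα => ?_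
    rw [Submodule.mem_comap, Phi_monomial]
    by_cases hex : ∃ i, w i ≤ α i
    · obtain ⟨i, hi⟩ := hex
      have hle : Finsupp.single i (w i) ≤ α := by rwa [Finsupp.single_le_iff]
      have : monomial α (1:A) = X i ^ w i * monomial (α - Finsupp.single i (w i)) 1 := by
        rw [X_pow_eq_monomial, monomial_mul, one_mul, add_tsub_cancel_of_le hle]
      rw [← Phi_monomial, this, Phi_mul w hw]
      have hdeg : (α - Finsupp.single i (w i)).degree + w i = α.degree := by
        conv_rhs => rw [← tsub_add_cancel_of_le hle]
        rw [map_add, Finsupp.degree_single]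
      refine Submodule.mem_sup_left (Submodule.subset_span ⟨i, α.degree + 1 - w i, ?_, _,
        Phi_FF h _ (FF_monomial ?_ 1), rfl⟩) <;> omega
    · push Not at hex
      refine Submodule.mem_sup_right ?_
      refine FF_mono ?_ (Lead.pm (g := G) (fun i => ⟨h i, h i, by simp⟩) α).1
      have : α.degree ≤ D0 := by
        rw [Finsupp.degree_eq_sum, hD0]
        exact Finset.sum_le_sum fun i _ => (hex i).le
      omega
  have hJ : ∀ k, FF A N (D0 + 2 + k) ≤ J (D0 + 2 + k) := by
    intro k
    induction k with
    | zero => exact hJ1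
    | succ k ih =>
      refine FF_le fun α hα => ?_
      by_cases hα0 : α = 0
      · subst hα0
        refine Submodule.mem_sup_right (FF_monomial ?_ 1)
        simp
      obtain ⟨j, hj⟩ := Finsupp.support_nonempty_iff.2 hα0
      have hle : Finsupp.single j 1 ≤ α := by
        rw [Finsupp.single_le_iff]; have := Finsupp.mem_support_iff.1 hj; omega
      have e1 : monomial α (1:A) = X j * monomial (α - Finsupp.single j 1) 1 := by
        rw [X, monomial_mul, one_mul, add_tsub_cancel_of_le hle]
      have hdeg : (α - Finsupp.single j 1).degree + 1 = α.degree := by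
        conv_rhs => rw [← tsub_add_cancel_of_le hle]
        rw [map_add, Finsupp.degree_single]
      have hX : (X j : MvPolynomial (Fin N) A) ∈ FF A N (1 + 1) := FF_monomial (by simp) 1
      have h3 : J (D0 + 2 + k) ≤ (J (D0 + 2 + (k+1))).comap (LinearMap.mulLeft A (X j)) := by
        refine sup_le ?_ ?_
        · rw [Submodule.span_le]
          rintro _ ⟨i, e, he, q, hq, rfl⟩
          refine Submodule.mem_sup_left (Submodule.subset_span ⟨i, e + 1, by omega, q * X j,
            FF_mul hq hX, ?_⟩)
          simp; ring
        · intro q hq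
          refine Submodule.mem_sup_right ?_
          rw [LinearMap.mulLeft_apply, mul_comm]
          have := FF_mul hq hX
          refine FF_mono ?_ this
          omega
      rw [e1]
      exact h3 (ih (FF_monomial (by omega) 1))
  intro d
  induction d using Nat.strong_induction_on with
  | _ d ih =>
  by_cases hd : d ≤ D0 + 2
  · exact hs d hd
  obtain ⟨k, rfl⟩ : ∃ k, d = D0 + 2 + k := ⟨d - (D0 + 2), by omega⟩
  refine (hJ k).trans (sup_le ?_ ?_)
  · rw [Submodule.span_le]
    rintro _ ⟨i, e, he, q, hq, rfl⟩
    have hwi := hw i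
    obtain ⟨x, hx, rfl⟩ := ih e (by omega) hq
    refine ⟨X i ^ w i * x, ?_, Phi_mul w hw G i x⟩
    rw [mul_comm]
    have hX : (X i ^ w i : MvPolynomial (Fin N) A) ∈ FF A N (w i + 1) := by
      rw [X_pow_eq_monomial]; exact FF_monomial (by simp) 1
    exact FF_mono (by omega) (FF_mul hx hX)
  · refine (ih _ (by omega)).trans (Submodule.map_mono (FF_mono (by omega)))

lemma mem_FF_exists (p : MvPolynomial (Fin N) A) : ∃ d, p ∈ FF A N d := by
  classical
  refine ⟨p.support.sup Finsupp.degree + 1, fun α hα => ?_⟩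
  by_contra h
  have := Finset.le_sup (f := Finsupp.degree) (mem_support_iff.2 h)
  omega

lemma Phi_bijective {w : Fin N → ℕ} (hw : ∀ i, 0 < w i) {G g : Fin N → MvPolynomial (Fin N) A}
    (h : ∀ i, Lead (w i) (G i) (g i)) (hs : ∀ d ≤ (∑ i, w i) + 2, Spans w g d) :
    Function.Bijective (Phi w G) := by
  have hS := Spans.all hw (fun i => (h i).1) (Spans.lead h _ hs)
  constructor
  · rw [← LinearMap.ker_eq_bot, LinearMap.ker_eq_bot']
    intro p hp
    obtain ⟨d, hd⟩ := mem_FF_exists p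
    let f : FF A N d →ₗ[A] FF A N d := (Phi w G).restrict (Phi_FF (fun i => (h i).1) d)
    have hf : Function.Surjective f := by
      rintro ⟨q, hq⟩
      obtain ⟨x, hx, rfl⟩ := hS d hq
      exact ⟨⟨x, hx⟩, rfl⟩
    have hi := OrzechProperty.injective_of_surjective_endomorphism f hf
    have : f ⟨p, hd⟩ = f 0 := by
      rw [map_zero]; exact Subtype.ext hp
    exact congrArg Subtype.val (hi this)
  · intro q
    obtain ⟨d, hd⟩ := mem_FF_exists q
    obtain ⟨x, _, hx⟩ := hS d hd
    exact ⟨x, hx⟩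

end Filt

noncomputable section Dets
open MvPolynomial

variable {N : ℕ}

/-- generic forms -/
def gen (w : Fin N → ℕ) (i : Fin N) : MvPolynomial (Fin N) (MvPolynomial (IX N w) ℂ) :=
  ∑ α : {α : Fin N →₀ ℕ // α.degree = w i}, monomial α.1 (X ⟨i, α⟩)

/-- specialized forms -/
def spec (w : Fin N → ℕ) (x : IX N w → ℂ) (i : Fin N) : MvPolynomial (Fin N) ℂ :=
  ∑ α : {α : Fin N →₀ ℕ // α.degree = w i}, monomial α.1 (x ⟨i, α⟩)

lemma pm_map {A B : Type} [CommRing A] [CommRing B] (f : A →+* B) (w : Fin N → ℕ)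
    (G : Fin N → MvPolynomial (Fin N) A) (α) :
    map f (pm w G α) = pm w (fun i => map f (G i)) α := by
  simp [pm, map_prod]

lemma map_gen (w : Fin N → ℕ) (x : IX N w → ℂ) (i : Fin N) : map (eval x) (gen w i) = spec w x i := by
  simp [gen, spec]

/-- the matrices -/
def MM {A : Type} [CommRing A] (w : Fin N → ℕ) (G : Fin N → MvPolynomial (Fin N) A) (D : ℕ) :
    Matrix {α : Fin N →₀ ℕ // α.degree < D} {α : Fin N →₀ ℕ // α.degree < D} A :=
  Matrix.of fun α' α => coeff α'.1 (pm w G α.1)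

lemma MM_map {A B : Type} [CommRing A] [CommRing B] (f : A →+* B) (w : Fin N → ℕ)
    (G : Fin N → MvPolynomial (Fin N) A) (D : ℕ) :
    f.mapMatrix (MM w G D) = MM w (fun i => map f (G i)) D := by
  ext α β
  simp [MM, ← pm_map, coeff_map]

/-- discriminant -/
def Disc (w : Fin N → ℕ) : MvPolynomial (IX N w) ℂ :=
  ∏ D ∈ Finset.range ((∑ i, w i) + 3), (MM w (gen w) D).det

lemma eval_Disc (w : Fin N → ℕ) (x : IX N w → ℂ) :
    eval x (Disc w) = ∏ D ∈ Finset.range ((∑ i, w i) + 3), (MM w (spec w x) D).det := by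
  rw [Disc, map_prod]
  refine Finset.prod_congr rfl fun D _ => ?_
  rw [RingHom.map_det, MM_map]
  simp [map_gen]

lemma Disc_ne_zero (w : Fin N → ℕ) : Disc w ≠ 0 := by
  classical
  intro h
  let x : IX N w → ℂ := fun p => if p.2.1 = Finsupp.single p.1 (w p.1) then 1 else 0
  have hx : ∀ i, spec w x i = X i ^ w i := by
    intro i
    rw [spec, Finset.sum_eq_single ⟨Finsupp.single i (w i), by simp⟩]
    · simp [x, X_pow_eq_monomial]
    · rintro ⟨α, hα⟩ _ hne
      have : α ≠ Finsupp.single i (w i) := fun h => hne (Subtype.ext h)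
      simp [x, this]
    · simp
  have hpm : ∀ α, pm w (spec w x) α = monomial α 1 := by
    intro α
    have h1 : α = modw w α + ∑ i, Finsupp.single i (w i * (α i / w i)) := by
      ext i
      simp [Finsupp.single_apply, Nat.mod_add_div]
    conv_rhs => rw [h1]
    have h2 : monomial (modw w α + ∑ i, Finsupp.single i (w i * (α i / w i))) (1:ℂ) =
        monomial (modw w α) 1 * ∏ i, monomial (Finsupp.single i (w i * (α i / w i))) 1 := by
      rw [← monomial_sum_one, monomial_mul, one_mul]
    rw [pm, h2]
    congr 1
    refine Finset.prod_congr rfl fun i _ => ?_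
    rw [hx, ← pow_mul, X_pow_eq_monomial]
  have h1 := eval_Disc w x
  rw [h, map_zero] at h1
  have h2 : ∀ D, MM w (spec w x) D = 1 := by
    intro D
    ext α β
    simp [MM, hpm, coeff_monomial, Matrix.one_apply, Subtype.ext_iff, eq_comm]
  simp [h2] at h1

lemma spans_of_det {w : Fin N → ℕ} {g : Fin N → MvPolynomial (Fin N) ℂ}
    (hg : ∀ i, g i ∈ FF ℂ N (w i + 1)) {D : ℕ} (h : (MM w g D).det ≠ 0)
    {A : Type} [CommRing A] (f : ℂ →+* A) : Spans w (fun i => map f (g i)) D := by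
  classical
  refine FF_le fun α hα => ?_
  set M := MM w g D with hM
  have hMM : M * M⁻¹ = 1 := Matrix.mul_nonsing_inv _ (isUnit_iff_ne_zero.2 h)
  refine ⟨∑ β : {α : Fin N →₀ ℕ // α.degree < D}, monomial β.1 (f (M⁻¹ β ⟨α, hα⟩)), ?_, ?_⟩
  · exact Submodule.sum_mem _ fun β _ => FF_monomial β.2 _
  have e0 : ∀ β : {α : Fin N →₀ ℕ // α.degree < D}, pm w g β.1 =
      ∑ γ : {α : Fin N →₀ ℕ // α.degree < D}, monomial γ.1 (M γ β) := by
    intro β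
    have hmem : pm w g β.1 ∈ FF ℂ N D :=
      FF_mono β.2 (Lead.pm (g := g) (fun i => ⟨hg i, hg i, by simp⟩) β.1).1
    ext δ
    rw [coeff_sum]
    simp only [coeff_monomial]
    by_cases hδ : δ.degree < D
    · rw [Finset.sum_eq_single ⟨δ, hδ⟩]
      · simp [hM, MM]
      · intro b _ hb
        rw [if_neg]
        intro hh
        exact hb (Subtype.ext hh)
      · simp
    · rw [hmem δ (by omega), Finset.sum_eq_zero]
      intro b _
      rw [if_neg]
      rintro rfl
      exact hδ b.2
  have e1 : ∑ β : {α : Fin N →₀ ℕ // α.degree < D}, C (M⁻¹ β ⟨α, hα⟩) * pm w g β.1 =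
      monomial α 1 := by
    simp only [e0, Finset.mul_sum, C_mul_monomial]
    rw [Finset.sum_comm]
    have : ∀ γ : {α : Fin N →₀ ℕ // α.degree < D}, ∑ β : {α : Fin N →₀ ℕ // α.degree < D},
        monomial γ.1 (M⁻¹ β ⟨α, hα⟩ * M γ β) = monomial γ.1 ((M * M⁻¹) γ ⟨α, hα⟩) := by
      intro γ
      rw [← map_sum, Matrix.mul_apply]
      simp [mul_comm]
    simp only [this, hMM]
    rw [Finset.sum_eq_single ⟨α, hα⟩]
    · simp
    · intro b _ hb
      rw [Matrix.one_apply_ne hb, map_zero]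
    · simp
  have e2 := congrArg (map f) e1
  rw [map_sum, map_monomial, map_one] at e2
  rw [← e2, map_sum]
  refine Finset.sum_congr rfl fun β _ => ?_
  rw [show monomial β.1 (f (M⁻¹ β ⟨α, hα⟩)) = f (M⁻¹ β ⟨α, hα⟩) • monomial β.1 (1:A) by
    rw [smul_monomial, smul_eq_mul, mul_one], map_smul, Phi_monomial, map_mul, map_C, pm_map,
    smul_eq_C_mul]

/-- the translation -/
def psiv (v : Fin N → ℕ → ℂ) : MvPolynomial ℕ ℂ →ₐ[ℂ] MvPolynomial (Fin N) (MvPolynomial ℕ ℂ) :=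
  aeval (fun k => C (X k) + ∑ j : Fin N, C (C (v j k)) * X j)

lemma psiv_lead (v : Fin N → ℕ → ℂ) {f : MvPolynomial ℕ ℂ} {e : ℕ} (hf : f.IsHomogeneous e) :
    Lead e (psiv v f) (map C (subv v f)) := by
  let B := MvPolynomial (Fin N) (MvPolynomial ℕ ℂ)
  let M : ℕ → Submodule ℂ (B × B) := fun e =>
    { carrier := {p | Lead e p.1 p.2}
      zero_mem' := ⟨zero_mem _, zero_mem _, by simp⟩
      add_mem' := fun {a b} ha hb => ⟨add_mem ha.1 hb.1, add_mem ha.2.1 hb.2.1, by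
        have := add_mem ha.2.2 hb.2.2
        convert this using 1
        simp; ring⟩
      smul_mem' := fun c a ha => by
        have h1 : ∀ (c : ℂ) (x : B), c • x = (C c : MvPolynomial ℕ ℂ) • x := by
          intro c x
          rw [← algebraMap_eq, algebraMap_smul]
        refine ⟨?_, ?_, ?_⟩
        · rw [Prod.smul_fst, h1]; exact Submodule.smul_mem _ _ ha.1
        · rw [Prod.smul_snd, h1]; exact Submodule.smul_mem _ _ ha.2.1
        · rw [Prod.smul_fst, Prod.smul_snd, h1, h1, ← smul_sub]
          exact Submodule.smul_mem _ _ ha.2.2 }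
  have key := aeval_graded M Lead.one (fun i j a b ha hb => Lead.mul ha hb)
    (fun k => ((C (X k) + ∑ j : Fin N, C (C (v j k)) * X j : B),
      (∑ j : Fin N, C (C (v j k)) * X j : B))) (fun k => by
      have hs : (∑ j : Fin N, C (C (v j k)) * X j : B) ∈ FF (MvPolynomial ℕ ℂ) N (1+1) :=
        Submodule.sum_mem _ fun j _ => by
          rw [← smul_eq_C_mul]
          exact Submodule.smul_mem _ _ (FF_monomial (by simp) 1)
      have hc : (C (X k) : B) ∈ FF (MvPolynomial ℕ ℂ) N 1 := FF_monomial (α := 0) (by simp) _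
      exact ⟨add_mem (FF_mono (by omega) hc) hs, hs, by simpa using hc⟩) hf
  have e1 : ∀ f, aeval (fun k => ((C (X k) + ∑ j : Fin N, C (C (v j k)) * X j : B),
      (∑ j : Fin N, C (C (v j k)) * X j : B))) f = (psiv v f, map C (subv v f)) := by
    intro f
    induction f using MvPolynomial.induction_on with
    | C c => simp [algebraMap_eq, MvPolynomial.algebraMap_apply]; rfl
    | add p q hp hq => simp [hp, hq]
    | mul_X p i hp => rw [map_mul, hp]; simp [psiv, subv]
  rw [e1] at key
  exact key

theorem exists_bij {w : Fin N → ℕ} (hw : ∀ i, 0 < w i)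
    (a : Fin N → ℕ → MvPolynomial ℕ ℂ)
    (ha : ∀ i n, (a i n).IsHomogeneous (w i)) (hI : IndF (HG ℕ) (fun i => mkG (a i)) w) :
    ∀ᶠ n in UF, ∃ v : Fin N → ℕ → ℂ, Function.Bijective (Phi w (fun i => psiv v (a i n))) := by
  filter_upwards [exists_generic hw a ha hI (Disc w) (Disc_ne_zero w)] with n hn
  obtain ⟨v, hv⟩ := hn
  refine ⟨v, ?_⟩
  have hsub : ∀ i, (subv v (a i n)).IsHomogeneous (w i) := by
    intro i
    have := aeval_graded (homogeneousSubmodule (Fin N) ℂ) ((mem_homogeneousSubmodule _ _).2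
      (isHomogeneous_one _ _)) (fun i j a b ha hb => by
      rw [mem_homogeneousSubmodule] at *; exact ha.mul hb)
      (fun k => ∑ j : Fin N, C (v j k) * X j)
      (fun k => by
        rw [mem_homogeneousSubmodule]
        exact IsHomogeneous.sum _ _ _ fun j _ => (isHomogeneous_X _ _).C_mul _) (ha i n)
    rwa [mem_homogeneousSubmodule] at this
  have hspec : ∀ i, spec w (fun p : IX N w => coeff p.2.1 (subv v (a p.1 n))) i = subv v (a i n) := by
    classical
    intro i
    ext δ
    rw [spec, coeff_sum]
    simp only [coeff_monomial]
    by_cases hδ : δ.degree = w i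
    · rw [Finset.sum_eq_single ⟨δ, hδ⟩]
      · simp
      · intro b _ hb
        rw [if_neg]
        intro hh
        exact hb (Subtype.ext hh)
      · simp
    · rw [(hsub i).coeff_eq_zero hδ, Finset.sum_eq_zero]
      intro b _
      rw [if_neg]
      rintro rfl
      exact hδ b.2
  rw [eval_Disc, Finset.prod_ne_zero_iff] at hv
  refine Phi_bijective hw (fun i => psiv_lead v (ha i n)) fun d hd => ?_
  have := hv d (Finset.mem_range.2 (by omega))
  rw [show spec w (fun p : IX N w => coeff p.2.1 (subv v (a p.1 n))) = fun i => subv v (a i n) from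
    _root_.funext hspec] at this
  refine spans_of_det (fun i => ?_) this C
  intro α hα
  exact (hsub i).coeff_eq_zero (by omega)
end Dets

noncomputable section EqF
open MvPolynomial

/-- syzygies -/
def SyzS {A M : Type} [CommRing A] [CommRing M] (f : A →+* M) {l : ℕ} (a : Fin l → A) :
    Submodule M (Fin l → M) :=
  Submodule.span M {y | ∃ b : Fin l → A, ∑ i, a i * b i = 0 ∧ y = fun i => f (b i)}

/-- equational flatness -/
def EqFlat {A M : Type} [CommRing A] [CommRing M] (f : A →+* M) : Prop :=
  ∀ (l : ℕ) (a : Fin l → A) (x : Fin l → M), ∑ i, f (a i) * x i = 0 → x ∈ SyzS f a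

lemma SyzS_map {A M M' : Type} [CommRing A] [CommRing M] [CommRing M'] (f : A →+* M) (g : M →+* M')
    {l : ℕ} (a : Fin l → A) {x : Fin l → M} (hx : x ∈ SyzS f a) :
    (fun i => g (x i)) ∈ SyzS (g.comp f) a := by
  refine Submodule.span_induction (p := fun x _ => (fun i => g (x i)) ∈ SyzS (g.comp f) a)
    ?_ ?_ ?_ ?_ hx
  · rintro _ ⟨b, hb, rfl⟩
    exact Submodule.subset_span ⟨b, hb, rfl⟩
  · simp only [Pi.zero_apply, map_zero]; exact zero_mem _
  · intro x y _ _ h1 h2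
    simp only [Pi.add_apply, map_add]; exact add_mem h1 h2
  · intro c x _ h
    simp only [Pi.smul_apply, smul_eq_mul, map_mul]
    exact Submodule.smul_mem _ (g c) h

lemma EqFlat.comp {A M M' : Type} [CommRing A] [CommRing M] [CommRing M'] {f : A →+* M} {g : M →+* M'}
    (hf : EqFlat f) (hg : EqFlat g) : EqFlat (g.comp f) := by
  intro l a x hx
  have := hg l (fun i => f (a i)) x hx
  refine Submodule.span_induction (p := fun x _ => x ∈ SyzS (g.comp f) a)
    ?_ ?_ ?_ ?_ this
  · rintro _ ⟨b, hb, rfl⟩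
    exact SyzS_map f g a (hf l a b hb)
  · exact zero_mem _
  · intro x y _ _ h1 h2
    exact add_mem h1 h2
  · intro c x _ h
    exact Submodule.smul_mem _ c h

lemma EqFlat.retract {A M M' : Type} [CommRing A] [CommRing M] [CommRing M'] {f : A →+* M}
    {g : M →+* M'} (h : EqFlat (g.comp f)) (ρ : M' →+* M) (hρ : ∀ x, ρ (g x) = x) : EqFlat f := by
  intro l a x hx
  have h1 := h l a (fun i => g (x i)) (by
    rw [← map_zero g, ← hx, map_sum]; simp)
  have h2 := SyzS_map (g.comp f) ρ a h1
  simp only [hρ] at h2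
  convert h2 using 2
  ext x
  simp [hρ]

lemma EqFlat_iff {A M : Type} [CommRing A] [CommRing M] (f : A →+* M) : EqFlat f ↔ f.Flat := by
  let := f.toAlgebra
  have hs : ∀ a (x : M), a • x = f a * x := fun a x => rfl
  change _ ↔ Module.Flat A M
  rw [Module.Flat.iff_forall_isTrivialRelation]
  constructor
  · intro h l a x hx
    have := h l a x (by simpa [hs] using hx)
    rw [SyzS, Submodule.mem_span_set'] at this
    obtain ⟨n, c, g, rfl⟩ := this
    choose b hb hb' using fun i => (g i).2
    refine ⟨n, fun i j => b j i, c, fun i => ?_, hb⟩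
    rw [Finset.sum_apply]
    refine Finset.sum_congr rfl fun j _ => ?_
    rw [Pi.smul_apply, hb' j, hs, smul_eq_mul, mul_comm]
  · intro h l a x hx
    obtain ⟨n, b, y, h1, h2⟩ := h (f := a) (x := x) (by simpa [hs] using hx)
    have : x = ∑ j, y j • (fun i => f (b i j)) := by
      ext i
      rw [h1, Finset.sum_apply]
      refine Finset.sum_congr rfl fun j _ => ?_
      rw [Pi.smul_apply, hs, smul_eq_mul, mul_comm]
    rw [this]
    exact Submodule.sum_mem _ fun j _ => Submodule.smul_mem _ _ (Submodule.subset_span ⟨_, h2 j, rfl⟩)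

attribute [local instance] Polynomial.algebra in
lemma EqFlat.poly {A M : Type} [CommRing A] [CommRing M] {f : A →+* M} (hf : EqFlat f) :
    EqFlat (Polynomial.mapRingHom f) := by
  rw [EqFlat_iff] at *
  let := f.toAlgebra
  exact RingHom.Flat.isStableUnderBaseChange A M (Polynomial A) (Polynomial M) hf

lemma EqFlat.of_field {A M : Type} [CommRing A] [CommRing M] (f : A →+* M) (h : IsField A) :
    EqFlat f := (EqFlat_iff f).2 (RingHom.Flat.of_isField h f)

lemma EqFlat.of_bij {A M : Type} [CommRing A] [CommRing M] (f : A →+* M)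
    (h : Function.Bijective f) : EqFlat f := (EqFlat_iff f).2 (RingHom.Flat.of_bijective h)

end EqF

noncomputable section Nagata
open MvPolynomial Nat List

/-- Nagata map -/
def TT (k : Type) [CommRing k] {n : ℕ} (r : Fin (n+1) → ℕ) (c : k) :
    MvPolynomial (Fin (n + 1)) k →ₐ[k] MvPolynomial (Fin (n + 1)) k :=
  aeval fun i ↦ if i = 0 then X 0 else X i + c • X 0 ^ r i

lemma TT_X (k : Type) [CommRing k] {n : ℕ} (r : Fin (n+1) → ℕ) (c : k) (i) :
    TT k r c (X i) = if i = 0 then X 0 else X i + c • X 0 ^ r i := by simp [TT]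

lemma TT_comp (k : Type) [CommRing k] {n : ℕ} (r : Fin (n+1) → ℕ) (c : k) :
    (TT k r c).comp (TT k r (-c)) = AlgHom.id _ _ := by
  rw [TT, TT, comp_aeval, ← MvPolynomial.aeval_X_left]
  ext i v
  cases i using Fin.cases <;> simp

lemma TT_TT (k : Type) [CommRing k] {n : ℕ} (r : Fin (n+1) → ℕ) (x) :
    TT k r 1 (TT k r (-1) x) = x := DFunLike.congr_fun (TT_comp k r 1) x

lemma TT_TT' (k : Type) [CommRing k] {n : ℕ} (r : Fin (n+1) → ℕ) (x) :
    TT k r (-1) (TT k r 1 x) = x := by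
  have := DFunLike.congr_fun (TT_comp k r (-1)) x
  rwa [neg_neg] at this

variable {k : Type} [Field k] {n : ℕ} (f : MvPolynomial (Fin (n + 1)) k)
variable (v w : Fin (n + 1) →₀ ℕ)

/-- exponents -/
def rr (i : Fin (n+1)) : ℕ := (2 + f.totalDegree) ^ i.1

lemma rr_zero : rr f 0 = 1 := by simp [rr]

variable {f v} in
lemma lt_up (vlt : ∀ i, v i < 2 + f.totalDegree) : ∀ l ∈ ofFn v, l < 2 + f.totalDegree := by
  grind

lemma sum_rr_mul_ne (vlt : ∀ i, v i < 2 + f.totalDegree) (wlt : ∀ i, w i < 2 + f.totalDegree) (ne : v ≠ w) :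
    ∑ x : Fin (n + 1), rr f x * v x ≠ ∑ x : Fin (n + 1), rr f x * w x := by
  intro h
  refine ne <| Finsupp.ext <| congrFun <| ofFn_inj.mp ?_
  apply ofDigits_inj_of_len_eq (Nat.lt_add_right f.totalDegree one_lt_two)
    (by simp) (lt_up vlt) (lt_up wlt)
  simpa only [ofDigits_eq_sum_mapIdx, mapIdx_eq_ofFn, get_ofFn, length_ofFn,
    Fin.val_cast, mul_comm, sum_ofFn, rr] using! h

lemma degreeOf_zero_tt {a : k} (ha : a ≠ 0) : ((TT k (rr f) 1) (monomial v a)).degreeOf 0 =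
    ∑ i : Fin (n + 1), (rr f i) * v i := by
  rw [← natDegree_finSuccEquiv, monomial_eq, Finsupp.prod_pow v fun a ↦ X a]
  simp only [Fin.prod_univ_succ, Fin.sum_univ_succ, map_mul, map_prod, map_pow,
    TT, MvPolynomial.aeval_C, MvPolynomial.aeval_X, if_pos, Fin.succ_ne_zero,
    ite_false, one_smul, map_add, finSuccEquiv_X_zero, finSuccEquiv_X_succ, algebraMap_eq]
  have h (i : Fin n) :
      (Polynomial.C (X (R := k) i) + Polynomial.X ^ rr f i.succ) ^ v i.succ ≠ 0 :=
    pow_ne_zero (v i.succ) (Polynomial.leadingCoeff_ne_zero.mp <| by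
      rw [add_comm, Polynomial.leadingCoeff_X_pow_add_C (by simp [rr])]; exact one_ne_zero)
  rw [Polynomial.natDegree_mul (by simp [ha]) (mul_ne_zero (by simp) (Finset.prod_ne_zero_iff.mpr
    (fun i _ ↦ h i))), Polynomial.natDegree_mul (by simp) (Finset.prod_ne_zero_iff.mpr (fun i _ ↦ h i)),
    Polynomial.natDegree_prod _ _ (fun i _ ↦ h i), natDegree_finSuccEquiv, degreeOf_C]
  simpa only [Polynomial.natDegree_pow, zero_add, Polynomial.natDegree_X, mul_one, rr_zero, pow_zero, one_mul,
    add_right_inj] using Finset.sum_congr rfl (fun i _ ↦ by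
    rw [add_comm (Polynomial.C _), Polynomial.natDegree_X_pow_add_C, mul_comm])

lemma degreeOf_tt_ne_of_ne (hv : v ∈ f.support) (hw : w ∈ f.support) (ne : v ≠ w) :
    (TT k (rr f) 1 <| monomial v <| coeff v f).degreeOf 0 ≠
    (TT k (rr f) 1 <| monomial w <| coeff w f).degreeOf 0 := by
  rw [degreeOf_zero_tt _ _ <| mem_support_iff.mp hv, degreeOf_zero_tt _ _ <| mem_support_iff.mp hw]
  refine sum_rr_mul_ne f v w (fun i ↦ ?_) (fun i ↦ ?_) ne <;>
  exact lt_of_le_of_lt ((monomial_le_degreeOf i ‹_›).trans (degreeOf_le_totalDegree f i))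
    (by lia)

lemma leadingCoeff_finSuccEquiv_tt :
    (finSuccEquiv k n ((TT k (rr f) 1) ((monomial v) (coeff v f)))).leadingCoeff =
    algebraMap k _ (coeff v f) := by
  rw [monomial_eq, Finsupp.prod_fintype]
  · simp only [map_mul, map_prod, Polynomial.leadingCoeff_mul, Polynomial.leadingCoeff_prod]
    rw [algHom_C, algebraMap_eq, finSuccEquiv_apply,
      eval₂Hom_C, RingHom.coe_comp]
    simp only [Function.comp_apply, Polynomial.leadingCoeff_C, map_pow,
      Polynomial.leadingCoeff_pow, algebraMap_eq]
    have : ∀ j, ((finSuccEquiv k n) (TT k (rr f) 1 (X j))).leadingCoeff = 1 := fun j ↦ by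
      by_cases h : j = 0
      · simp [h, finSuccEquiv_apply, TT]
      · rw [TT_X, if_neg h, one_smul, map_add, map_pow]
        obtain ⟨i, rfl⟩ := Fin.exists_succ_eq.mpr h
        rw [finSuccEquiv_X_succ, finSuccEquiv_X_zero, add_comm,
          Polynomial.leadingCoeff_X_pow_add_C (by simp [rr])]
    simp only [this, one_pow, Finset.prod_const_one, mul_one]
  exact fun i ↦ pow_zero _

lemma TT_leadingcoeff_isUnit (fne : f ≠ 0) :
    IsUnit (finSuccEquiv k n (TT k (rr f) 1 f)).leadingCoeff := by
  obtain ⟨v, vin, vs⟩ := Finset.exists_max_image f.support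
    (fun v ↦ (TT k (rr f) 1 ((monomial v) (coeff v f))).degreeOf 0) (support_nonempty.mpr fne)
  set h := fun w ↦ (MvPolynomial.monomial w) (coeff w f)
  simp only [← natDegree_finSuccEquiv] at vs
  replace vs : ∀ x ∈ f.support \ {v}, (finSuccEquiv k n ((TT k (rr f) 1) (h x))).degree <
      (finSuccEquiv k n ((TT k (rr f) 1) (h v))).degree := by
    intro x hx
    obtain ⟨h1, h2⟩ := Finset.mem_sdiff.mp hx
    apply Polynomial.degree_lt_degree <| lt_of_le_of_ne (vs x h1) ?_
    simpa only [natDegree_finSuccEquiv]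
      using degreeOf_tt_ne_of_ne f _ _ h1 vin <| ne_of_not_mem_cons h2
  have coeff : (finSuccEquiv k n ((TT k (rr f) 1) (h v + ∑ x ∈ f.support \ {v}, h x))).leadingCoeff =
      (finSuccEquiv k n ((TT k (rr f) 1) (h v))).leadingCoeff := by
    simp only [map_add, map_sum]
    rw [add_comm]
    apply Polynomial.leadingCoeff_add_of_degree_lt <| (lt_of_le_of_lt <| Polynomial.degree_sum_le _ _) ?_
    have h2 : h v ≠ 0 := by simpa [h] using mem_support_iff.mp vin
    replace h2 : (finSuccEquiv k n ((TT k (rr f) 1) (h v))) ≠ 0 := fun eq ↦ h2 <| by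
      rw [map_eq_zero_iff _ (AlgEquiv.injective _)] at eq
      rw [← TT_TT' k (rr f) (h v), eq, map_zero]
    exact (Finset.sup_lt_iff <| Ne.bot_lt (fun x ↦ h2 <| Polynomial.degree_eq_bot.mp x)).mpr vs
  nth_rw 2 [← f.support_sum_monomial_coeff]
  rw [Finset.sum_eq_add_sum_sdiff_singleton_of_mem vin h]
  rw [leadingCoeff_finSuccEquiv_tt] at coeff
  simpa only [coeff, algebraMap_eq] using (mem_support_iff.mp vin).isUnit.map MvPolynomial.C

end Nagata

noncomputable section GermPoly
open Polynomial

variable {B : Type} [CommRing B]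

/-- polynomials over germs -/
def iot (B : Type) [CommRing B] : (GG B)[X] →+* GG B[X] :=
  eval₂RingHom (gmap fun _ => Polynomial.C) (mkG fun _ => X)

lemma iot_monomial (i : ℕ) (a : ℕ → B) : iot B (monomial i (mkG a)) = mkG fun n => monomial i (a n) := by
  rw [iot, coe_eval₂RingHom, eval₂_monomial, gmap_mkG, ← map_pow, ← map_mul]
  congr 1
  ext1 n
  simp [C_mul_X_pow_eq_monomial]

lemma iot_bdd (x : ℕ → B[X]) (d : ℕ) (h : ∀ᶠ n in UF, (x n).natDegree < d) :
    mkG x = iot B (∑ i ∈ Finset.range d, monomial i (mkG fun n => (x n).coeff i)) := by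
  rw [map_sum]
  simp only [iot_monomial]
  rw [← map_sum, mkG_eq]
  filter_upwards [h] with n hn
  rw [Finset.sum_apply]
  exact Polynomial.as_sum_range' _ _ hn

lemma iot_eq (p : (GG B)[X]) : iot B p =
    mkG (fun n => ∑ i ∈ Finset.range (p.natDegree + 1), monomial i (rep (p.coeff i) n)) := by
  conv_lhs => rw [p.as_sum_range]
  rw [map_sum]
  conv_lhs =>
    enter [2, i]
    rw [← mkG_rep (p.coeff i), iot_monomial]
  rw [← map_sum]
  congr 1
  ext1 n
  rw [Finset.sum_apply]

lemma iot_inj : Function.Injective (iot B) := by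
  rw [injective_iff_map_eq_zero]
  intro p hp
  rw [iot_eq, mkG_eq_zero] at hp
  ext i
  rw [coeff_zero]
  by_cases hi : i < p.natDegree + 1
  · rw [← mkG_rep (p.coeff i), mkG_eq_zero]
    filter_upwards [hp] with n hn
    have := congrArg (fun q => coeff q i) hn
    simpa [finsetSum_coeff, coeff_monomial, hi] using this
  · exact coeff_eq_zero_of_natDegree_lt (by omega)

lemma iot_bound (p : (GG B)[X]) : ∃ x : ℕ → B[X], iot B p = mkG x ∧ ∀ n, (x n).natDegree ≤ p.natDegree := by
  refine ⟨_, iot_eq p, fun n => ?_⟩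
  refine natDegree_sum_le_of_forall_le _ _ fun i hi => ?_
  exact (natDegree_monomial_le _).trans (by simpa [Nat.lt_succ_iff] using hi)

lemma iot_monic [Nontrivial B] {p : (GG B)[X]} (hp : p.Monic) : ∃ g : ℕ → B[X], iot B p = mkG g ∧ ∀ n, (g n).Monic := by
  refine ⟨fun n => X ^ p.natDegree + ∑ i ∈ Finset.range p.natDegree, monomial i (rep (p.coeff i) n),
    ?_, fun n => ?_⟩
  · rw [iot_eq, mkG_eq]
    have : mkG (rep (p.coeff p.natDegree)) = mkG 1 := by
      rw [mkG_rep, map_one]; exact hp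
    filter_upwards [mkG_eq.1 this] with n hn
    rw [Finset.sum_range_succ, hn, add_comm, Pi.one_apply, X_pow_eq_monomial]
  · refine monic_X_pow_add ?_
    refine (degree_sum_le _ _).trans_lt ?_
    rw [Finset.sup_lt_iff (WithBot.bot_lt_coe _)]
    intro i hi
    refine (degree_monomial_le _ _).trans_lt ?_
    exact_mod_cast Finset.mem_range.1 hi

lemma iot_div [Nontrivial B] {g : (GG B)[X]} (hg : g.Monic) (x : GG B[X]) :
    ∃ q r, x = iot B g * q + iot B r := by
  obtain ⟨γ, h1, h2⟩ := iot_monic hg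
  obtain ⟨a, rfl⟩ := mkG_surj x
  obtain ⟨γ', h1', h2'⟩ := iot_bound g
  have h3 : ∀ᶠ n in UF, γ n = γ' n := mkG_eq.1 (h1.symm.trans h1')
  have := iot_bdd (fun n => a n %ₘ γ n) (g.natDegree + 1) (by
    filter_upwards [h3] with n hn
    have h4 := h2' n
    have := natDegree_modByMonic_le (a n) (h2 n)
    rw [hn] at this ⊢
    omega)
  refine ⟨mkG fun n => a n /ₘ γ n,
    ∑ i ∈ Finset.range (g.natDegree + 1), monomial i (mkG fun n => (a n %ₘ γ n).coeff i), ?_⟩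
  rw [← this, h1, ← map_mul, ← map_add]
  congr 1
  ext1 n
  simp only [Pi.add_apply, Pi.mul_apply]
  rw [add_comm, modByMonic_add_div]

lemma iot_of_mul [Nontrivial B] {g : (GG B)[X]} (hg : g.Monic) (y : GG B[X]) (h : (GG B)[X])
    (hy : iot B g * y = iot B h) : ∃ p, y = iot B p := by
  obtain ⟨γ, h1, h2⟩ := iot_monic hg
  obtain ⟨a, rfl⟩ := mkG_surj y
  obtain ⟨η, h1', h2'⟩ := iot_bound h
  rw [h1, h1', ← map_mul, mkG_eq] at hy
  refine ⟨_, iot_bdd a (h.natDegree + 1) ?_⟩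
  filter_upwards [hy] with n hn
  by_cases h0 : a n = 0
  · simp [h0]
  have := congrArg natDegree hn
  rw [Pi.mul_apply, (h2 n).natDegree_mul' h0] at this
  have := h2' n
  omega

lemma syz_monic [Nontrivial B] {A : Type} [CommRing A] {f : A →+* GG B} (hf : EqFlat f)
    {l : ℕ} (a : Fin l → A[X]) (i0 : Fin l) (c : A[X]) (hc : (c * a i0).Monic)
    (x : Fin l → GG B[X]) (hx : ∑ i, iot B (mapRingHom f (a i)) * x i = 0) :
    x ∈ SyzS ((iot B).comp (mapRingHom f)) a := by
  classical
  set μ := (iot B).comp (mapRingHom f) with hμ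
  set g := mapRingHom f (c * a i0) with hg
  have hgm : g.Monic := hc.map f
  choose q r hqr using fun i => iot_div hgm (x i)
  have key : ∀ i, (fun j => q i * (μ (c * a i0) * (if j = i then 1 else 0) -
      μ (c * a i) * (if j = i0 then 1 else 0))) ∈ SyzS μ a := by
    intro i
    refine Submodule.smul_mem _ (q i) (Submodule.subset_span
      ⟨fun j => c * a i0 * (if j = i then 1 else 0) - c * a i * (if j = i0 then 1 else 0), ?_, ?_⟩)
    · simp [mul_sub, Finset.sum_sub_distrib]
      ring
    · ext j
      simp only [map_sub, map_mul]
      congr 2 <;> split_ifs <;> simp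
  set y : Fin l → GG B[X] := fun j => x j - ∑ i, q i * (μ (c * a i0) * (if j = i then 1 else 0) -
      μ (c * a i) * (if j = i0 then 1 else 0)) with hy
  have hμg : μ (c * a i0) = iot B g := rfl
  have hys : ∑ i, μ (a i) * y i = 0 := by
    have : ∑ i, μ (a i) * y i = ∑ i, μ (a i) * x i - ∑ i, ∑ j, μ (a j) * (q i * (μ (c * a i0) * (if j = i then 1 else 0) -
      μ (c * a i) * (if j = i0 then 1 else 0))) := by
      rw [Finset.sum_comm, ← Finset.sum_sub_distrib]
      refine Finset.sum_congr rfl fun i _ => ?_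
      rw [hy, mul_sub, Finset.mul_sum]
    rw [this]
    rw [show ∑ i, μ (a i) * x i = 0 from hx, zero_sub, neg_eq_zero]
    refine Finset.sum_eq_zero fun i _ => ?_
    simp [mul_sub, Finset.sum_sub_distrib]
    ring
  have hyr : ∀ j, j ≠ i0 → y j = iot B (r j) := by
    intro j hj
    simp only [hy, hj, if_false, mul_zero, sub_zero]
    simp only [mul_ite, mul_one, mul_zero, Finset.sum_ite_eq, Finset.mem_univ, if_true]
    rw [hqr j, hμg]
    ring
  have hy0 : ∃ p, y i0 = iot B p := by
    refine iot_of_mul hgm _ (- ∑ j ∈ Finset.univ.erase i0, mapRingHom f (c * a j) * r j) ?_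
    rw [← Finset.add_sum_erase _ _ (Finset.mem_univ i0)] at hys
    have h2 := congrArg (fun z => μ c * z) hys
    simp only [mul_zero, mul_add, Finset.mul_sum, ← mul_assoc, ← map_mul] at h2
    rw [← hμg, eq_neg_of_add_eq_zero_left h2, map_neg, map_sum, neg_inj]
    refine Finset.sum_congr rfl fun j hj => ?_
    rw [hyr j (Finset.ne_of_mem_erase hj), map_mul (iot B)]
    rfl
  have hyall : ∀ j, ∃ p, y j = iot B p := by
    intro j
    by_cases h : j = i0
    · rw [h]; exact hy0
    · exact ⟨_, hyr j h⟩
  choose p hp using hyall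
  have hymem : y ∈ SyzS μ a := by
    have h1 := hf.poly l a p (by
      apply iot_inj
      rw [map_zero, ← hys, map_sum]
      refine Finset.sum_congr rfl fun i _ => ?_
      rw [hp, map_mul]; rfl)
    have h2 := SyzS_map _ (iot B) a h1
    rw [show y = fun i => iot B (p i) from funext hp]
    exact h2
  have : x = y + ∑ i, fun j => q i * (μ (c * a i0) * (if j = i then 1 else 0) -
      μ (c * a i) * (if j = i0 then 1 else 0)) := by
    ext j
    simp [hy]
  rw [this]
  exact add_mem hymem (Submodule.sum_mem _ fun i _ => key i)
end GermPoly

noncomputable section FlatInd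
open MvPolynomial

variable (R : Type) [CommRing R] [Algebra ℂ R]

/-- The map from polynomials over `KK` to germs of polynomials -/
def tht (N : ℕ) : MvPolynomial (Fin N) KK →+* GG (MvPolynomial (Fin N) R) :=
  eval₂Hom (gmap fun _ => algebraMap ℂ (MvPolynomial (Fin N) R)) (fun i => mkG fun _ => X i)

lemma tht_C (N : ℕ) (c : ℕ → ℂ) : tht R N (C (mkG c)) = mkG fun n => C (algebraMap ℂ R (c n)) := by
  simp [tht, MvPolynomial.algebraMap_apply]

lemma tht_X (N : ℕ) (i : Fin N) : tht R N (X i) = mkG fun n => X i := by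
  simp [tht]

lemma hom_ext_KK {σ S : Type} [CommRing S] {f g : MvPolynomial σ KK →+* S}
    (hC : ∀ c : ℕ → ℂ, f (C (mkG c)) = g (C (mkG c))) (hX : ∀ i, f (X i) = g (X i)) : f = g := by
  refine MvPolynomial.ringHom_ext (fun c => ?_) hX
  obtain ⟨c, rfl⟩ := mkG_surj c
  exact hC c

lemma sq1 (N : ℕ) (r : Fin (N+1) → ℕ) :
    (gmap fun _ => (TT R r 1).toRingHom).comp (tht R (N+1)) =
      (tht R (N+1)).comp (TT KK r 1).toRingHom := by
  refine hom_ext_KK (fun c => ?_) fun i => ?_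
  · simp [tht_C, TT]
  · simp only [RingHom.comp_apply, tht_X, gmap_mkG, AlgHom.toRingHom_eq_coe, RingHom.coe_coe, TT_X]
    split_ifs with h
    · rw [tht_X]
    · rw [one_smul, one_smul, map_add, map_pow, tht_X, tht_X, ← map_pow, ← map_add]
      congr 1

lemma sq2 (N : ℕ) :
    (gmap fun _ => (finSuccEquiv R N).toRingEquiv.toRingHom).comp (tht R (N+1)) =
      ((iot _).comp (Polynomial.mapRingHom (tht R N))).comp (finSuccEquiv KK N).toRingEquiv.toRingHom := by
  have hC : ∀ a : ℕ → MvPolynomial (Fin N) R, iot _ (Polynomial.C (mkG a)) = mkG fun n => Polynomial.C (a n) :=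
    fun a => iot_monomial 0 a
  have hX : iot (MvPolynomial (Fin N) R) Polynomial.X = mkG fun n => Polynomial.X := by
    simp [iot]
  refine hom_ext_KK (fun c => ?_) fun i => ?_
  · simp only [RingHom.comp_apply, tht_C, gmap_mkG, RingEquiv.toRingHom_eq_coe, RingHom.coe_coe, 
      AlgEquiv.coe_ringEquiv]
    have h1 : ∀ (k : Type) [CommRing k] (c : k), finSuccEquiv k N (C c) = Polynomial.C (C c) := by
      intro k _ c
      rw [← algebraMap_eq, AlgEquiv.commutes]; rfl
    rw [h1, Polynomial.coe_mapRingHom, Polynomial.map_C, tht_C, hC]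
    simp only [h1]
  · simp only [RingHom.comp_apply, tht_X, gmap_mkG, RingEquiv.toRingHom_eq_coe, RingHom.coe_coe, 
      AlgEquiv.coe_ringEquiv]
    cases i using Fin.cases with
    | zero => simp [finSuccEquiv_X_zero, hX]
    | succ i => simp [finSuccEquiv_X_succ, tht_X, hC]

lemma SyzS_transport {A A' M M' : Type} [CommRing A] [CommRing A'] [CommRing M] [CommRing M']
    (f : A →+* M) (g : A' →+* M') (e : A →+* A') (e' : A' →+* A) (E : M →+* M') (E' : M' →+* M)
    (he : ∀ x, e (e' x) = x) (hee : ∀ x, e' (e x) = x) (hE : ∀ x, E' (E x) = x)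
    (h : ∀ x, E (f x) = g (e x)) {l : ℕ} (a : Fin l → A) (x : Fin l → M)
    (hx : (fun i => E (x i)) ∈ SyzS g (fun i => e (a i))) : x ∈ SyzS f a := by
  have h1 := SyzS_map g E' _ hx
  simp only [hE] at h1
  refine Submodule.span_mono ?_ h1
  rintro _ ⟨b, hb, rfl⟩
  refine ⟨fun i => e' (b i), ?_, ?_⟩
  · have := congrArg e' hb
    simpa [map_sum, hee] using this
  · ext i
    rw [← hE (f (e' (b i))), h, he]; rfl

theorem tht_flat [Nontrivial R] (N : ℕ) : EqFlat (tht R N) := by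
  induction N with
  | zero =>
    refine EqFlat.of_field _ ?_
    exact (MvPolynomial.isEmptyRingEquiv KK (Fin 0)).toMulEquiv.isField (Field.toIsField KK)
  | succ N ih =>
    classical
    intro l a x hx
    by_cases h0 : ∀ i, a i = 0
    · have : x = ∑ i, x i • (fun j => tht R (N+1) (if j = i then 1 else 0)) := by
        ext j
        simp [Finset.sum_apply, apply_ite (tht R (N+1))]
      rw [this]
      refine Submodule.sum_mem _ fun i _ => Submodule.smul_mem _ _ (Submodule.subset_span ⟨_, ?_, rfl⟩)
      simp [h0]
    push Not at h0
    obtain ⟨i0, h0⟩ := h0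
    have hu := TT_leadingcoeff_isUnit (a i0) h0
    set r := rr (a i0)
    let e : MvPolynomial (Fin (N+1)) KK →+* _ :=
      (finSuccEquiv KK N).toRingEquiv.toRingHom.comp (TT KK r 1).toRingHom
    let e' : _ →+* MvPolynomial (Fin (N+1)) KK :=
      (TT KK r (-1)).toRingHom.comp (finSuccEquiv KK N).symm.toRingEquiv.toRingHom
    let E : GG (MvPolynomial (Fin (N+1)) R) →+* _ :=
      (gmap fun _ => (finSuccEquiv R N).toRingEquiv.toRingHom).comp
      (gmap fun _ => (TT R r 1).toRingHom)
    let E' : _ →+* GG (MvPolynomial (Fin (N+1)) R) :=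
      (gmap fun _ => (TT R r (-1)).toRingHom).comp
      (gmap fun _ => (finSuccEquiv R N).symm.toRingEquiv.toRingHom)
    have hcomm : ∀ x, E (tht R (N+1) x) = ((iot _).comp (Polynomial.mapRingHom (tht R N))) (e x) := by
      intro x
      have h1 := DFunLike.congr_fun (sq1 R N r) x
      have h2 := DFunLike.congr_fun (sq2 R N) (TT KK r 1 x)
      simp only [RingHom.comp_apply] at h1 h2 ⊢
      simp only [E, e, RingHom.comp_apply]
      rw [h1]
      exact h2
    refine SyzS_transport _ _ e e' E E' ?_ ?_ ?_ hcomm a x ?_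
    · intro x
      simp [e, e', TT_TT]
    · intro x
      simp [e, e', TT_TT']
    · intro x
      obtain ⟨x, rfl⟩ := mkG_surj x
      simp [E, E', TT_TT']
    · obtain ⟨u, hu⟩ := hu
      refine syz_monic ih (fun i => e (a i)) i0 (Polynomial.C (↑u⁻¹)) ?_ _ ?_
      · have h3 : e (a i0) = finSuccEquiv KK N (TT KK r 1 (a i0)) := rfl
        rw [h3]
        rw [Polynomial.Monic, Polynomial.leadingCoeff_C_mul_of_isUnit u⁻¹.isUnit, ← hu, Units.inv_mul]
      · have := congrArg E hx
        rw [map_zero, map_sum] at this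
        rw [← this]
        refine Finset.sum_congr rfl fun i _ => ?_
        rw [map_mul, hcomm]; rfl
end FlatInd

noncomputable section FreeG
open MvPolynomial

variable {A : Type} [CommRing A] {N : ℕ}

/-- scaled exponent -/
def mw (w : Fin N → ℕ) (γ : Fin N →₀ ℕ) : Fin N →₀ ℕ :=
  Finsupp.equivFunOnFinite.symm fun i => w i * γ i

@[simp] lemma mw_apply (w : Fin N → ℕ) (γ : Fin N →₀ ℕ) (i) : mw w γ i = w i * γ i := rfl

/-- divided exponent -/
def dw (w : Fin N → ℕ) (γ : Fin N →₀ ℕ) : Fin N →₀ ℕ :=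
  Finsupp.equivFunOnFinite.symm fun i => γ i / w i

@[simp] lemma dw_apply (w : Fin N → ℕ) (γ : Fin N →₀ ℕ) (i) : dw w γ i = γ i / w i := rfl

/-- exponent from the box -/
def bx {w : Fin N → ℕ} (β : ∀ i : Fin N, Fin (w i)) : Fin N →₀ ℕ :=
  Finsupp.equivFunOnFinite.symm fun i => (β i : ℕ)

@[simp] lemma bx_apply {w : Fin N → ℕ} (β : ∀ i : Fin N, Fin (w i)) (i) : bx β i = β i := rfl

lemma bx_inj {w : Fin N → ℕ} {β β' : ∀ i : Fin N, Fin (w i)} (h : bx β = bx β') : β = β' := by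
  funext i
  exact Fin.ext (DFunLike.congr_fun h i)

lemma aevalXw (w : Fin N → ℕ) (γ : Fin N →₀ ℕ) (c : A) :
    aeval (fun i => (X i ^ w i : MvPolynomial (Fin N) A)) (monomial γ c) = monomial (mw w γ) c := by
  rw [aeval_monomial, monomial_eq, Finsupp.prod_fintype _ _ (by simp), Finsupp.prod_fintype _ _ (by simp)]
  simp [← pow_mul, algebraMap_eq]

/-- coordinate extraction -/
def LL (A : Type) [CommRing A] (w : Fin N → ℕ) (β : ∀ i : Fin N, Fin (w i)) :
    MvPolynomial (Fin N) A →ₗ[A] MvPolynomial (Fin N) A := by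
  classical
  exact (basisMonomials (Fin N) A).constr A (fun α => if modw w α = bx β then monomial (dw w α) 1 else 0)

open Classical in
lemma LL_monomial (w : Fin N → ℕ) (β : ∀ i : Fin N, Fin (w i)) (α) (c : A) :
    LL A w β (monomial α c) = if modw w α = bx β then monomial (dw w α) c else 0 := by
  have := (basisMonomials (Fin N) A).constr_basis A
    (fun α => if modw w α = bx β then (monomial (dw w α) 1 : MvPolynomial (Fin N) A) else 0) α
  rw [coe_basisMonomials] at this
  rw [show monomial α c = c • monomial α (1:A) by rw [smul_monomial, smul_eq_mul, mul_one], map_smul]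
  rw [LL, this]
  split_ifs <;> simp [smul_monomial]

open Classical in
lemma LL_mul (w : Fin N → ℕ) (β β' : ∀ i : Fin N, Fin (w i)) (q : MvPolynomial (Fin N) A) :
    LL A w β (monomial (bx β') 1 * aeval (fun i => (X i ^ w i : MvPolynomial (Fin N) A)) q) =
      if β' = β then q else 0 := by
  induction q using MvPolynomial.induction_on' with
  | add p q hp hq => rw [map_add, mul_add, map_add, hp, hq]; split_ifs <;> simp
  | monomial γ c =>
    rw [aevalXw, monomial_mul, one_mul, LL_monomial]
    have h1 : modw w (bx β' + mw w γ) = bx β' := by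
      ext i
      simp [Nat.mod_eq_of_lt (β' i).2]
    have h2 : dw w (bx β' + mw w γ) = γ := by
      ext i
      have : 0 < w i := (β' i).pos
      simp [Nat.add_mul_div_left _ _ this, Nat.div_eq_of_lt (β' i).2]
    rw [h1, h2]
    by_cases h : β' = β
    · simp [h]
    · rw [if_neg h, if_neg (fun hh => h (bx_inj hh))]

lemma Phi_aeval (w : Fin N → ℕ) (hw : ∀ i, 0 < w i) (G : Fin N → MvPolynomial (Fin N) A)
    (β : ∀ i : Fin N, Fin (w i)) (q : MvPolynomial (Fin N) A) :
    Phi w G (monomial (bx β) 1 * aeval (fun i => (X i ^ w i : MvPolynomial (Fin N) A)) q) =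
      monomial (bx β) 1 * aeval G q := by
  induction q using MvPolynomial.induction_on with
  | C c =>
    rw [← algebraMap_eq, AlgHom.commutes, AlgHom.commutes, mul_comm, ← Algebra.smul_def, map_smul,
      Phi_monomial]
    congr 1
    have h1 : modw w (bx β) = bx β := by
      ext i
      simp [Nat.mod_eq_of_lt (β i).2]
    rw [pm, h1]
    have : ∀ i, (β i : ℕ) / w i = 0 := fun i => Nat.div_eq_of_lt (β i).2
    simp [this]
  | add p q hp hq => rw [map_add, mul_add, map_add, hp, hq, map_add, mul_add]
  | mul_X p i hp =>
    rw [map_mul (aeval _), aeval_X, mul_comm _ (X i ^ w i), mul_left_comm, Phi_mul w hw, hp,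
      map_mul (aeval _), aeval_X]
    ring

lemma box_inj {w : Fin N → ℕ} (hw : ∀ i, 0 < w i) {G : Fin N → MvPolynomial (Fin N) A}
    (h : Function.Bijective (Phi w G)) (u : (∀ i : Fin N, Fin (w i)) → MvPolynomial (Fin N) A)
    (hu : ∑ β, monomial (bx β) 1 * aeval G (u β) = 0) (β) : u β = 0 := by
  classical
  rw [Finset.sum_congr rfl fun β _ => (Phi_aeval w hw G β (u β)).symm] at hu
  rw [← map_sum] at hu
  have h1 := h.1 (hu.trans (map_zero _).symm)
  have h2 := congrArg (LL A w β) h1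
  rw [map_sum, map_zero] at h2
  simp only [LL_mul] at h2
  simpa using h2

lemma box_surj {w : Fin N → ℕ} (hw : ∀ i, 0 < w i) {G : Fin N → MvPolynomial (Fin N) A}
    (h : Function.Bijective (Phi w G)) (p : MvPolynomial (Fin N) A) :
    ∃ u : (∀ i : Fin N, Fin (w i)) → MvPolynomial (Fin N) A,
      p = ∑ β, monomial (bx β) 1 * aeval G (u β) := by
  classical
  obtain ⟨p, rfl⟩ := h.2 p
  suffices hs : ∃ u : (∀ i : Fin N, Fin (w i)) → MvPolynomial (Fin N) A, Phi w G p = ∑ β,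
      Phi w G (monomial (bx β) 1 * aeval (fun i => (X i ^ w i : MvPolynomial (Fin N) A)) (u β)) by
    obtain ⟨u, hu⟩ := hs
    refine ⟨u, ?_⟩
    rw [hu]
    exact Finset.sum_congr rfl fun β _ => Phi_aeval w hw G β (u β)
  induction p using MvPolynomial.induction_on' with
  | add p q hp hq =>
    obtain ⟨u, hu⟩ := hp
    obtain ⟨u', hu'⟩ := hq
    refine ⟨u + u', ?_⟩
    rw [map_add, hu, hu', ← Finset.sum_add_distrib]
    refine Finset.sum_congr rfl fun β _ => ?_
    rw [Pi.add_apply, map_add, mul_add, map_add]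
  | monomial α c =>
    refine ⟨Pi.single (fun i => ⟨α i % w i, Nat.mod_lt _ (hw i)⟩) (monomial (dw w α) c), ?_⟩
    rw [Finset.sum_eq_single (fun i => ⟨α i % w i, Nat.mod_lt _ (hw i)⟩)]
    · rw [Pi.single_eq_same, aevalXw, monomial_mul, one_mul]
      have h5 : α = bx (fun i => (⟨α i % w i, Nat.mod_lt _ (hw i)⟩ : Fin (w i))) + mw w (dw w α) := by
        refine Finsupp.ext fun i => ?_
        simp [Nat.mod_add_div]
      rw [← h5]
    · intro b _ hb
      rw [Pi.single_eq_of_ne hb]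
      simp
    · simp

theorem germ_free_flat {w : Fin N → ℕ} (hw : ∀ i, 0 < w i) (G : ℕ → Fin N → MvPolynomial (Fin N) A)
    (h : ∀ᶠ n in UF, Function.Bijective (Phi w (G n))) :
    EqFlat (gmap fun n => (aeval (G n) : MvPolynomial (Fin N) A →ₐ[A] _).toRingHom) := by
  classical
  intro l a x hx
  set f := gmap fun n => (aeval (G n) : MvPolynomial (Fin N) A →ₐ[A] _).toRingHom with hf
  choose α hα using fun i => mkG_surj (a i)
  choose ξ hξ using fun i => mkG_surj (x i)
  have h1 : ∀ i n, ∃ u : (∀ i : Fin N, Fin (w i)) → MvPolynomial (Fin N) A,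
      Function.Bijective (Phi w (G n)) → ξ i n = ∑ β, monomial (bx β) 1 * aeval (G n) (u β) := by
    intro i n
    by_cases hh : Function.Bijective (Phi w (G n))
    · obtain ⟨u, hu⟩ := box_surj hw hh (ξ i n)
      exact ⟨u, fun _ => hu⟩
    · exact ⟨0, fun h => (hh h).elim⟩
  choose u hu using h1
  have h2 : ∀ β, ∑ i, a i * mkG (fun n => u i n β) = 0 := by
    intro β
    simp only [← hα, ← map_mul]
    rw [← map_sum, mkG_eq_zero]
    simp only [← hα, ← hξ, hf, gmap_mkG, ← map_mul] at hx
    rw [← map_sum, mkG_eq_zero] at hx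
    filter_upwards [hx, h] with n hn hb
    simp only [Finset.sum_apply, Pi.mul_apply] at hn ⊢
    refine box_inj hw hb (fun β => ∑ i, α i n * u i n β) ?_ β
    rw [← hn]
    simp only [map_sum, Finset.mul_sum]
    rw [Finset.sum_comm]
    refine Finset.sum_congr rfl fun i _ => ?_
    rw [hu i n hb, Finset.mul_sum]
    refine Finset.sum_congr rfl fun β _ => ?_
    rw [map_mul, mul_left_comm]
    rfl
  have h3 : x = ∑ β : (∀ i : Fin N, Fin (w i)), mkG (fun _ => (monomial (bx β) 1 : MvPolynomial (Fin N) A)) •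
      (fun i => f (mkG (fun n => u i n β))) := by
    ext i
    rw [← hξ]
    simp only [Finset.sum_apply, Pi.smul_apply, smul_eq_mul, hf, gmap_mkG, ← map_mul]
    rw [← map_sum, mkG_eq]
    filter_upwards [h] with n hb
    rw [hu i n hb, Finset.sum_apply]
    rfl
  rw [h3]
  exact Submodule.sum_mem _ fun β _ => Submodule.smul_mem _ _ (Submodule.subset_span ⟨_, h2 β, rfl⟩)

lemma constantCoeff_psiv (v : Fin N → ℕ → ℂ) (f : MvPolynomial ℕ ℂ) : constantCoeff (psiv v f) = f := by
  induction f using MvPolynomial.induction_on with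
  | C c => rw [← algebraMap_eq, AlgHom.commutes, MvPolynomial.algebraMap_apply, constantCoeff_C]
  | add p q hp hq => rw [map_add, map_add, hp, hq]
  | mul_X p i hp => rw [map_mul, map_mul, hp]; simp [psiv]

theorem flat_fin {w : Fin N → ℕ} (hw : ∀ i, 0 < w i) (a : Fin N → ℕ → MvPolynomial ℕ ℂ)
    (ha : ∀ i n, (a i n).IsHomogeneous (w i)) (hI : IndF (HG ℕ) (fun i => mkG (a i)) w) :
    EqFlat (aeval (fun i => mkG (a i)) : MvPolynomial (Fin N) KK →ₐ[KK] GG (MvPolynomial ℕ ℂ)).toRingHom := by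
  classical
  have h1 : ∀ n, ∃ v : Fin N → ℕ → ℂ, (∃ v, Function.Bijective (Phi w (fun i => psiv v (a i n)))) →
      Function.Bijective (Phi w (fun i => psiv v (a i n))) := by
    intro n
    by_cases hh : ∃ v, Function.Bijective (Phi w (fun i => psiv v (a i n)))
    · obtain ⟨v, hv⟩ := hh
      exact ⟨v, fun _ => hv⟩
    · exact ⟨0, fun h => (hh h).elim⟩
  choose v hv using h1
  refine EqFlat.retract (g := gmap fun n => (psiv (v n)).toRingHom) ?_ (gmap fun _ => constantCoeff) ?_
  · have key := (tht_flat (MvPolynomial ℕ ℂ) N).comp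
      (germ_free_flat hw (fun n i => psiv (v n) (a i n)) (by
        filter_upwards [exists_bij hw a ha hI] with n hn
        exact hv n hn))
    convert key using 1
    refine hom_ext_KK (fun c => ?_) fun i => ?_
    · simp only [RingHom.comp_apply, tht_C, gmap_mkG, AlgHom.toRingHom_eq_coe, RingHom.coe_coe]
      rw [← algebraMap_eq, AlgHom.commutes, algebraMapG, gmap_mkG]
      congr 1
      ext1 n
      simp only [AlgHom.toRingHom_eq_coe, RingHom.coe_coe, AlgHom.commutes]
      rw [← algebraMap_eq, AlgHom.commutes]
      rfl
    · simp [tht_X]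
  · intro x
    obtain ⟨x, rfl⟩ := mkG_surj x
    simp [constantCoeff_psiv]

theorem flat_any {E : Type} {w : E → ℕ} {y : E → GG (MvPolynomial ℕ ℂ)} (hw : ∀ i, 0 < w i)
    (hy : ∀ i, y i ∈ HG ℕ (w i)) (hI : IndF (HG ℕ) y w) :
    EqFlat (aeval y : MvPolynomial E KK →ₐ[KK] GG (MvPolynomial ℕ ℂ)).toRingHom := by
  classical
  intro l a x hx
  let s : Finset E := Finset.univ.biUnion fun i => (a i).vars
  let κ : Fin s.card → E := fun i => (s.equivFin.symm i : E)
  have hκ : Function.Injective κ := Subtype.val_injective.comp s.equivFin.symm.injective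
  have h1 : ∀ i, ∃ b, rename κ b = a i := by
    intro i
    obtain ⟨q, hq⟩ := exists_rename_eq_of_vars_subset_range (a i) κ hκ (by
      intro j hj
      have : j ∈ s := Finset.mem_biUnion.2 ⟨i, Finset.mem_univ _, hj⟩
      exact ⟨s.equivFin ⟨j, this⟩, by simp [κ]⟩)
    exact ⟨q, hq⟩
  choose b hb using h1
  choose c hc hc' using fun i => mem_HG.1 (hy (κ i))
  have hI' : IndF (HG ℕ) (fun i => mkG (c i)) (fun i => w (κ i)) := by
    intro e
    have h2 := hI e
    rw [show (fun i => mkG (c i)) = fun i => y (κ i) from _root_.funext fun i => (hc' i).symm]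
    exact LinearIndependent.comp h2 (fun i : {i | w (κ i) = e} => (⟨κ i.1, i.2⟩ : {i | w i = e}))
      (fun i j h => Subtype.ext (hκ (by simpa using h)))
  have key := flat_fin (fun i => hw (κ i)) c (fun i n => hc i n) hI'
  have he : ∀ p : MvPolynomial (Fin s.card) KK, aeval y (rename κ p) = aeval (fun i => mkG (c i)) p := by
    intro p
    rw [aeval_rename]
    congr 2
    exact _root_.funext hc'
  have h3 := key l b x (by
    rw [← hx]
    refine Finset.sum_congr rfl fun i _ => ?_
    congr 1
    simp [← he, hb])
  refine Submodule.span_mono ?_ h3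
  rintro _ ⟨d, hd, rfl⟩
  refine ⟨fun i => rename κ (d i), ?_, ?_⟩
  · have := congrArg (rename κ) hd
    simpa [hb] using this
  · ext i
    simp [← he]
end FreeG

noncomputable section Chain
open MvPolynomial

/-- increasing chain -/
def JJ {A : Type} [CommRing A] (I : Ideal A) (c : ℕ → A) : ℕ → Ideal A
  | 0 => I
  | i + 1 => JJ I c i ⊔ Ideal.span {c i}

/-- prepend -/
def pre {A : Type} (x : A) (c : ℕ → A) : ℕ → A
  | 0 => x
  | i + 1 => c i

lemma JJ_pre {A : Type} [CommRing A] (I : Ideal A) (x : A) (c : ℕ → A) (i : ℕ) :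
    JJ I (pre x c) (i + 1) = JJ (I ⊔ Ideal.span {x}) c i := by
  induction i with
  | zero => rfl
  | succ i ih => rw [JJ, ih]; rfl

lemma JJ_map {A B : Type} [CommRing A] [CommRing B] (f : A →+* B) (I : Ideal A) (c : ℕ → A)
    (i : ℕ) : JJ (I.map f) (fun i => f (c i)) i = (JJ I c i).map f := by
  induction i with
  | zero => rfl
  | succ i ih => rw [JJ, ih, JJ, Ideal.map_sup, Ideal.map_span, Set.image_singleton]

lemma JJ_chain {A : Type} [CommRing A] (I : Ideal A) (c : ℕ → A) (l : ℕ) (h : JJ I c l = ⊤) :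
    IsChainL (JJ I c) c l :=
  ⟨fun _ _ => ⟨le_sup_left, le_rfl⟩, h⟩

/-- prime-type step -/
def PrimeStep {A : Type} [CommRing A] (J : Ideal A) (c : A) : Prop :=
  ∃ p : Ideal A, p.IsPrime ∧ ∀ a, a * c ∈ J ↔ a ∈ p

lemma exists_chain {A : Type} [CommRing A] [IsNoetherianRing A] (I : Ideal A) :
    ∃ l c, JJ I c l = ⊤ ∧ ∀ i < l, PrimeStep (JJ I c i) (c i) := by
  induction I using WellFoundedGT.induction with
  | ind I ih =>
    by_cases hI : I = ⊤
    · exact ⟨0, fun _ => 0, hI, by simp⟩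
    have := Submodule.Quotient.nontrivial_iff.mpr hI
    obtain ⟨p, hp⟩ := associatedPrimes.nonempty A (A ⧸ I)
    rw [AssociatedPrimes.mem_iff, isAssociatedPrime_iff] at hp
    obtain ⟨hp, x, hx⟩ := hp
    obtain ⟨x, rfl⟩ := Ideal.Quotient.mk_surjective x
    have key : ∀ a, a * x ∈ I ↔ a ∈ p := by
      intro a
      rw [hx, Submodule.mem_colon_singleton, Submodule.mem_bot, ← Ideal.Quotient.eq_zero_iff_mem,
        map_mul]
      rfl
    have hxI : x ∉ I := fun h => hp.ne_top (by
      rw [Ideal.eq_top_iff_one, ← key]; simpa using h)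
    obtain ⟨l, c, h1, h2⟩ := ih (I ⊔ Ideal.span {x}) (by
      refine lt_of_le_of_ne le_sup_left fun h => hxI ?_
      rw [h]
      exact Ideal.mem_sup_right (Ideal.mem_span_singleton_self x))
    refine ⟨l + 1, pre x c, by rw [JJ_pre, h1], fun i hi => ?_⟩
    cases i with
    | zero => exact ⟨p, hp, key⟩
    | succ i => rw [JJ_pre]; exact h2 i (by omega)

lemma PrimeStep.mapC {A σ : Type} [CommRing A] {J : Ideal A} {c : A} (h : PrimeStep J c) :
    PrimeStep (J.map (C : A →+* MvPolynomial σ A)) (C c) := by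
  obtain ⟨p, hp, hc⟩ := h
  refine ⟨p.map C, ?_, fun a => ?_⟩
  · have : p.map (C : A →+* MvPolynomial σ A) =
        RingHom.ker (MvPolynomial.map (σ := σ) (Ideal.Quotient.mk p)) := by
      rw [MvPolynomial.ker_map, Ideal.mk_ker]
    rw [this]
    exact RingHom.ker_isPrime _
  · simp only [MvPolynomial.mem_map_C_iff, mul_comm a (C c), coeff_C_mul, mul_comm c, hc]

lemma flat_step {A M : Type} [CommRing A] [CommRing M] {φ : A →+* M} (hφ : EqFlat φ)
    {J : Ideal A} {c : A} (h : PrimeStep J c) (P : A) :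
    P * c ∈ J ∨ ∀ x, φ (P * c) * x ∈ J.map φ → φ c * x ∈ J.map φ := by
  obtain ⟨p, hp, hc⟩ := h
  by_cases hP : P * c ∈ J
  · exact Or.inl hP
  refine Or.inr fun x hx => ?_
  obtain ⟨n, f, g, hfg⟩ := Submodule.mem_span_set'.1 hx
  choose a ha hga using fun i => (g i).2
  have h0 : ∑ i, φ ((Fin.cons (P * c) a : Fin (n+1) → A) i) * (Fin.cons x (fun i => - f i) : Fin (n+1) → M) i = 0 := by
    rw [Fin.sum_univ_succ]
    simp only [Fin.cons_zero, Fin.cons_succ, hga, ← hfg, smul_eq_mul, mul_neg, Finset.sum_neg_distrib]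
    rw [← sub_eq_add_neg, sub_eq_zero]
    exact Finset.sum_congr rfl fun i _ => mul_comm _ _
  have := hφ _ _ _ h0
  have key : ∀ v ∈ SyzS φ (Fin.cons (P * c) a : Fin (n+1) → A), φ c * v 0 ∈ J.map φ := by
    intro v hv
    induction hv using Submodule.span_induction with
    | mem v hv =>
      obtain ⟨b, hb, rfl⟩ := hv
      rw [Fin.sum_univ_succ] at hb
      simp only [Fin.cons_zero, Fin.cons_succ] at hb
      have h1 : b 0 * P * c ∈ J := by
        have : b 0 * P * c = - ∑ i, a i * b (Fin.succ i) := by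
          rw [← add_eq_zero_iff_eq_neg, ← hb]; ring
        rw [this]
        exact neg_mem (sum_mem fun i _ => J.mul_mem_right _ (ha i))
      rw [hc] at h1
      rcases hp.mem_or_mem h1 with h1 | h1
      · rw [← map_mul, mul_comm]
        exact Ideal.mem_map_of_mem _ ((hc _).2 h1)
      · exact absurd ((hc _).2 h1) hP
    | zero => simp
    | add u v _ _ hu hv => rw [Pi.add_apply, mul_add]; exact add_mem hu hv
    | smul r v _ hv =>
      rw [Pi.smul_apply, smul_eq_mul, mul_left_comm]
      exact Ideal.mul_mem_left _ _ hv
  simpa using key _ this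

lemma mem_sup_singleton {A : Type} [CommRing A] (I : Ideal A) (x g : A) :
    g ∈ I ⊔ Ideal.span {x} ↔ ∃ a, g - a * x ∈ I := by
  rw [Submodule.mem_sup]
  constructor
  · rintro ⟨y, hy, z, hz, rfl⟩
    obtain ⟨a, rfl⟩ := Ideal.mem_span_singleton'.1 hz
    exact ⟨a, by simpa using hy⟩
  · rintro ⟨a, ha⟩
    exact ⟨_, ha, _, Ideal.mem_span_singleton'.2 ⟨a, rfl⟩, by ring⟩

lemma germ_mem {R : Type} [CommRing R] {k : ℕ} (Q : ℕ → Fin k → R) (γ : ℕ → ℕ → R) (i : ℕ) :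
    ∀ g : ℕ → R, mkG g ∈ JJ (Ideal.span (Set.range fun j => mkG fun m => Q m j)) (fun i => mkG (γ i)) i ↔
      ∀ᶠ m in UF, g m ∈ JJ (Ideal.span (Set.range (Q m))) (fun i => γ i m) i := by
  classical
  induction i with
  | zero =>
    intro g
    simp only [JJ, Ideal.mem_span_range_iff_exists_fun]
    constructor
    · rintro ⟨c, hc⟩
      choose b hb using fun j => mkG_surj (c j)
      simp only [← hb, ← map_mul, ← map_sum] at hc
      filter_upwards [mkG_eq.1 hc] with m hm
      exact ⟨fun j => b j m, by rw [← hm]; simp⟩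
    · intro h
      have : ∀ m, ∃ c : Fin k → R, (∃ c : Fin k → R, ∑ j, c j * Q m j = g m) → ∑ j, c j * Q m j = g m := by
        intro m
        by_cases hm : ∃ c : Fin k → R, ∑ j, c j * Q m j = g m
        · exact ⟨hm.choose, fun _ => hm.choose_spec⟩
        · exact ⟨0, fun h => absurd h hm⟩
      choose c hc using this
      refine ⟨fun j => mkG fun m => c m j, ?_⟩
      simp only [← map_mul, ← map_sum]
      rw [mkG_eq]
      filter_upwards [h] with m hm
      rw [← hc m hm]; simp
  | succ i ih =>
    intro g
    simp only [JJ, mem_sup_singleton]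
    constructor
    · rintro ⟨a, ha⟩
      obtain ⟨a, rfl⟩ := mkG_surj a
      rw [← map_mul, ← map_sub, ih] at ha
      filter_upwards [ha] with m hm
      exact ⟨a m, hm⟩
    · intro h
      have : ∀ m, ∃ a : R, (∃ a : R, g m - a * γ i m ∈ JJ (Ideal.span (Set.range (Q m))) (fun i => γ i m) i) → g m - a * γ i m ∈ JJ (Ideal.span (Set.range (Q m))) (fun i => γ i m) i := by
        intro m
        by_cases hm : ∃ a : R, g m - a * γ i m ∈ JJ (Ideal.span (Set.range (Q m))) (fun i => γ i m) i
        · exact ⟨hm.choose, fun _ => hm.choose_spec⟩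
        · exact ⟨0, fun h => absurd h hm⟩
      choose a ha using this
      refine ⟨mkG a, ?_⟩
      rw [← map_mul, ← map_sub, ih]
      filter_upwards [h] with m hm
      exact ha m hm

end Chain

noncomputable section Final
open MvPolynomial

/-- splitting variables -/
def epsS {E : Type} (s : Set E) [DecidablePred (· ∈ s)] (K : Type) [Field K] :
    MvPolynomial {x // ¬ x ∈ s} (MvPolynomial {x // x ∈ s} K) ≃ₐ[K] MvPolynomial E K :=
  (sumAlgEquiv K {x // ¬ x ∈ s} {x // x ∈ s}).symm.trans
    (renameEquiv K ((Equiv.sumComm _ _).trans (Equiv.sumCompl (· ∈ s))))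

lemma epsS_C {E : Type} (s : Set E) [DecidablePred (· ∈ s)] (K : Type) [Field K]
    (q : MvPolynomial {x // x ∈ s} K) : epsS s K (C q) = rename Subtype.val q := by
  induction q using MvPolynomial.induction_on with
  | C a => simp [epsS]
  | add p q hp hq => simp only [map_add, hp, hq]
  | mul_X p i hp =>
    rw [map_mul, map_mul, hp, map_mul]
    congr 1
    simp [epsS]

lemma germ_setup {k : ℕ} (Q : Fin k → GG (MvPolynomial ℕ ℂ)) (hQ : ∀ j, ∃ e, Q j ∈ HG ℕ e) :
    ∃ (l : ℕ) (c : ℕ → GG (MvPolynomial ℕ ℂ)), JJ (Ideal.span (Set.range Q)) c l = ⊤ ∧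
      ∀ i < l, ∀ e, ∀ P ∈ HG ℕ e, P * c i ∈ JJ (Ideal.span (Set.range Q)) c i ∨
        ∀ x, P * (c i * x) ∈ JJ (Ideal.span (Set.range Q)) c i →
          c i * x ∈ JJ (Ideal.span (Set.range Q)) c i := by
  classical
  obtain ⟨E, w, y, hw, hy, hI, hgen⟩ := (enoughG ℕ).exists_gen
  have hflat := flat_any hw hy hI
  have hq : ∀ j, ∃ F : MvPolynomial E KK, aeval y F = Q j := fun j => by
    obtain ⟨e, he⟩ := hQ j
    obtain ⟨F, -, hF⟩ := hgen e _ he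
    exact ⟨F, hF⟩
  choose q hq using hq
  let s : Set E := ((Finset.univ.biUnion fun j => (q j).vars : Finset E) : Set E)
  have hs : s.Finite := Finset.finite_toSet _
  have : Finite {x // x ∈ s} := hs
  have hq' : ∀ j, ∃ F : MvPolynomial {x // x ∈ s} KK, rename Subtype.val F = q j := fun j => by
    refine exists_rename_eq_of_vars_subset_range (q j) Subtype.val Subtype.val_injective ?_
    rw [Subtype.range_coe]
    intro x hx
    exact Finset.mem_coe.2 (Finset.mem_biUnion.2 ⟨j, Finset.mem_univ _, hx⟩)
  choose q' hq' using hq'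
  let ε := epsS s KK
  let φ := ((aeval y : MvPolynomial E KK →ₐ[KK] GG (MvPolynomial ℕ ℂ)).toRingHom).comp
    (ε.toAlgHom.toRingHom)
  have hφ : EqFlat φ := EqFlat.comp (EqFlat.of_bij _ ε.bijective) hflat
  have hφC : ∀ j, φ (C (q' j)) = Q j := fun j => by
    change aeval y (epsS s KK (C (q' j))) = _
    rw [epsS_C, hq', hq]
  obtain ⟨l, c, h1, h2⟩ := exists_chain (Ideal.span (Set.range q'))
  have hspan : Ideal.span (Set.range Q) = ((Ideal.span (Set.range q')).map C).map φ := by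
    rw [Ideal.map_span, Ideal.map_span, ← Set.range_comp, ← Set.range_comp]
    congr 2
    ext1 j
    exact (hφC j).symm
  have hJ : ∀ i, JJ (Ideal.span (Set.range Q)) (fun i => φ (C (c i))) i =
      ((JJ (Ideal.span (Set.range q')) c i).map C).map φ := by
    intro i
    rw [hspan, JJ_map φ, JJ_map C]
  refine ⟨l, fun i => φ (C (c i)), ?_, ?_⟩
  · rw [hJ, h1, Ideal.map_top, Ideal.map_top]
  · intro i hi e P hP
    obtain ⟨F, -, hF⟩ := hgen e P hP
    obtain ⟨p, rfl⟩ := ε.surjective F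
    have hF : φ p = P := hF
    rw [hJ]
    rcases flat_step hφ (h2 i hi).mapC p with h | h
    · left
      rw [← hF, ← map_mul]
      exact Ideal.mem_map_of_mem _ h
    · right
      intro x hx
      refine h x ?_
      rwa [map_mul, hF, mul_assoc]

lemma core {k r : ℕ} (Q : ℕ → Fin k → MvPolynomial ℕ ℂ)
    (hQ : ∀ m j, ∃ e ≤ r, (Q m j).IsHomogeneous e) :
    ∃ l, ∀ᶠ m in UF, ∃ (J : ℕ → Ideal (MvPolynomial ℕ ℂ)) (c : ℕ → MvPolynomial ℕ ℂ),
      IsChainL J c l ∧ J 0 = Ideal.span (Set.range (Q m)) ∧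
      ∀ P : MvPolynomial ℕ ℂ, ∀ e ≤ r, P.IsHomogeneous e → GoodFor J c l P := by
  classical
  have hQ1 : ∀ j, ∃ e, mkG (fun m => Q m j) ∈ HG ℕ e := by
    intro j
    have : ∀ᶠ m in UF, ∃ e ∈ Set.Iic r, (Q m j).IsHomogeneous e :=
      Filter.Eventually.of_forall fun m => hQ m j
    obtain ⟨e, -, he⟩ := (Ultrafilter.eventually_exists_mem_iff (Set.finite_Iic r)).1 this
    exact ⟨e, mkG_mem_HG.2 he⟩
  obtain ⟨l, c, h1, h2⟩ := germ_setup (fun j => mkG fun m => Q m j) hQ1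
  choose γ hγ using fun i => mkG_surj (c i)
  obtain rfl : (fun i => mkG (γ i)) = c := funext hγ
  refine ⟨l, ?_⟩
  have htop : ∀ᶠ m in UF, JJ (Ideal.span (Set.range (Q m))) (fun i => γ i m) l = ⊤ := by
    have := (germ_mem Q γ l (fun _ => 1)).1 (by rw [h1]; trivial)
    filter_upwards [this] with m hm
    exact (Ideal.eq_top_iff_one _).2 hm
  have hgood : ∀ i < l, ∀ e, ∀ᶠ m in UF, ∀ P : MvPolynomial ℕ ℂ, P.IsHomogeneous e →
      (P * γ i m ∈ JJ (Ideal.span (Set.range (Q m))) (fun i => γ i m) i ∨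
        ∀ x, P * (γ i m * x) ∈ JJ (Ideal.span (Set.range (Q m))) (fun i => γ i m) i →
          γ i m * x ∈ JJ (Ideal.span (Set.range (Q m))) (fun i => γ i m) i) := by
    intro i hi e
    by_contra hcon
    have hcon := Ultrafilter.eventually_not.2 hcon
    have : ∀ m, ∃ Px : MvPolynomial ℕ ℂ × MvPolynomial ℕ ℂ, 
        (¬ (∀ P : MvPolynomial ℕ ℂ, P.IsHomogeneous e →
      (P * γ i m ∈ JJ (Ideal.span (Set.range (Q m))) (fun i => γ i m) i ∨
        ∀ x, P * (γ i m * x) ∈ JJ (Ideal.span (Set.range (Q m))) (fun i => γ i m) i →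
          γ i m * x ∈ JJ (Ideal.span (Set.range (Q m))) (fun i => γ i m) i))) →
        (Px.1.IsHomogeneous e ∧ Px.1 * γ i m ∉ JJ (Ideal.span (Set.range (Q m))) (fun i => γ i m) i ∧
          Px.1 * (γ i m * Px.2) ∈ JJ (Ideal.span (Set.range (Q m))) (fun i => γ i m) i ∧
          γ i m * Px.2 ∉ JJ (Ideal.span (Set.range (Q m))) (fun i => γ i m) i) := by
      intro m
      by_cases hm : (∀ P : MvPolynomial ℕ ℂ, P.IsHomogeneous e →
      (P * γ i m ∈ JJ (Ideal.span (Set.range (Q m))) (fun i => γ i m) i ∨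
        ∀ x, P * (γ i m * x) ∈ JJ (Ideal.span (Set.range (Q m))) (fun i => γ i m) i →
          γ i m * x ∈ JJ (Ideal.span (Set.range (Q m))) (fun i => γ i m) i))
      · exact ⟨0, fun h => absurd hm h⟩
      · have hm2 := hm
        push Not at hm2
        obtain ⟨P, hP, ha, x, hx, hb⟩ := hm2
        exact ⟨(P, x), fun _ => ⟨hP, ha, hx, hb⟩⟩
    choose Px hPx using this
    have hall := hcon.mono fun m hm => hPx m hm
    have hP : mkG (fun m => (Px m).1) ∈ HG ℕ e := mkG_mem_HG.2 (hall.mono fun m h => h.1)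
    rcases h2 i hi e _ hP with h | h
    · rw [← map_mul, germ_mem Q γ i] at h
      obtain ⟨m, hm1, hm2⟩ := (h.and hall).exists
      exact hm2.2.1 hm1
    · have h := h (mkG fun m => (Px m).2)
      rw [← map_mul, ← map_mul, germ_mem Q γ i, germ_mem Q γ i] at h
      have h := h (hall.mono fun m h => h.2.2.1)
      obtain ⟨m, hm1, hm2⟩ := (h.and hall).exists
      exact hm2.2.2.2 hm1
  have hgood2 : ∀ᶠ m in UF, ∀ i ∈ Set.Iio l, ∀ e ∈ Set.Iic r, ∀ P : MvPolynomial ℕ ℂ, P.IsHomogeneous e →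
      (P * γ i m ∈ JJ (Ideal.span (Set.range (Q m))) (fun i => γ i m) i ∨
        ∀ x, P * (γ i m * x) ∈ JJ (Ideal.span (Set.range (Q m))) (fun i => γ i m) i →
          γ i m * x ∈ JJ (Ideal.span (Set.range (Q m))) (fun i => γ i m) i) := by
    rw [Filter.eventually_all_finite (Set.finite_Iio l)]
    intro i hi
    rw [Filter.eventually_all_finite (Set.finite_Iic r)]
    intro e _
    exact hgood i hi e
  filter_upwards [htop, hgood2] with m hm1 hm2
  exact ⟨_, _, JJ_chain _ _ _ hm1, rfl, fun P e he hP i hi => hm2 i hi e he P hP⟩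

lemma rename_mem_iff {N k : ℕ} (Q : Fin k → MvPolynomial (Fin N) ℂ) (g : MvPolynomial (Fin N) ℂ) :
    rename (Fin.val : Fin N → ℕ) g ∈
      Ideal.span (Set.range fun j => rename (Fin.val : Fin N → ℕ) (Q j)) ↔
    g ∈ Ideal.span (Set.range Q) := by
  simp only [Ideal.mem_span_range_iff_exists_fun]
  constructor
  · rintro ⟨c, hc⟩
    refine ⟨fun j => killCompl (Fin.val_injective (n := N)) (c j), ?_⟩
    have := congrArg (killCompl (R := ℂ) (Fin.val_injective (n := N))) hc
    simpa only [map_sum, map_mul, killCompl_rename_app] using this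
  · rintro ⟨c, rfl⟩
    exact ⟨fun j => rename Fin.val (c j), by simp only [map_sum, map_mul]⟩

end Final

/-- For every `k, r` there is a bound `f = f(k, r)` such that whenever homogeneous
polynomials `P₁, …, P_d, Q₁, …, Q_k ∈ ℂ[x₀, …, xₙ]`, all of degree at most `r`, satisfy
`P₁ ⋯ P_d ∈ ⟨Q₁, …, Q_k⟩`, there is a non-empty subset of at most `f` of the `Pᵢ` whose
product already lies in `⟨Q₁, …, Q_k⟩`. -/
theorem exists_bounded_subproduct_mem_ideal (k r : ℕ) :
    ∃ f : ℕ, ∀ (n d : ℕ), 1 ≤ d →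
      ∀ (P : Fin d → MvPolynomial (Fin (n + 1)) ℂ)
        (Q : Fin k → MvPolynomial (Fin (n + 1)) ℂ),
        (∀ i, ∃ e ≤ r, (P i).IsHomogeneous e) →
        (∀ j, ∃ e ≤ r, (Q j).IsHomogeneous e) →
        (∏ i, P i) ∈ Ideal.span (Set.range Q) →
        ∃ s : Finset (Fin d), s.Nonempty ∧ s.card ≤ f ∧
          (∏ i ∈ s, P i) ∈ Ideal.span (Set.range Q) := by
  by_contra hcon
  push Not at hcon
  choose n d hd P Q hP hQ hprod hbad using hcon
  obtain ⟨l, hl⟩ := core (r := r)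
    (fun m j => MvPolynomial.rename (Fin.val : Fin (n m + 1) → ℕ) (Q m j)) (by
      intro m j
      obtain ⟨e, he, h⟩ := hQ m j
      exact ⟨e, he, h.rename_isHomogeneous⟩)
  have hge : ∀ᶠ m in UF, 2 ^ l * l + 1 ≤ m :=
    Nat.hyperfilter_le_atTop (Filter.eventually_ge_atTop (2 ^ l * l + 1))
  obtain ⟨m, hm, J, c, hch, hJ0, hgood⟩ := (hge.and hl).exists
  have : Nonempty (Fin (d m)) := ⟨⟨0, hd m⟩⟩
  obtain ⟨s, hs1, hs2, hs3⟩ := exists_small_subset l J c hch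
    (fun i => MvPolynomial.rename (Fin.val : Fin (n m + 1) → ℕ) (P m i)) (by
      intro i
      obtain ⟨e, he, h⟩ := hP m i
      exact hgood _ e he h.rename_isHomogeneous) (by
      rw [hJ0, ← map_prod, rename_mem_iff]
      exact hprod m)
  rw [hJ0, ← map_prod, rename_mem_iff] at hs3
  exact hbad m s hs1 (hs2.trans hm) hs3
end

section
/- There exists a function B : ℕ × ℕ → ℕ with the following property: for every n and every ideal I of ℂ[x_0, …, x_n] generated by k homogeneous polynomials of degree at most r, if I is 𝔭-primary (where 𝔭 is the radical of I, a prime ideal), then 𝔭^{B(k, r)} ⊆ I. The bound B(k, r) depends only on k and r, not on n. -/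
lemma bp_common {R L1 L2 : Type} [CommRing R] [Field L1] [Field L2] (f : R →+* L1) (g : R →+* L2)
    (h : RingHom.ker f = RingHom.ker g) : ∃ (L : Type) (_ : Field L) (β : L1 →+* L)
      (ι : L2 →+* L), β.comp f = ι.comp g := by
  have : (RingHom.ker f).IsPrime := RingHom.ker_isPrime f
  let k0 := (RingHom.ker f).ResidueField
  let f' : k0 →+* L1 := Ideal.ResidueField.lift (RingHom.ker f) f le_rfl (fun x hx =>
    isUnit_iff_ne_zero.mpr fun h => hx h)
  let g' : k0 →+* L2 := Ideal.ResidueField.lift (RingHom.ker f) g h.le (fun x hx =>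
    isUnit_iff_ne_zero.mpr fun h' => hx (h ▸ h'))
  let _ := f'.toAlgebra
  let _ := g'.toAlgebra
  obtain ⟨m, hm⟩ := Ideal.exists_maximal (TensorProduct k0 L1 L2)
  refine ⟨_ ⧸ m, Ideal.Quotient.field m, (Ideal.Quotient.mk m).comp
    (Algebra.TensorProduct.includeLeftRingHom), (Ideal.Quotient.mk m).comp
    (Algebra.TensorProduct.includeRight (R := k0) (A := L1) (B := L2)).toRingHom, ?_⟩
  ext r
  have e1 : f r = algebraMap k0 L1 (algebraMap R k0 r) := by
    show f r = f' _
    exact (Ideal.ResidueField.lift_algebraMap ..).symm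
  have e2 : g r = algebraMap k0 L2 (algebraMap R k0 r) := by
    show g r = g' _
    exact (Ideal.ResidueField.lift_algebraMap ..).symm
  simp only [RingHom.comp_apply, e1, e2]
  congr 1
  simp

open Polynomial in
lemma bp_transc {A : Type} [CommRing A] [IsDomain A] [IsNoetherianRing A] {σ : Type} [Finite σ]
    (J : Ideal (MvPolynomial σ A)) (i : σ)
    (hinj : ∀ p : A[X], aeval (MvPolynomial.X i) p ∈ J → p = 0) :
    ∃ a : A, a ≠ 0 ∧ ∀ (K : Type) [Field K] (φ : A →+* K), φ a ≠ 0 → ∀ p : K[X],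
      aeval (MvPolynomial.X i) p ∈ J.map (MvPolynomial.map φ) → p = 0 := by
  let f : A[X] →+* (MvPolynomial σ A ⧸ J) :=
    (Ideal.Quotient.mk J).comp (aeval (R := A) (MvPolynomial.X i : MvPolynomial σ A)).toRingHom
  have hf : Function.Injective f := by
    rw [injective_iff_map_eq_zero]
    intro p hp
    exact hinj p (Ideal.Quotient.eq_zero_iff_mem.mp hp)
  have hft : f.FiniteType := by
    have h2 : (f.comp C).FiniteType := by
      have : f.comp C = algebraMap A (MvPolynomial σ A ⧸ J) := by
        ext a
        simp [f]
        rfl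
      rw [this]
      exact (RingHom.finiteType_algebraMap).mpr inferInstance
    exact RingHom.FiniteType.of_comp_finiteType h2
  have hfp : f.FinitePresentation := RingHom.FinitePresentation.of_finiteType.mp hft
  obtain ⟨S, hS⟩ := PrimeSpectrum.exists_constructibleSetData_iff.mpr
    (PrimeSpectrum.isConstructible_range_comap hfp)
  have h0 : (⟨⊥, Ideal.isPrime_bot⟩ : PrimeSpectrum A[X]) ∈ Set.range (PrimeSpectrum.comap f) := by
    obtain ⟨p', hp', h⟩ := Ideal.exists_comap_eq_of_mem_minimalPrimes_of_injective hf
      (⊥ : Ideal A[X]) (by simp [IsDomain.minimalPrimes_eq_singleton_bot])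
    exact ⟨⟨p', hp'⟩, PrimeSpectrum.ext h⟩
  rw [← hS] at h0
  simp only [PrimeSpectrum.ConstructibleSetData.toSet, Set.mem_iUnion] at h0
  obtain ⟨c, hc, h0⟩ := h0
  have hg : ∀ j, c.g j = 0 := by
    intro j
    have := h0.1 ⟨j, rfl⟩
    simpa using this
  have hcf : c.f ≠ 0 := by
    have := h0.2
    simpa using this
  have key : ∀ q : PrimeSpectrum A[X], c.f ∉ q.asIdeal → q ∈ Set.range (PrimeSpectrum.comap f) := by
    intro q hq
    rw [← hS]
    simp only [PrimeSpectrum.ConstructibleSetData.toSet, Set.mem_iUnion]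
    refine ⟨c, hc, ?_, ?_⟩
    · rintro _ ⟨j, rfl⟩
      simp [hg]
    · simpa using hq
  refine ⟨c.f.leadingCoeff, by simpa using hcf, ?_⟩
  intro K _ φ ha p hp
  let L0 := RatFunc K
  let ψ : A[X] →+* L0 := (algebraMap K[X] L0).comp (mapRingHom φ)
  have hψ : ψ c.f ≠ 0 := by
    simp only [ψ, RingHom.comp_apply, coe_mapRingHom]
    rw [Ne, FaithfulSMul.algebraMap_eq_zero_iff]
    intro h
    apply ha
    have := congrArg (fun q => q.coeff c.f.natDegree) h
    simpa using this
  obtain ⟨P, hP⟩ := key ⟨RingHom.ker ψ, RingHom.ker_isPrime ψ⟩ (by simpa [RingHom.mem_ker] using hψ)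
  have hP' : P.asIdeal.comap f = RingHom.ker ψ := congrArg PrimeSpectrum.asIdeal hP
  -- a common field
  obtain ⟨L, _, β, ι, hβ⟩ : ∃ (L : Type) (_ : Field L) (β : (MvPolynomial σ A ⧸ J) →+* L)
      (ι : L0 →+* L), β.comp f = ι.comp ψ := by
    obtain ⟨L, hL, β, ι, h⟩ := bp_common
      ((algebraMap (MvPolynomial σ A ⧸ J) P.asIdeal.ResidueField).comp f) ψ (by
        rw [← RingHom.comap_ker, Ideal.ker_algebraMap_residueField, hP'])
    exact ⟨L, hL, β.comp (algebraMap _ _), ι, h⟩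
  let ε : MvPolynomial σ K →+* L := MvPolynomial.eval₂Hom (ι.comp ((algebraMap K[X] L0).comp C))
    (fun j => β (Ideal.Quotient.mk J (MvPolynomial.X j)))
  have hε : ε.comp (MvPolynomial.map φ) = β.comp (Ideal.Quotient.mk J) := by
    apply MvPolynomial.ringHom_ext
    · intro a
      have := RingHom.congr_fun hβ (C a)
      simp [ψ, f] at this
      simp [ε]
      exact this.symm
    · intro j
      simp [ε]
  have hker : J.map (MvPolynomial.map φ) ≤ RingHom.ker ε := by
    rw [Ideal.map_le_iff_le_comap]
    intro x hx
    rw [Ideal.mem_comap, RingHom.mem_ker]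
    have := RingHom.congr_fun hε x
    simp only [RingHom.comp_apply] at this
    rw [this, Ideal.Quotient.eq_zero_iff_mem.mpr hx, map_zero]
  have h1 : ε (aeval (MvPolynomial.X i) p) = 0 := hker hp
  have h2 : ε.comp (aeval (R := K) (MvPolynomial.X i : MvPolynomial σ K)).toRingHom
      = ι.comp (algebraMap K[X] L0) := by
    apply Polynomial.ringHom_ext
    · intro a
      simp [ε]
    · have := RingHom.congr_fun hβ X
      simp [ψ, f] at this
      simp [ε]
      exact this
  have h3 := RingHom.congr_fun h2 p
  have h4 : ι (algebraMap K[X] L0 p) = 0 := by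
    rw [← RingHom.comp_apply, ← h3]; exact h1
  rw [map_eq_zero, FaithfulSMul.algebraMap_eq_zero_iff] at h4
  exact h4
open Polynomial in
/-- the variable `X i` satisfies a nonzero relation of degree at most `D` modulo `I` -/
def BpRel {K : Type} [Field K] {σ : Type} (I : Ideal (MvPolynomial σ K)) (i : σ) (D : ℕ) : Prop :=
  ∃ p : K[X], p ≠ 0 ∧ p.natDegree ≤ D ∧ aeval (MvPolynomial.X i) p ∈ I

lemma BpRel.mono {K : Type} [Field K] {σ : Type} {I : Ideal (MvPolynomial σ K)} {i : σ} {D D' : ℕ}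
    (h : BpRel I i D) (hD : D ≤ D') : BpRel I i D' := by
  obtain ⟨p, h0, h1, h2⟩ := h
  exact ⟨p, h0, h1.trans hD, h2⟩

open Polynomial in
lemma bp_domain {A : Type} [CommRing A] [IsDomain A] [IsNoetherianRing A] {σ : Type} [Finite σ]
    (J : Ideal (MvPolynomial σ A)) (i : σ) :
    ∃ a : A, a ≠ 0 ∧ ∃ D : ℕ, ∀ (K : Type) [Field K] (φ : A →+* K), φ a ≠ 0 → ∀ N : ℕ,
      BpRel (J.map (MvPolynomial.map φ)) i N → BpRel (J.map (MvPolynomial.map φ)) i D := by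
  by_cases h : ∀ p : A[X], aeval (MvPolynomial.X i) p ∈ J → p = 0
  · obtain ⟨a, ha, H⟩ := bp_transc J i h
    refine ⟨a, ha, 0, fun K _ φ hφ N ⟨p, hp, _, hp'⟩ => absurd (H K φ hφ p hp') hp⟩
  · push Not at h
    obtain ⟨p, hp, hp0⟩ := h
    refine ⟨p.leadingCoeff, by simpa using hp0, p.natDegree, fun K _ φ hφ N _ => ?_⟩
    refine ⟨p.map φ, ?_, natDegree_map_le, ?_⟩
    · intro h
      apply hφ
      have := congrArg (fun q => q.coeff p.natDegree) h
      simpa using this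
    · have := Ideal.mem_map_of_mem (MvPolynomial.map φ) hp
      convert this using 1
      have h2 : ((aeval (R := K) (MvPolynomial.X i : MvPolynomial σ K)).toRingHom).comp
          (mapRingHom φ) =
          (MvPolynomial.map φ).comp (aeval (R := A) (MvPolynomial.X i : MvPolynomial σ A)).toRingHom := by
        apply Polynomial.ringHom_ext
        · intro a; simp
        · simp
      exact RingHom.congr_fun h2 p

lemma bp_family {A : Type} [CommRing A] [IsNoetherianRing A] {σ : Type} [Finite σ]
    (J : Ideal (MvPolynomial σ A)) (i : σ) (𝔞 : Ideal A) :
    ∃ D : ℕ, ∀ (K : Type) [Field K] (φ : A →+* K), 𝔞 ≤ RingHom.ker φ → ∀ N : ℕ,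
      BpRel (J.map (MvPolynomial.map φ)) i N → BpRel (J.map (MvPolynomial.map φ)) i D := by
  induction 𝔞 using WellFoundedGT.induction with
  | ind 𝔞 ih =>
  by_cases htop : 𝔞 = ⊤
  · refine ⟨0, fun K _ φ h => ?_⟩
    exact absurd (top_le_iff.mp (htop ▸ h)) (RingHom.ker_ne_top φ)
  by_cases hp : 𝔞.IsPrime
  · obtain ⟨a, ha, D, hD⟩ := bp_domain (J.map (MvPolynomial.map (Ideal.Quotient.mk 𝔞))) i
    obtain ⟨b, rfl⟩ := Ideal.Quotient.mk_surjective a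
    have hb : b ∉ 𝔞 := fun h => ha (Ideal.Quotient.eq_zero_iff_mem.mpr h)
    obtain ⟨D', hD'⟩ := ih (𝔞 ⊔ Ideal.span {b}) (by
      refine lt_of_le_of_ne le_sup_left fun h => hb ?_
      rw [h]
      exact Ideal.mem_sup_right (Ideal.mem_span_singleton_self b))
    refine ⟨max D D', fun K _ φ h N hN => ?_⟩
    by_cases hφ : φ b = 0
    · refine (hD' K φ (sup_le h ?_) N hN).mono (le_max_right _ _)
      rw [Ideal.span_singleton_le_iff_mem]
      exact hφ
    · have e : (J.map (MvPolynomial.map (Ideal.Quotient.mk 𝔞))).map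
          (MvPolynomial.map (Ideal.Quotient.lift 𝔞 φ h)) = J.map (MvPolynomial.map φ) := by
        rw [Ideal.map_map]
        congr 1
        apply MvPolynomial.ringHom_ext
        · intro a
          simp only [RingHom.comp_apply, MvPolynomial.map_C]
          rfl
        · simp
      have := hD K (Ideal.Quotient.lift 𝔞 φ h) hφ N
      rw [e] at this
      exact (this hN).mono (le_max_left _ _)
  · rw [Ideal.isPrime_iff] at hp
    push Not at hp
    obtain ⟨x, y, hxy, hx, hy⟩ := hp htop
    have key : ∀ z, z ∉ 𝔞 → 𝔞 < 𝔞 ⊔ Ideal.span {z} := by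
      intro z hz
      refine lt_of_le_of_ne le_sup_left fun h => hz ?_
      rw [h]
      exact Ideal.mem_sup_right (Ideal.mem_span_singleton_self z)
    obtain ⟨D, hD⟩ := ih _ (key x hx)
    obtain ⟨D', hD'⟩ := ih _ (key y hy)
    refine ⟨max D D', fun K _ φ h N hN => ?_⟩
    have : φ x * φ y = 0 := by rw [← map_mul]; exact h hxy
    rcases mul_eq_zero.mp this with h0 | h0
    · refine (hD K φ (sup_le h ?_) N hN).mono (le_max_left _ _)
      rw [Ideal.span_singleton_le_iff_mem]
      exact h0
    · refine (hD' K φ (sup_le h ?_) N hN).mono (le_max_right _ _)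
      rw [Ideal.span_singleton_le_iff_mem]
      exact h0

/-- universal family -/
lemma bp_univ (c k r : ℕ) : ∃ D : ℕ, ∀ (K : Type) [Field K] (Q : Fin k → MvPolynomial (Fin c) K),
    (∀ j, (Q j).totalDegree ≤ r) → ∀ i, ∀ N, BpRel (Ideal.span (Set.range Q)) i N →
      BpRel (Ideal.span (Set.range Q)) i D := by
  let A := MvPolynomial (Fin k × (Fin c → Fin (r+1))) ℤ
  let mon : (Fin c → Fin (r+1)) → (Fin c →₀ ℕ) := fun e =>
    Finsupp.equivFunOnFinite.symm (fun l => (e l : ℕ))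
  let q : Fin k → MvPolynomial (Fin c) A := fun j =>
    ∑ e : Fin c → Fin (r+1), MvPolynomial.monomial (mon e) (MvPolynomial.X (j, e))
  have H := fun i => bp_family (Ideal.span (Set.range q)) i ⊥
  choose D hD using H
  refine ⟨Finset.univ.sup D, fun K _ Q hQ i N hN => ?_⟩
  let φ : A →+* K := MvPolynomial.eval₂Hom (Int.castRingHom K)
    (fun x => (Q x.1).coeff (mon x.2))
  have hmon : Function.Injective mon := by
    intro e e' h
    funext l
    have := DFunLike.congr_fun h l
    exact Fin.ext (by simpa [mon] using this)
  have hq : ∀ j, MvPolynomial.map φ (q j) = Q j := by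
    intro j
    have hφX : ∀ x, φ (MvPolynomial.X x) = (Q x.1).coeff (mon x.2) := fun x =>
      MvPolynomial.eval₂Hom_X' _ _ _
    simp only [q, map_sum, MvPolynomial.map_monomial, hφX]
    conv_rhs => rw [MvPolynomial.as_sum (Q j)]
    rw [← Finset.sum_image (s := Finset.univ) (g := mon)
      (f := fun d => MvPolynomial.monomial d ((Q j).coeff d)) (fun a _ b _ h => hmon h)]
    symm
    apply Finset.sum_subset
    · intro d hd
      simp only [Finset.mem_image, Finset.mem_univ, true_and]
      have hle : ∀ l, d l ≤ r := by
        intro l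
        calc d l ≤ d.sum (fun _ e => e) := by
              by_cases h : d l = 0
              · simp [h]
              · exact Finset.single_le_sum (f := fun l => d l) (fun _ _ => Nat.zero_le _)
                  (Finsupp.mem_support_iff.mpr h)
          _ ≤ _ := (MvPolynomial.le_totalDegree hd).trans (hQ j)
      refine ⟨fun l => ⟨d l, by have := hle l; omega⟩, ?_⟩
      ext l
      simp [mon]
    · intro d _ hd
      simp [MvPolynomial.notMem_support_iff.mp hd]
  have e : (Ideal.span (Set.range q)).map (MvPolynomial.map φ) = Ideal.span (Set.range Q) := by
    rw [Ideal.map_span, ← Set.range_comp]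
    congr 2
    funext j
    exact hq j
  have := hD i K φ bot_le N
  rw [e] at this
  exact (this hN).mono (Finset.le_sup (f := D) (Finset.mem_univ i))
open Polynomial in
lemma bp_finrank {K : Type} [Field K] {c D : ℕ} (I : Ideal (MvPolynomial (Fin c) K))
    (h : ∀ i, BpRel I i D) : Module.Finite K (MvPolynomial (Fin c) K ⧸ I) ∧
      Module.finrank K (MvPolynomial (Fin c) K ⧸ I) ≤ (D + 1) ^ c := by
  let S := MvPolynomial (Fin c) K ⧸ I
  let x : Fin c → S := fun i => Ideal.Quotient.mk I (MvPolynomial.X i)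
  let mon : (Fin c → Fin (D+1)) → S := fun e => ∏ l, x l ^ (e l : ℕ)
  let V : Submodule K S := Submodule.span K (Set.range mon)
  have hmul : ∀ i, ∀ v ∈ V, v * x i ∈ V := by
    intro i v hv
    induction hv using Submodule.span_induction with
    | zero => simp
    | add a b _ _ ha hb => rw [add_mul]; exact V.add_mem ha hb
    | smul t a _ ha => rw [smul_mul_assoc]; exact V.smul_mem _ ha
    | mem a ha =>
      obtain ⟨e, rfl⟩ := ha
      obtain ⟨p, hp0, hpD, hp⟩ := h i
      set rest : S := ∏ l ∈ Finset.univ \ {i}, x l ^ (e l : ℕ) with hrest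
      have hx : aeval (x i) p = 0 := by
        have h1 : aeval (x i) p = Ideal.Quotient.mkₐ K I (aeval (MvPolynomial.X i) p) :=
          (Polynomial.aeval_algHom_apply (Ideal.Quotient.mkₐ K I) _ p)
        rw [h1]
        exact Ideal.Quotient.eq_zero_iff_mem.mpr hp
      have hup : ∀ m : Fin (D+1), x i ^ (m : ℕ) * rest ∈ V := by
        intro m
        refine Submodule.subset_span ⟨Function.update e i m, ?_⟩
        have := Finset.prod_update_of_mem (Finset.mem_univ i) (fun l => x l ^ (e l : ℕ))
          (x i ^ (m : ℕ))
        rw [hrest, ← this]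
        refine Finset.prod_congr rfl fun l _ => ?_
        by_cases hl : l = i
        · subst hl; simp
        · simp [hl]
      have hg : ∀ g : K[X], aeval (x i) g * rest ∈ V := by
        intro g
        have h1 : aeval (x i) g = aeval (x i) (g % p) := by
          conv_lhs => rw [← EuclideanDomain.div_add_mod g p]
          simp [hx]
        have h2 : (g % p).natDegree < D + 1 := by
          have := Polynomial.natDegree_le_natDegree (Polynomial.degree_mod_lt g hp0).le
          omega
        rw [h1, Polynomial.aeval_eq_sum_range' h2, Finset.sum_mul]
        refine V.sum_mem fun m hm => ?_
        rw [smul_mul_assoc]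
        exact V.smul_mem _ (hup ⟨m, Finset.mem_range.mp hm⟩)
      have := hg (X ^ ((e i : ℕ) + 1))
      convert this using 1
      have h3 : mon e = x i ^ (e i : ℕ) * rest := by
        have := Finset.prod_update_of_mem (Finset.mem_univ i) (fun l => x l ^ (e l : ℕ))
          (x i ^ (e i : ℕ))
        rw [hrest, ← this]
        refine Finset.prod_congr rfl fun l _ => ?_
        by_cases hl : l = i
        · subst hl; simp
        · simp [hl]
      rw [h3]
      simp
      ring
  have h1 : (1 : S) ∈ V := by
    refine Submodule.subset_span ⟨fun _ => 0, ?_⟩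
    simp [mon]
  have hV : V = ⊤ := by
    rw [eq_top_iff]
    rintro s -
    obtain ⟨f, rfl⟩ := Ideal.Quotient.mk_surjective s
    induction f using MvPolynomial.induction_on with
    | C a =>
      have : (Ideal.Quotient.mk I (MvPolynomial.C a) : S) = a • (1 : S) := by
        exact Algebra.algebraMap_eq_smul_one (A := S) a
      rw [this]
      exact V.smul_mem _ h1
    | add p q hp hq => rw [map_add]; exact V.add_mem hp hq
    | mul_X p i hp => rw [map_mul]; exact hmul i _ hp
  have hfin : Module.Finite K S := ⟨by rw [← hV]; exact Submodule.fg_span (Set.finite_range mon)⟩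
  refine ⟨hfin, ?_⟩
  have h5 := finrank_range_le_card (R := K) mon
  have h6 : Set.finrank K (Set.range mon) = Module.finrank K S := by
    rw [Set.finrank]
    change Module.finrank K V = _
    rw [hV, finrank_top]
  rw [h6] at h5
  simpa using h5

lemma bp_nilp {K S : Type} [Field K] [CommRing S] [Algebra K S] [Module.Finite K S]
    (n : Ideal S) (hn : IsNilpotent n) {N : ℕ} (hN : Module.finrank K S ≤ N) : n ^ N = ⊥ := by
  obtain ⟨M, hM⟩ := hn
  have key : ∀ j : ℕ, n ^ j = ⊥ ∨
      Module.finrank K ((n ^ j).restrictScalars K) + j ≤ Module.finrank K S := by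
    intro j
    induction j with
    | zero => right; simpa using Submodule.finrank_le _
    | succ j ih =>
      rcases ih with ih | ih
      · left; rw [pow_succ, ih]; simp
      by_cases h : n ^ (j+1) = n ^ j
      · left
        have : ∀ m, n ^ (j + m) = n ^ j := by
          intro m
          induction m with
          | zero => rfl
          | succ m ihm => rw [← add_assoc, pow_succ, ihm, ← pow_succ, h]
        rw [h, ← this M, pow_add, hM]; simp
      · right
        have hlt : (n ^ (j+1)).restrictScalars K < (n ^ j).restrictScalars K := by
          refine lt_of_le_of_ne ?_ ?_
          · exact Ideal.pow_le_pow_right (Nat.le_succ j)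
          · intro h'
            exact h (Submodule.restrictScalars_injective K S S h')
        have := Submodule.finrank_lt_finrank_of_lt hlt
        omega
  have h0 : n ^ (N+0) = ⊥ := by
    rcases key N with h | h
    · exact h
    · have h1 : Module.finrank K ((n ^ N).restrictScalars K) = 0 := by omega
      have := Submodule.finrank_eq_zero.mp h1
      simpa using this
  exact h0

lemma bp_height {K : Type} [Field K] (c : ℕ) (M : Ideal (MvPolynomial (Fin c) K))
    (hM : M.IsMaximal) : M.height = c := by
  induction c with
  | zero =>
    have : M = ⊥ := by
      have hf : IsField (MvPolynomial (Fin 0) K) :=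
        MulEquiv.isField (Field.toIsField K) (MvPolynomial.isEmptyRingEquiv K (Fin 0)).toMulEquiv
      let _ := hf.toField
      exact (Ideal.eq_bot_or_top M).resolve_right hM.ne_top
    rw [this]; simp
  | succ c ih =>
    let e := (MvPolynomial.finSuccEquiv K c).toRingEquiv
    let M' := M.map e
    have hM' : M'.IsMaximal := Ideal.map_isMaximal_of_equiv e
    have h1 : M'.height = M.height := e.height_map M
    have hu : (M'.under (MvPolynomial (Fin c) K)).IsMaximal :=
      Polynomial.isMaximal_comap_C_of_isJacobsonRing M'
    have hlo : M'.LiesOver (M'.under (MvPolynomial (Fin c) K)) := ⟨rfl⟩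
    rw [← h1, Polynomial.height_eq_height_add_one (M'.under _) M', ih _ hu]
    simp

lemma bp_le {K : Type} [Field K] {c k : ℕ} (Q : Fin k → MvPolynomial (Fin c) K)
    (hM : (Ideal.span (Set.range Q)).radical.IsMaximal) : c ≤ k := by
  have h := bp_height c _ hM
  have hmin : (Ideal.span (Set.range Q)).radical ∈ (Ideal.span (Set.range Q)).minimalPrimes := by
    rw [← Ideal.radical_minimalPrimes]
    have := hM.isPrime
    rw [Ideal.minimalPrimes_eq_subsingleton_self]
    rfl
  have h2 := Ideal.height_le_spanRank_toENat_of_mem_minimalPrimes _ _ hmin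
  rw [h] at h2
  have h3 : (Ideal.span (Set.range Q)).spanRank ≤ k := by
    refine (Submodule.spanRank_span_le_card _).trans ?_
    simpa using Cardinal.mk_range_le (f := Q)
  have h4 := h2.trans (OrderHomClass.mono Cardinal.toENat h3)
  simpa using h4
lemma bp_totalDegree {τ σ k R : Type} [CommRing k] [CommRing R]
    (f : MvPolynomial τ k →+* MvPolynomial σ R)
    (hC : ∀ a, (f (MvPolynomial.C a)).totalDegree = 0)
    (hX : ∀ i, (f (MvPolynomial.X i)).totalDegree ≤ 1) (q : MvPolynomial τ k) :
    (f q).totalDegree ≤ q.totalDegree := by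
  conv_lhs => rw [MvPolynomial.as_sum q, map_sum]
  refine MvPolynomial.totalDegree_finsetSum_le fun d hd => ?_
  refine le_trans ?_ (MvPolynomial.le_totalDegree hd)
  rw [MvPolynomial.monomial_eq, map_mul, Finsupp.prod, map_prod]
  refine (MvPolynomial.totalDegree_mul _ _).trans ?_
  rw [hC, zero_add]
  refine (MvPolynomial.totalDegree_finsetProd _ _).trans ?_
  refine Finset.sum_le_sum fun i _ => ?_
  rw [map_pow]
  refine (MvPolynomial.totalDegree_pow _ _).trans ?_
  simpa using Nat.mul_le_mul_left (d i) (hX i)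

lemma bp_pmax {K : Type} [Field K] {c D : ℕ} (p : Ideal (MvPolynomial (Fin c) K)) (hp : p.IsPrime)
    (h : ∀ i, BpRel p i D) : p.IsMaximal := by
  obtain ⟨hfin, -⟩ := bp_finrank p h
  have : IsArtinianRing (MvPolynomial (Fin c) K ⧸ p) := IsArtinianRing.of_finite K _
  exact Ideal.Quotient.maximal_of_isField _ (IsArtinianRing.isField_of_isDomain _)

lemma bp_powle {K : Type} [Field K] {c D E : ℕ} (J : Ideal (MvPolynomial (Fin c) K))
    (h : ∀ i, BpRel J i D) (hcE : (D + 1) ^ c ≤ E) : J.radical ^ E ≤ J := by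
  obtain ⟨hfin, hrank⟩ := bp_finrank _ h
  have hnil : IsNilpotent (J.radical.map (Ideal.Quotient.mk J)) := by
    obtain ⟨m, hm⟩ := Ideal.exists_radical_pow_le_of_fg J (IsNoetherian.noetherian _)
    refine ⟨m, ?_⟩
    rw [← Ideal.map_pow, Ideal.zero_eq_bot, Ideal.map_eq_bot_iff_le_ker, Ideal.mk_ker]
    exact hm
  have h0 := bp_nilp (K := K) _ hnil (hrank.trans hcE)
  rwa [← Ideal.map_pow, Ideal.map_eq_bot_iff_le_ker, Ideal.mk_ker] at h0

open Polynomial in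
lemma bp_aux : ∃ B : ℕ × ℕ → ℕ, ∀ (R : Type) [CommRing R] [IsDomain R] (c k r : ℕ)
    (Q : Fin k → MvPolynomial (Fin c) R), (∀ j, (Q j).totalDegree ≤ r) →
    (Ideal.span (Set.range Q)).IsPrimary →
    (∀ a : R, MvPolynomial.C a ∈ (Ideal.span (Set.range Q)).radical → a = 0) →
    (∀ i, ∃ q : R[X], q ≠ 0 ∧ aeval (MvPolynomial.X i) q ∈ (Ideal.span (Set.range Q)).radical) →
    (Ideal.span (Set.range Q)).radical ^ B (k, r) ≤ Ideal.span (Set.range Q) := by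
  choose D hD using bp_univ
  refine ⟨fun kr => (Finset.range (kr.1 + 1)).sup fun c => (D c kr.1 kr.2 + 1) ^ c, ?_⟩
  intro R _ _ c k r Q hdeg hprim hC halg
  set I := Ideal.span (Set.range Q) with hI
  let K := FractionRing R
  let M : Submonoid (MvPolynomial (Fin c) R) := (nonZeroDivisors R).map MvPolynomial.C
  let W := MvPolynomial (Fin c) K
  let _ : Algebra (MvPolynomial (Fin c) R) W := MvPolynomial.algebraMvPolynomial
  have hloc : IsLocalization M W := MvPolynomial.isLocalization (nonZeroDivisors R) K
  have hmap : (algebraMap (MvPolynomial (Fin c) R) W) = MvPolynomial.map (algebraMap R K) := rfl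
  have hdisj : Disjoint (M : Set (MvPolynomial (Fin c) R)) (I.radical : Set _) := by
    rw [Set.disjoint_left]
    rintro _ ⟨a, ha, rfl⟩ h
    exact nonZeroDivisors.ne_zero ha (hC a h)
  have hdisj' : Disjoint (M : Set (MvPolynomial (Fin c) R)) (I : Set _) :=
    hdisj.mono_right Ideal.le_radical
  have hprime : I.radical.IsPrime := Ideal.isPrime_radical hprim
  let p := I.radical.map (algebraMap (MvPolynomial (Fin c) R) W)
  have hp : p.IsPrime := IsLocalization.isPrime_of_isPrime_disjoint M W _ hprime hdisj
  let Q' : Fin k → W := fun j => MvPolynomial.map (algebraMap R K) (Q j)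
  have hIK : I.map (algebraMap (MvPolynomial (Fin c) R) W) = Ideal.span (Set.range Q') := by
    rw [hI, Ideal.map_span, ← Set.range_comp]
    rfl
  have hple : p ≤ (Ideal.span (Set.range Q')).radical := by
    rw [← hIK]; exact Ideal.map_radical_le _
  have hpeq : p = (Ideal.span (Set.range Q')).radical := by
    refine le_antisymm hple ?_
    rw [hp.radical_le_iff, ← hIK]
    exact Ideal.map_mono Ideal.le_radical
  have hrel : ∀ i, ∃ N, BpRel p i N := by
    intro i
    obtain ⟨q, hq0, hq⟩ := halg i
    refine ⟨_, q.map (algebraMap R K), ?_, le_rfl, ?_⟩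
    · rwa [Ne, Polynomial.map_eq_zero_iff (IsFractionRing.injective R K)]
    · have := Ideal.mem_map_of_mem (algebraMap (MvPolynomial (Fin c) R) W) hq
      convert this using 1
      have h2 : ((aeval (R := K) (MvPolynomial.X i : MvPolynomial (Fin c) K)).toRingHom).comp
          (mapRingHom (algebraMap R K)) =
          (MvPolynomial.map (algebraMap R K)).comp
            (aeval (R := R) (MvPolynomial.X i : MvPolynomial (Fin c) R)).toRingHom := by
        apply Polynomial.ringHom_ext
        · intro a; simp
        · simp
      exact RingHom.congr_fun h2 q
  choose N hN using hrel
  have hpmax : p.IsMaximal := bp_pmax (D := Finset.univ.sup N) p hp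
      (fun i => (hN i).mono (Finset.le_sup (f := N) (Finset.mem_univ i)))
  have hck : c ≤ k := bp_le Q' (hpeq ▸ hpmax)
  have hrelI : ∀ i, BpRel (Ideal.span (Set.range Q')) i (D c k r) := by
    intro i
    obtain ⟨q, hq0, -, hq⟩ := hN i
    rw [hpeq] at hq
    obtain ⟨m, hm⟩ := hq
    refine hD c k r K Q' (fun j => ?_) i (q ^ m).natDegree ⟨q ^ m, pow_ne_zero _ hq0, le_rfl, ?_⟩
    · refine (bp_totalDegree (MvPolynomial.map (algebraMap R K)) ?_ ?_ (Q j)).trans (hdeg j)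
      · intro a; simp
      · intro a; simp
    · rw [map_pow]; exact hm
  set E := (Finset.range (k + 1)).sup fun c => (D c k r + 1) ^ c with hE
  have hcE : (D c k r + 1) ^ c ≤ E :=
    Finset.le_sup (f := fun c => (D c k r + 1) ^ c) (Finset.mem_range.mpr (by omega))
  have h0 : p ^ E ≤ Ideal.span (Set.range Q') := by
    rw [hpeq]; exact bp_powle _ hrelI hcE
  have h1 : I.radical ^ E ≤ (I.map (algebraMap (MvPolynomial (Fin c) R) W)).under _ := by
    rw [hIK]
    refine le_trans ?_ (Ideal.comap_mono h0)
    rw [← Ideal.map_le_iff_le_comap, Ideal.map_pow]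
  rwa [IsLocalization.under_map_of_isPrimary_disjoint M W hprim hdisj'] at h1

open Polynomial in
lemma bp_final :
    ∃ B : ℕ × ℕ → ℕ, ∀ (n k r : ℕ)
      (Q : Fin k → MvPolynomial (Fin (n + 1)) ℂ),
      (∀ j, ∃ e ≤ r, (Q j).IsHomogeneous e) →
      (Ideal.span (Set.range Q)).IsPrimary →
      (Ideal.span (Set.range Q)).radical ^ B (k, r) ≤ Ideal.span (Set.range Q) := by
  obtain ⟨B, hB⟩ := bp_aux
  refine ⟨B, fun n k r Q hQ hprim => ?_⟩
  classical
  set I := Ideal.span (Set.range Q) with hI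
  have hprime : I.radical.IsPrime := Ideal.isPrime_radical hprim
  let P := MvPolynomial (Fin (n+1)) ℂ
  let x : Fin (n+1) → P ⧸ I.radical := fun i => Ideal.Quotient.mk _ (MvPolynomial.X i)
  obtain ⟨S, hS⟩ : ∃ S : Set (Fin (n+1)), Maximal (fun S => AlgebraicIndepOn ℂ x S) S := by
    refine (Set.toFinite {S : Set (Fin (n+1)) | AlgebraicIndepOn ℂ x S}).exists_maximal ⟨∅, ?_⟩
    refine algebraicIndependent_empty_type_iff.mpr ?_
    exact (algebraMap ℂ (P ⧸ I.radical)).injective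
  have hind : AlgebraicIndepOn ℂ x S := hS.prop
  have halg : ∀ t, t ∉ S → IsAlgebraic (Algebra.adjoin ℂ (x '' S)) (x t) := by
    intro t ht
    by_contra h
    have h1 := (AlgebraicIndepOn.insert_iff ht).mpr ⟨hind, h⟩
    exact ht (hS.le_of_ge h1 (Set.subset_insert t S) (Set.mem_insert t S))
  let c := Fintype.card (Sᶜ : Set (Fin (n+1)))
  let τ : Fin c ⊕ S ≃ Fin (n+1) :=
    ((Equiv.sumCongr (Fintype.equivFin (Sᶜ : Set (Fin (n+1)))).symm (Equiv.refl S)).trans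
      (Equiv.sumComm _ _)).trans (Equiv.Set.sumCompl S)
  have hτl : ∀ i, τ (Sum.inl i) ∉ S := by
    intro i
    have h := ((Fintype.equivFin (Sᶜ : Set (Fin (n+1)))).symm i).2
    have h2 : τ (Sum.inl i) = ((Fintype.equivFin (Sᶜ : Set (Fin (n+1)))).symm i : Fin (n+1)) := by
      simp [τ]
    rw [h2]; exact h
  have hτr : ∀ s, τ (Sum.inr s) = s := by
    intro s
    simp [τ]
  let R := MvPolynomial S ℂ
  let W := MvPolynomial (Fin c) R
  let e : P ≃+* W := (MvPolynomial.renameEquiv ℂ τ.symm).toRingEquiv.trans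
    (MvPolynomial.sumRingEquiv ℂ (Fin c) S)
  have heC : ∀ a, e (MvPolynomial.C a) = MvPolynomial.C (MvPolynomial.C a) := by
    intro a
    change MvPolynomial.sumRingEquiv ℂ (Fin c) S (MvPolynomial.rename τ.symm (MvPolynomial.C a)) = _
    rw [MvPolynomial.rename_C, MvPolynomial.sumRingEquiv_C]
  have heX : ∀ o, e (MvPolynomial.X (τ o)) = MvPolynomial.sumRingEquiv ℂ (Fin c) S (MvPolynomial.X o) := by
    intro o
    change MvPolynomial.sumRingEquiv ℂ (Fin c) S (MvPolynomial.rename τ.symm (MvPolynomial.X (τ o))) = _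
    rw [MvPolynomial.rename_X, Equiv.symm_apply_apply]
  have hel : ∀ i, e (MvPolynomial.X (τ (Sum.inl i))) = MvPolynomial.X i := by
    intro i; rw [heX, MvPolynomial.sumRingEquiv_X_inl]
  have her : ∀ s, e (MvPolynomial.X (τ (Sum.inr s))) = MvPolynomial.C (MvPolynomial.X s) := by
    intro i; rw [heX, MvPolynomial.sumRingEquiv_X_inr]
  let Q' : Fin k → W := fun j => e (Q j)
  have hI' : Ideal.span (Set.range Q') = I.comap (e.symm : W →+* P) := by
    have : I.comap (e.symm : W →+* P) = I.map (e : P →+* W) := by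
      exact (Ideal.map_comap_of_equiv e).symm
    rw [this, hI, Ideal.map_span, ← Set.range_comp]
    rfl
  have hrad : (Ideal.span (Set.range Q')).radical = I.radical.comap (e.symm : W →+* P) := by
    rw [hI', Ideal.comap_radical]
  -- the composite to the quotient
  let g : W →+* P ⧸ I.radical := (Ideal.Quotient.mk _).comp (e.symm : W →+* P)
  have hg : ∀ w, w ∈ (Ideal.span (Set.range Q')).radical ↔ g w = 0 := by
    intro w
    rw [hrad, Ideal.mem_comap]
    exact Ideal.Quotient.eq_zero_iff_mem.symm
  have hgC : ∀ a : R, g (MvPolynomial.C a) = MvPolynomial.aeval (fun s : S => x s) a := by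
    have : g.comp MvPolynomial.C = (MvPolynomial.aeval (R := ℂ) (fun s : S => x s)).toRingHom := by
      apply MvPolynomial.ringHom_ext
      · intro a
        simp only [g, RingHom.comp_apply, ← heC]
        simp
        rfl
      · intro s
        simp only [g, RingHom.comp_apply, ← her]
        simp [x, hτr]
    exact fun a => RingHom.congr_fun this a
  have hgX : ∀ i, g (MvPolynomial.X i) = x (τ (Sum.inl i)) := by
    intro i
    simp only [g, RingHom.comp_apply, ← hel]
    simp [x]
  have main := hB R c k r Q' ?_ ?_ ?_ ?_
  · intro y hy
    have hy2 : e y ∈ (Ideal.span (Set.range Q')).radical ^ B (k, r) := by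
      have h1 : I.radical.map (e : P →+* W) = (Ideal.span (Set.range Q')).radical := by
        rw [hrad]
        exact Ideal.map_comap_of_equiv e
      rw [← h1, ← Ideal.map_pow]
      exact Ideal.mem_map_of_mem (e : P →+* W) hy
    have := main hy2
    rw [hI', Ideal.mem_comap] at this
    simpa using this
  · intro j
    obtain ⟨d, hd, hh⟩ := hQ j
    refine (bp_totalDegree (e : P →+* W) ?_ ?_ (Q j)).trans (hh.totalDegree_le.trans hd)
    · intro a
      have := heC a
      simp [this]
    · intro i
      obtain ⟨o, rfl⟩ := τ.surjective i
      rcases o with o | o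
      · have := hel o
        simp [this]
      · have := her o
        simp [this]
  · rw [hI']; exact Ideal.IsPrimary.comap hprim _
  · intro a ha
    rw [hg, hgC] at ha
    exact (injective_iff_map_eq_zero _).mp (algebraicIndependent_iff_injective_aeval.mp hind) a ha
  · intro i
    obtain ⟨q, hq0, hq⟩ := halg _ (hτl i)
    have hE : ∀ a : R, ((hind.aevalEquiv a : Algebra.adjoin ℂ (x '' S)) : P ⧸ I.radical) =
      MvPolynomial.aeval (fun s : S => x s) a := fun a => rfl
    refine ⟨q.map (hind.aevalEquiv.symm : _ →+* R), ?_, ?_⟩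
    · rw [Ne, Polynomial.map_eq_zero_iff]
      · exact hq0
      · exact hind.aevalEquiv.symm.injective
    · rw [hg]
      have h2 : (g.comp (aeval (R := R) (MvPolynomial.X i : W)).toRingHom).comp
          (mapRingHom (hind.aevalEquiv.symm : _ →+* R)) =
          (aeval (R := Algebra.adjoin ℂ (x '' S)) (x (τ (Sum.inl i)))).toRingHom := by
        apply Polynomial.ringHom_ext
        · intro a
          have h3 := hE (hind.aevalEquiv.symm a)
          rw [AlgEquiv.apply_symm_apply, ← hgC] at h3
          simp
          exact h3.symm
        · simpa using hgX i
      exact (RingHom.congr_fun h2 q).trans hq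

theorem exists_bounded_power_of_radical_le_primary :
    ∃ B : ℕ × ℕ → ℕ, ∀ (n k r : ℕ)
      (Q : Fin k → MvPolynomial (Fin (n + 1)) ℂ),
      (∀ j, ∃ e ≤ r, (Q j).IsHomogeneous e) →
      (Ideal.span (Set.range Q)).IsPrimary →
      (Ideal.span (Set.range Q)).radical ^ B (k, r) ≤ Ideal.span (Set.range Q) :=
  bp_final
end
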